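/- Let Q be an affine quiver, k an algebraically closed field, and α a positive real root of Q. Then there is exactly one isomorphism class of indecomposable representations of Q over k with dimension vector α. -/

import Mathlib

open scoped BigOperators

/-- A finite quiver: finite sets of vertices and arrows with source and target maps. -/
structure FinQuiver where
  V : Type
  A : Type
  [fintypeV : Fintype V]
  [fintypeA : Fintype A]
  [decEqV : DecidableEq V]
  src : A → V
  tgt : A → V

attribute [instance] FinQuiver.fintypeV FinQuiver.fintypeA FinQuiver.decEqV

namespace FinQuiver

variable (Q : FinQuiver)

/-- The Euler form of a finite quiver. -/
def eulerForm (x y : Q.V → ℤ) : ℤ :=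
  (∑ i : Q.V, x i * y i) - ∑ a : Q.A, x (Q.src a) * y (Q.tgt a)

/-- The Tits form of a finite quiver. -/
def titsForm (x : Q.V → ℤ) : ℤ := Q.eulerForm x x

/-- The quiver has no loops. -/
def NoLoops : Prop := ∀ a : Q.A, Q.src a ≠ Q.tgt a

/-- The underlying (simple) graph of a quiver without loops. -/
def graph : SimpleGraph Q.V where
  Adj i j := i ≠ j ∧ ∃ a : Q.A, (Q.src a = i ∧ Q.tgt a = j) ∨ (Q.src a = j ∧ Q.tgt a = i)
  symm := by
    constructor
    rintro i j ⟨hij, a, h⟩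
    exact ⟨hij.symm, a, h.symm⟩
  loopless := by
    constructor
    rintro i ⟨hii, -⟩
    exact hii rfl

/-- The quiver has no oriented cycles. -/
def Acyclic : Prop :=
  ¬ ∃ (n : ℕ) (g : Fin (n + 1) → Q.A), ∀ k, Q.tgt (g k) = Q.src (g (k + 1))

/-- The double quiver: for each arrow `a : i → j` add a reverse arrow `a* : j → i`. -/
def double : FinQuiver where
  V := Q.V
  A := Q.A ⊕ Q.A
  src := Sum.elim Q.src Q.tgt
  tgt := Sum.elim Q.tgt Q.src

/-- Positive roots: nonzero, nonnegative integer vectors with Tits form at most 1. -/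
def PosRoot (x : Q.V → ℤ) : Prop := (∀ i, 0 ≤ x i) ∧ x ≠ 0 ∧ Q.titsForm x ≤ 1

end FinQuiver

/-- An affine quiver: connected, no loops, no oriented cycles, Tits form positive
semidefinite but not positive definite; `δ` is the minimal positive imaginary root,
generating the radical of the symmetrized Euler form. -/
structure AffineQuiver extends FinQuiver where
  noLoops : toFinQuiver.NoLoops
  connected : toFinQuiver.graph.Connected
  acyclic : toFinQuiver.Acyclic
  posSemidef : ∀ x : V → ℤ, 0 ≤ toFinQuiver.titsForm x
  notPosDef : ∃ x : V → ℤ, x ≠ 0 ∧ toFinQuiver.titsForm x = 0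
  δ : V → ℤ
  delta_pos : ∀ i, 0 < δ i
  radical_iff : ∀ x : V → ℤ,
    (∀ y : V → ℤ, toFinQuiver.eulerForm x y + toFinQuiver.eulerForm y x = 0) ↔
      ∃ m : ℤ, x = m • δ

/-- The defect `∂(x) = e(δ, x)`. -/
def AffineQuiver.defect (Q : AffineQuiver) (x : Q.V → ℤ) : ℤ :=
  Q.eulerForm Q.δ x


section MatrixRep

variable (Q : FinQuiver) (k : Type) [Field k]

/-- The space of representations of `Q` on the fixed vector spaces `k^{d i}`,
in matrix form. -/
def MRep (d : Q.V → ℕ) : Type :=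
  ∀ a : Q.A, Matrix (Fin (d (Q.tgt a))) (Fin (d (Q.src a))) k

variable {Q k}

/-- A family of subspaces is a subrepresentation of `x` if it is stable under all the
arrow maps of `x`. -/
def MSub {d : Q.V → ℕ} (x : MRep Q k d) (U : ∀ i, Submodule k (Fin (d i) → k)) : Prop :=
  ∀ a : Q.A, ∀ v ∈ U (Q.src a), (x a).mulVec v ∈ U (Q.tgt a)

/-- A representation is indecomposable if it is nonzero and is not the internal direct
sum of two nonzero subrepresentations. -/
def MIndec {d : Q.V → ℕ} (x : MRep Q k d) : Prop :=
  (∃ i, 0 < d i) ∧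
    ∀ U W : ∀ i, Submodule k (Fin (d i) → k), MSub x U → MSub x W →
      (∀ i, IsCompl (U i) (W i)) →
        (∀ i, U i = ⊥) ∨ (∀ i, W i = ⊥)

/-- Isomorphism of representations: simultaneous conjugation by a family of invertible
matrices. -/
def MIso {d : Q.V → ℕ} (x y : MRep Q k d) : Prop :=
  ∃ g : ∀ i, GL (Fin (d i)) k,
    ∀ a : Q.A, y a = ((g (Q.tgt a) : Matrix (Fin (d (Q.tgt a))) (Fin (d (Q.tgt a))) k) * x a) *
      (((g (Q.src a))⁻¹ : GL (Fin (d (Q.src a))) k) : Matrix (Fin (d (Q.src a))) (Fin (d (Q.src a))) k)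

/-- Extension of scalars along a field extension: apply the field embedding to all
matrix entries. -/
def mapRep {d : Q.V → ℕ} (K : Type) [Field K] [Algebra k K] (x : MRep Q k d) :
    MRep Q K d :=
  fun a => (x a).map (algebraMap k K)

/-- A representation over `k` is absolutely indecomposable if it remains indecomposable
after extension of scalars to an algebraic closure of `k`. -/
def MAbsIndec {d : Q.V → ℕ} (x : MRep Q k d) : Prop :=
  MIndec x ∧ MIndec (mapRep (AlgebraicClosure k) x)

end MatrixRep

/-!
Write `e` for the Euler form and `δ` for the generator of its radical. For representations `X`, `Y`
of dimension vectors `α`, `β`, the spaces `Hom(X, Y)` and `Ext¹(X, Y)` are the kernel and cokernel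
of one linear map, so `dim Hom - dim Ext¹ = e(α, β)`. A representation whose endomorphism ring
has the least dimension possible for its dimension vector has no extensions between complementary
summands, which produces an indecomposable representation of each real root that does not dominate
`δ` or has nonzero defect `e(δ, ·)`.

A brick whose dimension vector is a real root has no self-extensions, and two such bricks of the
same dimension vector are isomorphic: deform one into the other along a pencil and use that the
dimension of `Hom` is semicontinuous. An indecomposable that is not a brick contains a brick with
self-extensions, whose dimension vector is then a multiple of `δ`. A torsion pair defined by the
defect splits, so an indecomposable of negative defect has no subrepresentation of defect zero and
is a brick. Positive defect reduces to negative defect by duality. An indecomposable of defect zero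
is semistable, and the semistable representations form an abelian category in which each stable
object `E` has a translate `τ E` with `Ext¹(X, τ E)` dual to `Hom(E, X)`; hence the indecomposables
are uniserial, with composition factors `E, τ E, τ² E, …`, and are determined by their top and their
length. The Euler form recovers both from a real root, and lengthening by one turn around the
`τ`-orbit adds `δ`, which gives the remaining existence statement.
-/

/-- A finite-dimensional representation of `Q` over `k`. -/
structure QuiverRep (Q : FinQuiver) (k : Type) [Field k] where
  space : Q.V → Type
  [addCommGroup : ∀ i, AddCommGroup (space i)]
  [module : ∀ i, Module k (space i)]
  [finiteDimensional : ∀ i, FiniteDimensional k (space i)]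
  map : ∀ a : Q.A, space (Q.src a) →ₗ[k] space (Q.tgt a)

attribute [instance] QuiverRep.addCommGroup QuiverRep.module QuiverRep.finiteDimensional

namespace QuiverRep

variable {Q : FinQuiver} {k : Type} [Field k]

/-! ### The two-term complex computing `Hom` and `Ext¹` -/

/-- Families of linear maps indexed by the vertices, not required to commute with the arrows:
the degree-zero term of the complex computing `Hom` and `Ext¹`. -/
abbrev VertexMap (X Y : QuiverRep Q k) : Type := ∀ i, X.space i →ₗ[k] Y.space i

/-- Families of linear maps indexed by the arrows: the degree-one term of the complex computing
`Hom` and `Ext¹`. -/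
abbrev ArrowMap (X Y : QuiverRep Q k) : Type :=
  ∀ a, X.space (Q.src a) →ₗ[k] Y.space (Q.tgt a)

section Complex

variable {W X Y Z : QuiverRep Q k}

/-- Vertexwise composition. -/
def comp (g : VertexMap Y Z) (f : VertexMap X Y) : VertexMap X Z := fun i => g i ∘ₗ f i

/-- Postcomposition of an arrow family with a vertex family. -/
def postcomp (g : VertexMap Y Z) (z : ArrowMap X Y) : ArrowMap X Z :=
  fun a => g (Q.tgt a) ∘ₗ z a

/-- Precomposition of an arrow family with a vertex family. -/
def precomp (z : ArrowMap Y Z) (f : VertexMap X Y) : ArrowMap X Z :=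
  fun a => z a ∘ₗ f (Q.src a)

scoped infixr:80 " ⊚ " => comp
scoped infixr:80 " ◁ " => postcomp
scoped infixl:80 " ▷ " => precomp

/-- The vertexwise identity. -/
def idMap (X : QuiverRep Q k) : VertexMap X X := fun _ => LinearMap.id

lemma congr_apply {f g : VertexMap X Y} (h : f = g) (i) (v) : f i v = g i v :=
  LinearMap.congr_fun (congrFun h i) v

@[simp] lemma comp_apply (g : VertexMap Y Z) (f : VertexMap X Y) (i) (v) :
    (g ⊚ f) i v = g i (f i v) := rfl
@[simp] lemma idMap_apply (i) (v : X.space i) : idMap X i v = v := rfl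
@[simp] lemma postcomp_apply (g : VertexMap Y Z) (z : ArrowMap X Y) (a) (v) :
    (g ◁ z) a v = g _ (z a v) := rfl
@[simp] lemma precomp_apply (z : ArrowMap Y Z) (f : VertexMap X Y) (a) (v) :
    (z ▷ f) a v = z a (f _ v) := rfl

lemma comp_assoc (h : VertexMap Y Z) (g : VertexMap X Y) (f : VertexMap W X) :
    (h ⊚ g) ⊚ f = h ⊚ g ⊚ f := rfl
@[simp] lemma idMap_comp (f : VertexMap X Y) : idMap Y ⊚ f = f := rfl
@[simp] lemma comp_idMap (f : VertexMap X Y) : f ⊚ idMap X = f := rfl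
@[simp] lemma comp_zero (f : VertexMap Y Z) : f ⊚ (0 : VertexMap X Y) = 0 := by ext; simp
@[simp] lemma zero_comp (f : VertexMap X Y) : (0 : VertexMap Y Z) ⊚ f = 0 := by ext; simp
lemma comp_add (f : VertexMap Y Z) (g h : VertexMap X Y) : f ⊚ (g + h) = f ⊚ g + f ⊚ h := by
  ext; simp
lemma add_comp (f g : VertexMap Y Z) (h : VertexMap X Y) : (f + g) ⊚ h = f ⊚ h + g ⊚ h := by
  ext; simp
lemma comp_sub (f : VertexMap Y Z) (g h : VertexMap X Y) : f ⊚ (g - h) = f ⊚ g - f ⊚ h := by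
  ext; simp
lemma sub_comp (f g : VertexMap Y Z) (h : VertexMap X Y) : (f - g) ⊚ h = f ⊚ h - g ⊚ h := by
  ext; simp
lemma comp_smul (c : k) (f : VertexMap Y Z) (g : VertexMap X Y) : f ⊚ (c • g) = c • (f ⊚ g) := by
  ext; simp
lemma smul_comp (c : k) (f : VertexMap Y Z) (g : VertexMap X Y) : (c • f) ⊚ g = c • (f ⊚ g) := by
  ext; simp

lemma postcomp_postcomp (h : VertexMap Y Z) (g : VertexMap X Y) (z : ArrowMap W X) :
    h ◁ (g ◁ z) = (h ⊚ g) ◁ z := rfl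
lemma precomp_precomp (z : ArrowMap Y Z) (g : VertexMap X Y) (f : VertexMap W X) :
    (z ▷ g) ▷ f = z ▷ (g ⊚ f) := rfl
lemma postcomp_precomp (h : VertexMap Y Z) (z : ArrowMap X Y) (f : VertexMap W X) :
    h ◁ (z ▷ f) = (h ◁ z) ▷ f := rfl
@[simp] lemma idMap_postcomp (z : ArrowMap X Y) : idMap Y ◁ z = z := rfl
@[simp] lemma precomp_idMap (z : ArrowMap X Y) : z ▷ idMap X = z := rfl
@[simp] lemma postcomp_zero (f : VertexMap Y Z) : f ◁ (0 : ArrowMap X Y) = 0 := by ext; simp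
@[simp] lemma zero_postcomp (z : ArrowMap X Y) : (0 : VertexMap Y Z) ◁ z = 0 := by ext; simp
@[simp] lemma precomp_zero (z : ArrowMap Y Z) : z ▷ (0 : VertexMap X Y) = 0 := by ext; simp
@[simp] lemma zero_precomp (f : VertexMap X Y) : (0 : ArrowMap Y Z) ▷ f = 0 := by ext; simp
lemma postcomp_add (f : VertexMap Y Z) (w z : ArrowMap X Y) : f ◁ (w + z) = f ◁ w + f ◁ z := by
  ext; simp
lemma add_postcomp (f g : VertexMap Y Z) (z : ArrowMap X Y) : (f + g) ◁ z = f ◁ z + g ◁ z := by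
  ext; simp
lemma sub_postcomp (f g : VertexMap Y Z) (z : ArrowMap X Y) : (f - g) ◁ z = f ◁ z - g ◁ z := by
  ext; simp
lemma postcomp_smul (c : k) (f : VertexMap Y Z) (z : ArrowMap X Y) :
    f ◁ (c • z) = c • (f ◁ z) := by
  ext; simp
lemma smul_postcomp (c : k) (f : VertexMap Y Z) (z : ArrowMap X Y) :
    (c • f) ◁ z = c • (f ◁ z) := by
  ext; simp
lemma postcomp_neg (f : VertexMap Y Z) (z : ArrowMap X Y) : f ◁ (-z) = -(f ◁ z) := by
  ext; simp
lemma precomp_add (z : ArrowMap Y Z) (f g : VertexMap X Y) : z ▷ (f + g) = z ▷ f + z ▷ g := by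
  ext; simp
lemma add_precomp (w z : ArrowMap Y Z) (f : VertexMap X Y) : (w + z) ▷ f = w ▷ f + z ▷ f := by
  ext; simp
lemma precomp_sub (z : ArrowMap Y Z) (f g : VertexMap X Y) : z ▷ (f - g) = z ▷ f - z ▷ g := by
  ext; simp
lemma sub_precomp (w z : ArrowMap Y Z) (f : VertexMap X Y) : (w - z) ▷ f = w ▷ f - z ▷ f := by
  ext; simp
lemma precomp_smul (c : k) (z : ArrowMap Y Z) (f : VertexMap X Y) :
    z ▷ (c • f) = c • (z ▷ f) := by
  ext; simp
lemma smul_precomp (c : k) (z : ArrowMap Y Z) (f : VertexMap X Y) :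
    (c • z) ▷ f = c • (z ▷ f) := by
  ext; simp
lemma neg_precomp (z : ArrowMap Y Z) (f : VertexMap X Y) : (-z) ▷ f = -(z ▷ f) := by
  ext; simp

/-- `g ⊚ ·` as a linear map. -/
def compLeft (g : VertexMap Y Z) : VertexMap X Y →ₗ[k] VertexMap X Z where
  toFun f := g ⊚ f
  map_add' := comp_add g
  map_smul' c f := comp_smul c g f

/-- `· ⊚ f` as a linear map. -/
def compRight (f : VertexMap X Y) : VertexMap Y Z →ₗ[k] VertexMap X Z where
  toFun g := g ⊚ f
  map_add' g h := add_comp g h f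
  map_smul' c g := smul_comp c g f
@[simp] lemma compRight_apply (f : VertexMap X Y) (g : VertexMap Y Z) :
    compRight f g = g ⊚ f := rfl

/-- `g ◁ ·` as a linear map. -/
def postcompLinear (g : VertexMap Y Z) : ArrowMap X Y →ₗ[k] ArrowMap X Z where
  toFun z := g ◁ z
  map_add' := postcomp_add g
  map_smul' c z := postcomp_smul c g z
@[simp] lemma postcompLinear_apply (g : VertexMap Y Z) (z : ArrowMap X Y) :
    postcompLinear g z = g ◁ z := rfl

/-- `· ▷ f` as a linear map. -/
def precompLinear (f : VertexMap X Y) : ArrowMap Y Z →ₗ[k] ArrowMap X Z where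
  toFun z := z ▷ f
  map_add' w z := add_precomp w z f
  map_smul' c z := smul_precomp c z f
@[simp] lemma precompLinear_apply (f : VertexMap X Y) (z : ArrowMap Y Z) :
    precompLinear f z = z ▷ f := rfl

/-- The differential of the two-term complex; its kernel is `Hom` and its cokernel is `Ext¹`. -/
def diff (X Y : QuiverRep Q k) : VertexMap X Y →ₗ[k] ArrowMap X Y where
  toFun f a := Y.map a ∘ₗ f (Q.src a) - f (Q.tgt a) ∘ₗ X.map a
  map_add' f g := by ext a v; simp [add_sub_add_comm]
  map_smul' c f := by ext a v; simp [smul_sub]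

lemma diff_apply (f : VertexMap X Y) (a) (v) :
    diff X Y f a v = Y.map a (f _ v) - f _ (X.map a v) := rfl

lemma diff_comp (g : VertexMap Y Z) (f : VertexMap X Y) :
    diff X Z (g ⊚ f) = diff Y Z g ▷ f + g ◁ diff X Y f := by
  ext a v
  simp [diff_apply]

/-- A vertex family is a homomorphism of representations if it commutes with the arrow maps. -/
def IsHom (f : VertexMap X Y) : Prop := diff X Y f = 0

lemma isHom_iff {f : VertexMap X Y} :
    IsHom f ↔ ∀ a v, Y.map a (f _ v) = f _ (X.map a v) := by
  simp only [IsHom, funext_iff, LinearMap.ext_iff, diff_apply, Pi.zero_apply, LinearMap.zero_apply,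
    sub_eq_zero]

lemma IsHom.diff_postcomp {g : VertexMap Y Z} (hg : IsHom g) (f : VertexMap X Y) :
    diff X Z (g ⊚ f) = g ◁ diff X Y f := by
  rw [diff_comp, hg, zero_precomp, zero_add]
lemma IsHom.diff_precomp {f : VertexMap X Y} (hf : IsHom f) (g : VertexMap Y Z) :
    diff X Z (g ⊚ f) = diff Y Z g ▷ f := by
  rw [diff_comp, hf, postcomp_zero, add_zero]
lemma IsHom.comp {g : VertexMap Y Z} (hg : IsHom g) {f : VertexMap X Y} (hf : IsHom f) :
    IsHom (g ⊚ f) := by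
  rw [IsHom, hg.diff_postcomp, hf, postcomp_zero]
lemma isHom_idMap (X : QuiverRep Q k) : IsHom (idMap X) := isHom_iff.mpr fun _ _ => rfl
lemma isHom_zero : IsHom (0 : VertexMap X Y) := map_zero _
lemma IsHom.add {f g : VertexMap X Y} (hf : IsHom f) (hg : IsHom g) : IsHom (f + g) :=
  (LinearMap.ker (diff X Y)).add_mem hf hg
lemma IsHom.sub {f g : VertexMap X Y} (hf : IsHom f) (hg : IsHom g) : IsHom (f - g) :=
  (LinearMap.ker (diff X Y)).sub_mem hf hg
lemma IsHom.smul {f : VertexMap X Y} (hf : IsHom f) (c : k) : IsHom (c • f) :=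
  (LinearMap.ker (diff X Y)).smul_mem c hf

/-- Vertexwise injectivity. -/
def Injective (f : VertexMap X Y) : Prop := ∀ i, Function.Injective (f i)

/-- Vertexwise surjectivity. -/
def Surjective (f : VertexMap X Y) : Prop := ∀ i, Function.Surjective (f i)

lemma injective_idMap (X : QuiverRep Q k) : Injective (idMap X) := fun _ => Function.injective_id
lemma surjective_idMap (X : QuiverRep Q k) : Surjective (idMap X) := fun _ =>
  Function.surjective_id
lemma Injective.comp {g : VertexMap Y Z} {f : VertexMap X Y} (hg : Injective g)
    (hf : Injective f) : Injective (g ⊚ f) :=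
  fun i => (hg i).comp (hf i)
lemma Surjective.comp {g : VertexMap Y Z} {f : VertexMap X Y} (hg : Surjective g)
    (hf : Surjective f) : Surjective (g ⊚ f) :=
  fun i => (hg i).comp (hf i)
lemma Injective.of_comp {g : VertexMap Y Z} {f : VertexMap X Y} (h : Injective (g ⊚ f)) :
    Injective f :=
  fun i => Function.Injective.of_comp (f := g i) (h i)
lemma Surjective.of_comp {g : VertexMap Y Z} {f : VertexMap X Y} (h : Surjective (g ⊚ f)) :
    Surjective g :=
  fun i => Function.Surjective.of_comp (g := f i) (h i)
lemma Injective.of_comp_eq_id {g : VertexMap Y X} {f : VertexMap X Y} (h : g ⊚ f = idMap X) :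
    Injective f :=
  Injective.of_comp (h ▸ injective_idMap X)
lemma Surjective.of_comp_eq_id {g : VertexMap Y X} {f : VertexMap X Y} (h : g ⊚ f = idMap X) :
    Surjective g :=
  Surjective.of_comp (h ▸ surjective_idMap X)
lemma Injective.exists_retraction {f : VertexMap X Y} (h : Injective f) :
    ∃ g : VertexMap Y X, g ⊚ f = idMap X := by
  choose g hg using fun i =>
    (f i).exists_leftInverse_of_injective (LinearMap.ker_eq_bot.mpr (h i))
  exact ⟨g, funext hg⟩
lemma Surjective.exists_section {f : VertexMap X Y} (h : Surjective f) :
    ∃ g : VertexMap Y X, f ⊚ g = idMap Y := by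
  choose g hg using fun i =>
    (f i).exists_rightInverse_of_surjective (LinearMap.range_eq_top.mpr (h i))
  exact ⟨g, funext hg⟩
lemma Injective.cancel {g : VertexMap Y Z} (hg : Injective g) {f f' : VertexMap X Y}
    (h : g ⊚ f = g ⊚ f') : f = f' := by
  obtain ⟨r, hr⟩ := hg.exists_retraction
  rw [← idMap_comp f, ← idMap_comp f', ← hr, comp_assoc, h, comp_assoc]
lemma Injective.eq_zero_of_comp {g : VertexMap Y Z} (hg : Injective g) {f : VertexMap X Y}
    (h : g ⊚ f = 0) : f = 0 :=
  hg.cancel (h.trans (comp_zero g).symm)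
lemma Surjective.cancel {f : VertexMap X Y} (hf : Surjective f) {g g' : VertexMap Y Z}
    (h : g ⊚ f = g' ⊚ f) : g = g' := by
  obtain ⟨s, hs⟩ := hf.exists_section
  rw [← comp_idMap g, ← comp_idMap g', ← hs, ← comp_assoc, h, comp_assoc]
lemma Surjective.eq_zero_of_comp {f : VertexMap X Y} (hf : Surjective f) {g : VertexMap Y Z}
    (h : g ⊚ f = 0) : g = 0 :=
  hf.cancel (h.trans (zero_comp f).symm)
lemma Injective.eq_zero_of_postcomp {g : VertexMap Y Z} (hg : Injective g) {z : ArrowMap X Y}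
    (h : g ◁ z = 0) : z = 0 := by
  obtain ⟨r, hr⟩ := hg.exists_retraction
  rw [← idMap_postcomp z, ← hr, ← postcomp_postcomp, h, postcomp_zero]
lemma Surjective.eq_zero_of_precomp {f : VertexMap X Y} (hf : Surjective f) {z : ArrowMap Y Z}
    (h : z ▷ f = 0) : z = 0 := by
  obtain ⟨s, hs⟩ := hf.exists_section
  rw [← precomp_idMap z, ← hs, ← precomp_precomp, h, zero_precomp]

lemma IsHom.of_comp_injective {g : VertexMap Y Z} (hg : IsHom g) (hi : Injective g)
    {f : VertexMap X Y} (h : IsHom (g ⊚ f)) : IsHom f :=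
  hi.eq_zero_of_postcomp (hg.diff_postcomp f ▸ h)
lemma IsHom.of_comp_surjective {f : VertexMap X Y} (hf : IsHom f) (hs : Surjective f)
    {g : VertexMap Y Z} (h : IsHom (g ⊚ f)) : IsHom g :=
  hs.eq_zero_of_precomp (hf.diff_precomp g ▸ h)

/-- Two representations are isomorphic if there are mutually inverse homomorphisms. -/
def Isomorphic (X Y : QuiverRep Q k) : Prop :=
  ∃ (f : VertexMap X Y) (g : VertexMap Y X),
    IsHom f ∧ IsHom g ∧ g ⊚ f = idMap X ∧ f ⊚ g = idMap Y

lemma Isomorphic.refl (X : QuiverRep Q k) : Isomorphic X X :=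
  ⟨idMap X, idMap X, isHom_idMap X, isHom_idMap X, rfl, rfl⟩
lemma Isomorphic.symm (h : Isomorphic X Y) : Isomorphic Y X := by
  obtain ⟨f, g, hf, hg, hgf, hfg⟩ := h
  exact ⟨g, f, hg, hf, hfg, hgf⟩
lemma Isomorphic.trans (h : Isomorphic X Y) (h' : Isomorphic Y Z) : Isomorphic X Z := by
  obtain ⟨f, g, hf, hg, hgf, hfg⟩ := h
  obtain ⟨f', g', hf', hg', hgf', hfg'⟩ := h'
  refine ⟨f' ⊚ f, g ⊚ g', hf'.comp hf, hg.comp hg', ?_, ?_⟩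
  · rw [comp_assoc, ← comp_assoc g', hgf', idMap_comp, hgf]
  · rw [comp_assoc, ← comp_assoc f, hfg, idMap_comp, hfg']

lemma IsHom.exists_inverse {f : VertexMap X Y} (hf : IsHom f) (hi : Injective f)
    (hs : Surjective f) : ∃ g : VertexMap Y X, IsHom g ∧ g ⊚ f = idMap X ∧ f ⊚ g = idMap Y := by
  obtain ⟨g, hg⟩ := hs.exists_section
  refine ⟨g, hf.of_comp_injective hi (hg ▸ isHom_idMap Y), hi.cancel ?_, hg⟩
  rw [← comp_assoc, hg, idMap_comp, comp_idMap]

lemma Isomorphic.of_bijective {f : VertexMap X Y} (hf : IsHom f) (hi : Injective f)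
    (hs : Surjective f) : Isomorphic X Y := by
  obtain ⟨g, hg, hgf, hfg⟩ := hf.exists_inverse hi hs
  exact ⟨f, g, hf, hg, hgf, hfg⟩

end Complex

/-! ### Dimension vectors and the Euler form -/

section Dimension

variable {X Y Z : QuiverRep Q k}

/-- The dimension vector, with integer entries so that the Euler form applies to it. -/
noncomputable def dimVec (X : QuiverRep Q k) : Q.V → ℤ := fun i => Module.finrank k (X.space i)

/-- The total dimension. -/
noncomputable def totalDim (X : QuiverRep Q k) : ℕ := ∑ i, Module.finrank k (X.space i)

lemma dimVec_nonneg (X : QuiverRep Q k) (i) : 0 ≤ dimVec X i := Int.natCast_nonneg _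

lemma totalDim_eq_sum (X : QuiverRep Q k) : (totalDim X : ℤ) = ∑ i, dimVec X i := by
  simp [totalDim, dimVec]

lemma totalDim_congr (h : dimVec X = dimVec Y) : totalDim X = totalDim Y := by
  zify
  rw [totalDim_eq_sum, totalDim_eq_sum, h]

lemma Injective.dimVec_le {f : VertexMap X Y} (h : Injective f) (i) : dimVec X i ≤ dimVec Y i :=
  Int.ofNat_le.mpr (LinearMap.finrank_le_finrank_of_injective (h i))

lemma Isomorphic.dimVec_eq (h : Isomorphic X Y) : dimVec X = dimVec Y := by
  obtain ⟨f, g, -, -, hgf, hfg⟩ := h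
  exact funext fun i => le_antisymm ((Injective.of_comp_eq_id hgf).dimVec_le i)
    ((Injective.of_comp_eq_id hfg).dimVec_le i)

lemma Injective.totalDim_le {f : VertexMap X Y} (h : Injective f) : totalDim X ≤ totalDim Y :=
  Finset.sum_le_sum fun i _ => LinearMap.finrank_le_finrank_of_injective (h i)
lemma Surjective.totalDim_le {f : VertexMap X Y} (h : Surjective f) : totalDim Y ≤ totalDim X :=
  Finset.sum_le_sum fun i _ => LinearMap.finrank_le_finrank_of_surjective (h i)

lemma Injective.surjective_of_totalDim_le {f : VertexMap X Y} (h : Injective f)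
    (hd : totalDim Y ≤ totalDim X) : Surjective f := fun i =>
  have hrank := (Finset.sum_eq_sum_iff_of_le fun i _ =>
    LinearMap.finrank_le_finrank_of_injective (h i)).mp (h.totalDim_le.antisymm hd) i
      (Finset.mem_univ i)
  (LinearMap.injective_iff_surjective_of_finrank_eq_finrank hrank).mp (h i)
lemma Surjective.injective_of_totalDim_le {f : VertexMap X Y} (h : Surjective f)
    (hd : totalDim X ≤ totalDim Y) : Injective f := fun i =>
  have hrank := (Finset.sum_eq_sum_iff_of_le fun i _ =>
    LinearMap.finrank_le_finrank_of_surjective (h i)).mp (h.totalDim_le.antisymm hd) i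
      (Finset.mem_univ i)
  (LinearMap.injective_iff_surjective_of_finrank_eq_finrank hrank.symm).mpr (h i)

lemma totalDim_eq_zero_iff_dimVec : totalDim X = 0 ↔ dimVec X = 0 := by
  simp [totalDim, dimVec, funext_iff]

lemma totalDim_eq_zero_iff : totalDim X = 0 ↔ idMap X = 0 := by
  simp only [totalDim, Finset.sum_eq_zero_iff, Finset.mem_univ, forall_const,
    Module.finrank_zero_iff, funext_iff (f := idMap X), LinearMap.ext_iff]
  exact forall_congr' fun _ => subsingleton_iff_forall_eq 0

lemma totalDim_pos_iff : 0 < totalDim X ↔ idMap X ≠ 0 := by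
  rw [Nat.pos_iff_ne_zero, Ne, totalDim_eq_zero_iff]
lemma dimVec_eq_zero_iff : dimVec X = 0 ↔ idMap X = 0 := by
  rw [← totalDim_eq_zero_iff_dimVec, totalDim_eq_zero_iff]
lemma eq_zero_of_idMap_source (h : idMap X = 0) (f : VertexMap X Y) : f = 0 := by
  rw [← comp_idMap f, h, comp_zero]
lemma eq_zero_of_idMap_target (h : idMap Y = 0) (f : VertexMap X Y) : f = 0 := by
  rw [← idMap_comp f, h, zero_comp]
lemma Injective.ne_zero {f : VertexMap X Y} (h : Injective f) (h0 : idMap X ≠ 0) : f ≠ 0 := by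
  rintro rfl
  exact h0 (h.eq_zero_of_comp (zero_comp _))
lemma Surjective.ne_zero {f : VertexMap X Y} (h : Surjective f) (h0 : idMap Y ≠ 0) : f ≠ 0 := by
  rintro rfl
  exact h0 (h.eq_zero_of_comp (comp_zero _))
lemma left_ne_zero_of_comp {g : VertexMap Y Z} {f : VertexMap X Y} (h : g ⊚ f ≠ 0) : g ≠ 0 := by
  rintro rfl
  exact h (zero_comp f)
lemma right_ne_zero_of_comp {g : VertexMap Y Z} {f : VertexMap X Y} (h : g ⊚ f ≠ 0) : f ≠ 0 := by
  rintro rfl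
  exact h (comp_zero g)

/-- The dimension of `Hom(X, Y)`. -/
noncomputable def homDim (X Y : QuiverRep Q k) : ℕ :=
  Module.finrank k (LinearMap.ker (diff X Y))

/-- The dimension of `Ext¹(X, Y)`. -/
noncomputable def extDim (X Y : QuiverRep Q k) : ℕ :=
  Module.finrank k (ArrowMap X Y ⧸ LinearMap.range (diff X Y))

lemma homDim_sub_extDim (X Y : QuiverRep Q k) :
    (homDim X Y : ℤ) - extDim X Y = Q.eulerForm (dimVec X) (dimVec Y) := by
  have hrank := LinearMap.finrank_range_add_finrank_ker (diff X Y)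
  have hquot := Submodule.finrank_quotient_add_finrank (LinearMap.range (diff X Y))
  have hvertex : Module.finrank k (VertexMap X Y)
      = ∑ i, Module.finrank k (X.space i) * Module.finrank k (Y.space i) := by
    simp only [Module.finrank_pi_fintype, Module.finrank_linearMap]
  have harrow : Module.finrank k (ArrowMap X Y) = ∑ a,
      Module.finrank k (X.space (Q.src a)) * Module.finrank k (Y.space (Q.tgt a)) := by
    simp only [Module.finrank_pi_fintype, Module.finrank_linearMap]
  unfold FinQuiver.eulerForm homDim extDim dimVec
  zify at hrank hquot hvertex harrow
  rw [← hvertex, ← harrow]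
  linarith

lemma homDim_eq_zero_iff : homDim X Y = 0 ↔ ∀ f : VertexMap X Y, IsHom f → f = 0 := by
  rw [homDim, Submodule.finrank_eq_zero, LinearMap.ker_eq_bot']
  rfl
lemma homDim_pos {f : VertexMap X Y} (hf : IsHom f) (h : f ≠ 0) : 0 < homDim X Y :=
  Nat.pos_of_ne_zero fun h' => h (homDim_eq_zero_iff.mp h' f hf)
lemma exists_hom_ne_zero (h : homDim X Y ≠ 0) : ∃ f : VertexMap X Y, IsHom f ∧ f ≠ 0 := by
  simpa [homDim_eq_zero_iff] using h

/-- The class in `Ext¹(X, Y)` of an arrow family is nonzero. -/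
def NonSplit (z : ArrowMap X Y) : Prop := ∀ f, diff X Y f ≠ z

lemma extDim_eq_zero_iff : extDim X Y = 0 ↔ ∀ z : ArrowMap X Y, ∃ f, diff X Y f = z := by
  rw [extDim, Module.finrank_zero_iff, Submodule.Quotient.subsingleton_iff,
    LinearMap.range_eq_top]
  rfl
lemma exists_nonSplit (h : extDim X Y ≠ 0) : ∃ z : ArrowMap X Y, NonSplit z := by
  simpa [extDim_eq_zero_iff, NonSplit] using h
lemma NonSplit.extDim_ne_zero {z : ArrowMap X Y} (h : NonSplit z) : extDim X Y ≠ 0 := fun h0 =>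
  (extDim_eq_zero_iff.mp h0 z).elim h
lemma NonSplit.exists_eq_smul_add {z : ArrowMap X Y} (h : NonSplit z) (h1 : extDim X Y = 1)
    (w : ArrowMap X Y) : ∃ (c : k) (f : VertexMap X Y), w = c • z + diff X Y f := by
  have hz : (LinearMap.range (diff X Y)).mkQ z ≠ 0 := fun hz =>
    ((Submodule.Quotient.mk_eq_zero _).mp hz).elim h
  obtain ⟨c, hc⟩ := (finrank_eq_one_iff_of_nonzero' _ hz).mp h1
    ((LinearMap.range (diff X Y)).mkQ w)
  rw [← map_smul, eq_comm] at hc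
  obtain ⟨f, hf⟩ := (Submodule.Quotient.eq _).mp hc
  exact ⟨c, f, by rw [hf, add_sub_cancel]⟩

lemma homDim_le_of_linearMap {X' Y' : QuiverRep Q k} (F : VertexMap X Y →ₗ[k] VertexMap X' Y')
    (hF : ∀ f, IsHom f → IsHom (F f)) (hinj : ∀ f, IsHom f → F f = 0 → f = 0) :
    homDim X Y ≤ homDim X' Y' := by
  refine LinearMap.finrank_le_finrank_of_injective
    (f := F.restrict (p := LinearMap.ker (diff X Y)) (q := LinearMap.ker (diff X' Y')) hF) ?_
  rw [← LinearMap.ker_eq_bot, LinearMap.ker_eq_bot']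
  exact fun f h0 => Subtype.ext (hinj f f.2 (congrArg Subtype.val h0))

lemma extDim_le_of_linearMap {X' Y' : QuiverRep Q k} (F : ArrowMap X Y →ₗ[k] ArrowMap X' Y')
    (hF : ∀ f, ∃ g, diff X' Y' g = F (diff X Y f)) (hsurj : Function.Surjective F) :
    extDim X' Y' ≤ extDim X Y := by
  have hmap : LinearMap.range (diff X Y) ≤ (LinearMap.range (diff X' Y')).comap F := by
    rintro _ ⟨f, rfl⟩
    exact hF f
  refine LinearMap.finrank_le_finrank_of_surjective (f := Submodule.mapQ _ _ F hmap) ?_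
  rw [← LinearMap.range_eq_top, Submodule.range_mapQ, LinearMap.range_eq_top.mpr hsurj,
    Submodule.map_top, Submodule.range_mkQ]

lemma homDim_le_of_injective {g : VertexMap Y Z} (hg : IsHom g) (hi : Injective g) :
    homDim X Y ≤ homDim X Z :=
  homDim_le_of_linearMap (compLeft g) (fun _ hf => hg.comp hf) fun _ _ h => hi.eq_zero_of_comp h
lemma homDim_le_of_surjective {g : VertexMap X Y} (hg : IsHom g) (hs : Surjective g) :
    homDim Y Z ≤ homDim X Z :=
  homDim_le_of_linearMap (compRight g) (fun _ hf => IsHom.comp hf hg)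
    fun _ _ h => hs.eq_zero_of_comp h
lemma extDim_le_of_surjective {g : VertexMap Y Z} (hg : IsHom g) (hs : Surjective g) :
    extDim X Z ≤ extDim X Y := by
  obtain ⟨s, hs⟩ := hs.exists_section
  refine extDim_le_of_linearMap (postcompLinear g) (fun f => ⟨g ⊚ f, hg.diff_postcomp f⟩)
    fun z => ⟨s ◁ z, ?_⟩
  rw [postcompLinear_apply, postcomp_postcomp, hs, idMap_postcomp]
lemma extDim_le_of_injective {g : VertexMap X Y} (hg : IsHom g) (hi : Injective g) :
    extDim X Z ≤ extDim Y Z := by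
  obtain ⟨r, hr⟩ := hi.exists_retraction
  refine extDim_le_of_linearMap (precompLinear g) (fun f => ⟨f ⊚ g, hg.diff_precomp f⟩)
    fun z => ⟨z ▷ r, ?_⟩
  rw [precompLinear_apply, precomp_precomp, hr, precomp_idMap]

lemma Isomorphic.homDim_left (h : Isomorphic X Y) : homDim X Z = homDim Y Z := by
  obtain ⟨f, g, hf, hg, hgf, hfg⟩ := h
  exact (homDim_le_of_surjective hg (.of_comp_eq_id hgf)).antisymm
    (homDim_le_of_surjective hf (.of_comp_eq_id hfg))
lemma Isomorphic.homDim_right (h : Isomorphic X Y) : homDim Z X = homDim Z Y := by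
  obtain ⟨f, g, hf, hg, hgf, hfg⟩ := h
  exact (homDim_le_of_injective hf (.of_comp_eq_id hgf)).antisymm
    (homDim_le_of_injective hg (.of_comp_eq_id hfg))
lemma Isomorphic.extDim_left (h : Isomorphic X Y) : extDim X Z = extDim Y Z := by
  obtain ⟨f, g, hf, hg, hgf, hfg⟩ := h
  exact (extDim_le_of_injective hf (.of_comp_eq_id hgf)).antisymm
    (extDim_le_of_injective hg (.of_comp_eq_id hfg))
lemma Isomorphic.extDim_right (h : Isomorphic X Y) : extDim Z X = extDim Z Y := by
  obtain ⟨f, g, hf, hg, hgf, hfg⟩ := h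
  exact (extDim_le_of_surjective hg (.of_comp_eq_id hgf)).antisymm
    (extDim_le_of_surjective hf (.of_comp_eq_id hfg))

end Dimension

/-! ### Short exact sequences -/

/-- A short exact sequence `0 → A → B → C → 0`, presented together with a vertexwise splitting;
the section `sec` and the retraction `ret` need not be homomorphisms. -/
structure ShortExact (A B C : QuiverRep Q k) where
  incl : VertexMap A B
  proj : VertexMap B C
  sec : VertexMap C B
  ret : VertexMap B A
  incl_hom : IsHom incl
  proj_hom : IsHom proj
  ret_incl : ret ⊚ incl = idMap A
  proj_sec : proj ⊚ sec = idMap C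
  incl_ret_add_sec_proj : incl ⊚ ret + sec ⊚ proj = idMap B
  proj_incl : proj ⊚ incl = 0
  ret_sec : ret ⊚ sec = 0

namespace ShortExact

variable {A B C X Y : QuiverRep Q k}

lemma injective (S : ShortExact A B C) : Injective S.incl := .of_comp_eq_id S.ret_incl
lemma surjective (S : ShortExact A B C) : Surjective S.proj := .of_comp_eq_id S.proj_sec

/-- A representative in `ArrowMap C A` of the class of the extension in `Ext¹(C, A)`. -/
def cocycle (S : ShortExact A B C) : ArrowMap C A := S.ret ◁ diff C B S.sec

lemma incl_ret (S : ShortExact A B C) : S.incl ⊚ S.ret = idMap B - S.sec ⊚ S.proj :=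
  eq_sub_of_add_eq S.incl_ret_add_sec_proj
lemma sec_proj (S : ShortExact A B C) : S.sec ⊚ S.proj = idMap B - S.incl ⊚ S.ret :=
  eq_sub_of_add_eq' S.incl_ret_add_sec_proj

lemma incl_postcomp_cocycle (S : ShortExact A B C) : S.incl ◁ S.cocycle = diff C B S.sec := by
  have h : S.proj ◁ diff C B S.sec = 0 := by
    rw [← S.proj_hom.diff_postcomp, S.proj_sec, isHom_idMap C]
  rw [cocycle, postcomp_postcomp, S.incl_ret, sub_postcomp, idMap_postcomp, ← postcomp_postcomp,
    h, postcomp_zero, sub_zero]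

lemma cocycle_eq_neg (S : ShortExact A B C) : S.cocycle = -(diff B A S.ret ▷ S.sec) := by
  have h : diff C A (S.ret ⊚ S.sec) = 0 := by rw [S.ret_sec, map_zero]
  rw [diff_comp, add_eq_zero_iff_neg_eq] at h
  exact h.symm

lemma cocycle_precomp_proj (S : ShortExact A B C) : S.cocycle ▷ S.proj = -diff B A S.ret := by
  have h : diff B A S.ret ▷ S.incl = 0 := by
    rw [← S.incl_hom.diff_precomp, S.ret_incl, isHom_idMap A]
  rw [cocycle_eq_neg, neg_precomp, precomp_precomp, S.sec_proj, precomp_sub, precomp_idMap,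
    ← precomp_precomp, h, zero_precomp, sub_zero]

lemma exists_extension (S : ShortExact A B C) {f : VertexMap A Y} (hf : IsHom f)
    {h : VertexMap C Y} (hh : diff C Y h = f ◁ S.cocycle) :
    ∃ F : VertexMap B Y, IsHom F ∧ F ⊚ S.incl = f ∧ F ⊚ S.sec = h := by
  refine ⟨f ⊚ S.ret + h ⊚ S.proj, ?_, ?_, ?_⟩
  · rw [IsHom, map_add, hf.diff_postcomp, S.proj_hom.diff_precomp, hh, ← postcomp_precomp,
      S.cocycle_precomp_proj, postcomp_neg, add_neg_cancel]
  · rw [add_comp, comp_assoc, comp_assoc, S.ret_incl, S.proj_incl, comp_idMap, comp_zero, add_zero]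
  · rw [add_comp, comp_assoc, comp_assoc, S.ret_sec, S.proj_sec, comp_idMap, comp_zero, zero_add]

lemma diff_of_extension (S : ShortExact A B C) {F : VertexMap B Y} (hF : IsHom F) :
    diff C Y (F ⊚ S.sec) = (F ⊚ S.incl) ◁ S.cocycle := by
  rw [hF.diff_postcomp, ← S.incl_postcomp_cocycle, postcomp_postcomp]

lemma exists_lift (S : ShortExact A B C) {g : VertexMap X C} (hg : IsHom g) {h : VertexMap X A}
    (hh : diff X A h = S.cocycle ▷ g) : ∃ G : VertexMap X B, IsHom G ∧ S.proj ⊚ G = g := by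
  refine ⟨S.sec ⊚ g - S.incl ⊚ h, ?_, ?_⟩
  · rw [IsHom, map_sub, hg.diff_precomp, S.incl_hom.diff_postcomp, hh, postcomp_precomp,
      S.incl_postcomp_cocycle, sub_self]
  · rw [comp_sub, ← comp_assoc, ← comp_assoc, S.proj_sec, S.proj_incl, idMap_comp, zero_comp,
      sub_zero]

lemma incl_ret_comp (S : ShortExact A B C) {f : VertexMap X B} (h : S.proj ⊚ f = 0) :
    S.incl ⊚ S.ret ⊚ f = f := by
  rw [← comp_assoc, S.incl_ret, sub_comp, comp_assoc, h, comp_zero, sub_zero, idMap_comp]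
lemma comp_sec_proj (S : ShortExact A B C) {f : VertexMap B X} (h : f ⊚ S.incl = 0) :
    (f ⊚ S.sec) ⊚ S.proj = f := by
  rw [comp_assoc, S.sec_proj, comp_sub, ← comp_assoc, h, zero_comp, sub_zero, comp_idMap]
lemma isHom_ret_comp (S : ShortExact A B C) {f : VertexMap X B} (hf : IsHom f)
    (h : S.proj ⊚ f = 0) : IsHom (S.ret ⊚ f) :=
  S.incl_hom.of_comp_injective S.injective ((S.incl_ret_comp h).symm ▸ hf)
lemma isHom_comp_sec (S : ShortExact A B C) {f : VertexMap B X} (hf : IsHom f)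
    (h : f ⊚ S.incl = 0) : IsHom (f ⊚ S.sec) :=
  S.proj_hom.of_comp_surjective S.surjective ((S.comp_sec_proj h).symm ▸ hf)

lemma incl_ret_apply (S : ShortExact A B C) {i} {v : B.space i} (hv : S.proj i v = 0) :
    S.incl i (S.ret i v) = v := by
  simpa [hv] using congr_apply S.incl_ret i v

lemma dimVec_add (S : ShortExact A B C) : dimVec B = dimVec A + dimVec C := by
  funext i
  have hker : LinearMap.ker (S.proj i) = LinearMap.range (S.incl i) := by
    ext v
    refine ⟨fun hv => ⟨S.ret i v, S.incl_ret_apply hv⟩, ?_⟩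
    rintro ⟨w, rfl⟩
    exact congr_apply S.proj_incl i w
  have h := LinearMap.finrank_range_add_finrank_ker (S.proj i)
  rw [LinearMap.range_eq_top.mpr (S.surjective i), finrank_top, hker,
    LinearMap.finrank_range_of_inj (S.injective i)] at h
  simp only [dimVec, Pi.add_apply]
  omega

lemma totalDim_add (S : ShortExact A B C) : totalDim B = totalDim A + totalDim C := by
  zify
  simp only [totalDim_eq_sum, S.dimVec_add, Pi.add_apply, Finset.sum_add_distrib]

lemma exists_eq_precomp_proj_add (S : ShortExact A B C) {w : ArrowMap B X} {h : VertexMap A X}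
    (hh : diff A X h = w ▷ S.incl) :
    ∃ (w' : ArrowMap C X) (g : VertexMap B X), w = w' ▷ S.proj + diff B X g := by
  refine ⟨(w - diff B X (h ⊚ S.ret)) ▷ S.sec, h ⊚ S.ret, ?_⟩
  have h0 : (w - diff B X (h ⊚ S.ret)) ▷ S.incl = 0 := by
    rw [sub_precomp, ← S.incl_hom.diff_precomp, comp_assoc, S.ret_incl, comp_idMap, hh, sub_self]
  rw [precomp_precomp, S.sec_proj, precomp_sub, ← precomp_precomp, h0, zero_precomp,
    precomp_idMap, sub_zero, sub_add_cancel]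

lemma extDim_left_eq_zero (S : ShortExact A B C) (hA : extDim A X = 0) (hC : extDim C X = 0) :
    extDim B X = 0 := by
  rw [extDim_eq_zero_iff] at *
  intro w
  obtain ⟨h, hh⟩ := hA (w ▷ S.incl)
  obtain ⟨w', g, rfl⟩ := S.exists_eq_precomp_proj_add hh
  obtain ⟨g', rfl⟩ := hC w'
  exact ⟨g' ⊚ S.proj + g, by rw [map_add, S.proj_hom.diff_precomp]⟩
lemma homDim_left_eq_zero (S : ShortExact A B C) (hA : homDim A X = 0) (hC : homDim C X = 0) :
    homDim B X = 0 := by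
  rw [homDim_eq_zero_iff] at *
  intro f hf
  have h := hA _ (hf.comp S.incl_hom)
  rw [← S.comp_sec_proj h, hC _ (S.isHom_comp_sec hf h), zero_comp]

lemma isHom_proj_comp (S : ShortExact A B C) {w : ArrowMap X A} {h : VertexMap X B}
    (hh : diff X B h = S.incl ◁ w) : IsHom (S.proj ⊚ h) := by
  rw [IsHom, S.proj_hom.diff_postcomp, hh, postcomp_postcomp, S.proj_incl, zero_postcomp]
lemma eq_cocycle_precomp_add (S : ShortExact A B C) {w : ArrowMap X A} {h : VertexMap X B}
    (hh : diff X B h = S.incl ◁ w) :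
    w = S.cocycle ▷ (S.proj ⊚ h) + diff X A (S.ret ⊚ h) := by
  rw [diff_comp, ← precomp_precomp, S.cocycle_precomp_proj, neg_precomp, hh, postcomp_postcomp,
    S.ret_incl, idMap_postcomp, neg_add_cancel_left]

end ShortExact

section Constructions

variable {X Y : QuiverRep Q k}

/-- The kernel of a homomorphism. -/
abbrev kerRep (f : VertexMap X Y) (hf : IsHom f) : QuiverRep Q k where
  space i := LinearMap.ker (f i)
  map a := (X.map a).restrict fun v hv => by
    rw [LinearMap.mem_ker] at hv ⊢
    rw [← isHom_iff.mp hf a v, hv, map_zero]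

/-- The cokernel of a homomorphism. -/
abbrev cokerRep (f : VertexMap X Y) (hf : IsHom f) : QuiverRep Q k where
  space i := Y.space i ⧸ LinearMap.range (f i)
  map a := Submodule.mapQ _ _ (Y.map a) <| by
    rintro _ ⟨v, rfl⟩
    exact ⟨X.map a v, (isHom_iff.mp hf a v).symm⟩

/-- The image of a homomorphism. -/
abbrev imRep (f : VertexMap X Y) (hf : IsHom f) : QuiverRep Q k where
  space i := LinearMap.range (f i)
  map a := (Y.map a).restrict <| by
    rintro _ ⟨v, rfl⟩
    exact ⟨X.map a v, (isHom_iff.mp hf a v).symm⟩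

lemma Injective.exists_factorization {A B X : QuiverRep Q k} {j : VertexMap A B}
    (hj : Injective j) {f : VertexMap X B} (h : ∀ i v, ∃ w, j i w = f i v) :
    ∃ g : VertexMap X A, j ⊚ g = f := by
  obtain ⟨r, hr⟩ := hj.exists_retraction
  refine ⟨r ⊚ f, ?_⟩
  ext i v
  obtain ⟨w, hw⟩ := h i v
  rw [comp_apply, comp_apply, ← hw]
  exact congrArg (j i) (congr_apply hr i w)

lemma ShortExact.exists_of_exact {A B C : QuiverRep Q k} {j : VertexMap A B} {p : VertexMap B C}
    (hj : IsHom j) (hp : IsHom p) (hinj : Injective j) (hsurj : Surjective p) (hpj : p ⊚ j = 0)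
    (hexact : ∀ i v, p i v = 0 → ∃ w, j i w = v) :
    ∃ S : ShortExact A B C, S.incl = j ∧ S.proj = p := by
  obtain ⟨s, hs⟩ := hsurj.exists_section
  have hpd : p ⊚ (idMap B - s ⊚ p) = 0 := by
    rw [comp_sub, ← comp_assoc, hs, idMap_comp, comp_idMap, sub_self]
  obtain ⟨r, hr⟩ : ∃ r : VertexMap B A, j ⊚ r = idMap B - s ⊚ p :=
    hinj.exists_factorization fun i v => hexact i _ (congr_apply hpd i v)
  refine ⟨⟨j, p, s, r, hj, hp, hinj.cancel ?_, hs, by rw [hr, sub_add_cancel], hpj,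
    hinj.eq_zero_of_comp ?_⟩, rfl, rfl⟩
  · rw [← comp_assoc, hr, sub_comp, comp_assoc, hpj, comp_zero, sub_zero, idMap_comp, comp_idMap]
  · rw [← comp_assoc, hr, sub_comp, comp_assoc, hs, idMap_comp, comp_idMap, sub_self]

lemma exists_kernel {f : VertexMap X Y} (hf : IsHom f) (hs : Surjective f) :
    ∃ (K : QuiverRep Q k) (S : ShortExact K X Y), S.proj = f := by
  obtain ⟨S, -, h⟩ := ShortExact.exists_of_exact (A := kerRep f hf)
    (j := fun i => (LinearMap.ker (f i)).subtype) (isHom_iff.mpr fun _ _ => rfl) hf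
    (fun _ => Subtype.val_injective) hs (by ext i v; exact v.2) fun _ v hv => ⟨⟨v, hv⟩, rfl⟩
  exact ⟨_, S, h⟩

lemma exists_cokernel {f : VertexMap X Y} (hf : IsHom f) (hi : Injective f) :
    ∃ (K : QuiverRep Q k) (S : ShortExact X Y K), S.incl = f := by
  obtain ⟨S, h, -⟩ := ShortExact.exists_of_exact (C := cokerRep f hf)
    (p := fun i => (LinearMap.range (f i)).mkQ) hf (isHom_iff.mpr fun _ _ => rfl) hi
    (fun _ => Submodule.mkQ_surjective _)
    (by ext i v; exact (Submodule.Quotient.mk_eq_zero _).mpr ⟨v, rfl⟩)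
    (fun _ _ hv => (Submodule.Quotient.mk_eq_zero _).mp hv)
  exact ⟨_, S, h⟩

lemma exists_image_factorization {f : VertexMap X Y} (hf : IsHom f) :
    ∃ (I : QuiverRep Q k) (p : VertexMap X I) (j : VertexMap I Y),
      IsHom p ∧ IsHom j ∧ Surjective p ∧ Injective j ∧ j ⊚ p = f :=
  ⟨imRep f hf, fun i => (f i).rangeRestrict, fun i => (LinearMap.range (f i)).subtype,
    isHom_iff.mpr fun a v => Subtype.ext (isHom_iff.mp hf a v), isHom_iff.mpr fun _ _ => rfl,
    fun _ => LinearMap.surjective_rangeRestrict _, fun _ => Subtype.val_injective, rfl⟩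

/-- The extension of `C` by `A` with cocycle `z`. -/
abbrev extensionRep (A C : QuiverRep Q k) (z : ArrowMap C A) : QuiverRep Q k where
  space i := A.space i × C.space i
  map a := ((A.map a).coprod (z a)).prod (C.map a ∘ₗ LinearMap.snd k _ _)

/-- The short exact sequence of `extensionRep`. -/
def extension (A C : QuiverRep Q k) (z : ArrowMap C A) : ShortExact A (extensionRep A C z) C where
  incl _ := LinearMap.inl k _ _
  proj _ := LinearMap.snd k _ _
  sec _ := LinearMap.inr k _ _
  ret _ := LinearMap.fst k _ _
  incl_hom := isHom_iff.mpr fun a v => by simp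
  proj_hom := isHom_iff.mpr fun a v => by simp
  ret_incl := rfl
  proj_sec := rfl
  incl_ret_add_sec_proj := funext fun _ => LinearMap.ext fun v => Prod.fst_add_snd v
  proj_incl := rfl
  ret_sec := rfl

lemma extension_cocycle (A C : QuiverRep Q k) (z : ArrowMap C A) :
    (extension A C z).cocycle = z := by
  ext a v
  change A.map a 0 + z a v - 0 = z a v
  simp

/-- The representation with the same spaces as `X` and arrow maps `m`. -/
abbrev withMaps (X : QuiverRep Q k) (m : ArrowMap X X) : QuiverRep Q k where
  space := X.space
  map := m

lemma exists_withMaps (h : dimVec X = dimVec Y) :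
    ∃ m : ArrowMap X X, Isomorphic (withMaps X m) Y := by
  have e (i) : X.space i ≃ₗ[k] Y.space i :=
    LinearEquiv.ofFinrankEq _ _ (Int.ofNat_inj.mp (congrFun h i))
  refine ⟨fun a => (e _).symm.toLinearMap ∘ₗ Y.map a ∘ₗ (e _).toLinearMap,
    Isomorphic.of_bijective (f := fun i => (e i).toLinearMap) (isHom_iff.mpr fun a v => ?_)
      (fun i => (e i).injective) fun i => (e i).surjective⟩
  simp

end Constructions

/-! ### Indecomposable representations and bricks -/

section Indecomposable

variable {X Y K U V : QuiverRep Q k}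

/-- Indecomposability, expressed by the absence of nontrivial idempotent endomorphisms. -/
def Indecomposable (X : QuiverRep Q k) : Prop :=
  idMap X ≠ 0 ∧ ∀ e : VertexMap X X, IsHom e → e ⊚ e = e → e = 0 ∨ e = idMap X

/-- A brick has only scalar endomorphisms. -/
def IsBrick (X : QuiverRep Q k) : Prop := homDim X X = 1

lemma exists_splitting_of_idempotent {e : VertexMap X X} (he : IsHom e) (h : e ⊚ e = e) :
    ∃ (I : QuiverRep Q k) (p : VertexMap X I) (j : VertexMap I X),
      IsHom p ∧ IsHom j ∧ p ⊚ j = idMap I ∧ j ⊚ p = e := by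
  obtain ⟨I, p, j, hp, hj, hps, hji, rfl⟩ := exists_image_factorization he
  exact ⟨I, p, j, hp, hj, hji.cancel (hps.cancel h), rfl⟩

lemma idempotent_compl {e : VertexMap X X} (h : e ⊚ e = e) :
    (idMap X - e) ⊚ (idMap X - e) = idMap X - e := by
  rw [comp_sub, comp_idMap, sub_comp, idMap_comp, h, sub_self, sub_zero]

lemma exists_splitting_of_not_indecomposable (h0 : idMap X ≠ 0) (h : ¬Indecomposable X) :
    ∃ (U V : QuiverRep Q k) (S : ShortExact U X V),
      IsHom S.sec ∧ IsHom S.ret ∧ idMap U ≠ 0 ∧ idMap V ≠ 0 := by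
  obtain ⟨e, he, hee, he0, he1⟩ : ∃ e : VertexMap X X,
      IsHom e ∧ e ⊚ e = e ∧ e ≠ 0 ∧ e ≠ idMap X := by
    simpa [Indecomposable, h0] using h
  obtain ⟨U, p, j, hp, hj, hpj, hjp⟩ := exists_splitting_of_idempotent he hee
  obtain ⟨V, p', j', hp', hj', hpj', hjp'⟩ :=
    exists_splitting_of_idempotent ((isHom_idMap X).sub he) (idempotent_compl hee)
  have hp'j : p' ⊚ j = 0 := by
    refine (Injective.of_comp_eq_id hpj').eq_zero_of_comp ?_
    refine (Surjective.of_comp_eq_id hpj).eq_zero_of_comp ?_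
    rw [← comp_assoc, hjp', comp_assoc, hjp, sub_comp, idMap_comp, hee, sub_self]
  have hpj' : p ⊚ j' = 0 := by
    refine (Injective.of_comp_eq_id hpj).eq_zero_of_comp ?_
    refine (Surjective.of_comp_eq_id hpj').eq_zero_of_comp ?_
    rw [← comp_assoc, hjp, comp_assoc, hjp', comp_sub, comp_idMap, hee, sub_self]
  refine ⟨U, V, ⟨j, p', j', p, hj, hp', hpj, ‹_›, ?_, hp'j, hpj'⟩, hj', hp, fun hU => he0 ?_,
    fun hV => he1 (sub_eq_zero.mp ?_).symm⟩
  · rw [hjp, hjp', add_sub_cancel]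
  · rw [← hjp, eq_zero_of_idMap_source hU j, zero_comp]
  · rw [← hjp', eq_zero_of_idMap_source hV j', zero_comp]

/-- The direct sum decomposition given by a split exact sequence, with the summands exchanged. -/
def ShortExact.swap (S : ShortExact U X V) (hs : IsHom S.sec) (hr : IsHom S.ret) :
    ShortExact V X U where
  incl := S.sec
  proj := S.ret
  sec := S.incl
  ret := S.proj
  incl_hom := hs
  proj_hom := hr
  ret_incl := S.proj_sec
  proj_sec := S.ret_incl
  incl_ret_add_sec_proj := by rw [add_comm, S.incl_ret_add_sec_proj]
  proj_incl := S.ret_sec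
  ret_sec := S.proj_incl

lemma Indecomposable.comp_eq_idMap (hX : Indecomposable X) {j : VertexMap Y X}
    {p : VertexMap X Y} (hj : IsHom j) (hp : IsHom p) (h : p ⊚ j = idMap Y) (h0 : idMap Y ≠ 0) :
    j ⊚ p = idMap X := by
  refine (hX.2 (j ⊚ p) (hj.comp hp) ?_).resolve_left fun hjp => h0 ?_
  · rw [comp_assoc, ← comp_assoc p, h, idMap_comp]
  · calc idMap Y = p ⊚ (j ⊚ p) ⊚ j := by rw [comp_assoc, h, comp_idMap, h]
      _ = 0 := by rw [hjp, zero_comp, comp_zero]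

lemma Indecomposable.of_isomorphic (hX : Indecomposable X) (h : Isomorphic X Y) :
    Indecomposable Y := by
  obtain ⟨f, g, hf, hg, hgf, hfg⟩ := h
  refine ⟨fun h0 => hX.1 ?_, fun e he hee => ?_⟩
  · rw [← hgf, eq_zero_of_idMap_target h0 f, comp_zero]
  · have hidem : (g ⊚ e ⊚ f) ⊚ (g ⊚ e ⊚ f) = g ⊚ e ⊚ f := by
      calc (g ⊚ e ⊚ f) ⊚ (g ⊚ e ⊚ f) = g ⊚ e ⊚ (f ⊚ g) ⊚ e ⊚ f := rfl
        _ = g ⊚ (e ⊚ e) ⊚ f := by rw [hfg, idMap_comp, ← comp_assoc e]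
        _ = g ⊚ e ⊚ f := by rw [hee]
    have hconj : f ⊚ (g ⊚ e ⊚ f) ⊚ g = e := by
      calc f ⊚ (g ⊚ e ⊚ f) ⊚ g = (f ⊚ g) ⊚ e ⊚ (f ⊚ g) := rfl
        _ = e := by rw [hfg, idMap_comp, comp_idMap]
    refine (hX.2 _ (hg.comp (he.comp hf)) hidem).imp (fun h => ?_) fun h => ?_
    · rw [← hconj, h, zero_comp, comp_zero]
    · rw [← hconj, h, idMap_comp, hfg]

lemma IsHom.pow {f : VertexMap X X} (hf : IsHom f) (n : ℕ) : IsHom (f ^ n) := by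
  induction n with
  | zero => exact isHom_idMap X
  | succ n ih => exact ih.comp hf

lemma exists_idempotent_of_ker_comp_self_le {g : VertexMap X X} (hg : IsHom g)
    (hker : ∀ i v, (g ⊚ g) i v = 0 → g i v = 0) :
    ∃ e : VertexMap X X, IsHom e ∧ e ⊚ e = e ∧ e ⊚ g = g ∧ ∀ i v, g i v = 0 → e i v = 0 := by
  obtain ⟨I, p, j, hp, hj, hps, hji, rfl⟩ := exists_image_factorization hg
  have hinj : Injective (p ⊚ j) := by
    intro i
    rw [injective_iff_map_eq_zero]
    intro v hv
    obtain ⟨u, rfl⟩ := hps i v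
    refine hji i ?_
    rw [map_zero]
    refine hker i u ?_
    simp only [comp_apply] at hv ⊢
    rw [hv, map_zero]
  obtain ⟨w, hw, hwpj, -⟩ :=
    (hp.comp hj).exists_inverse hinj (hinj.surjective_of_totalDim_le le_rfl)
  refine ⟨j ⊚ w ⊚ p, hj.comp (hw.comp hp), ?_, ?_, fun i v hv => ?_⟩
  · calc (j ⊚ w ⊚ p) ⊚ (j ⊚ w ⊚ p) = j ⊚ (w ⊚ p ⊚ j) ⊚ w ⊚ p := rfl
      _ = j ⊚ w ⊚ p := by rw [hwpj, idMap_comp]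
  · calc (j ⊚ w ⊚ p) ⊚ (j ⊚ p) = j ⊚ (w ⊚ p ⊚ j) ⊚ p := rfl
      _ = j ⊚ p := by rw [hwpj, idMap_comp]
  · have hpv : p i v = 0 := hji i (by rw [map_zero]; exact hv)
    simp only [comp_apply, hpv, map_zero]

lemma pow_totalDim_apply_eq_zero (f : VertexMap X X) {i v} {m : ℕ}
    (hm : totalDim X ≤ m) (h : (f ^ m) i v = 0) : (f ^ totalDim X) i v = 0 := by
  have hle : Module.finrank k (X.space i) ≤ totalDim X :=
    Finset.single_le_sum (f := fun i => Module.finrank k (X.space i)) (fun _ _ => Nat.zero_le _)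
      (Finset.mem_univ i)
  have hker : LinearMap.ker (f i ^ m) = LinearMap.ker (f i ^ totalDim X) := by
    rw [Module.End.ker_pow_eq_ker_pow_finrank_of_le hle,
      Module.End.ker_pow_eq_ker_pow_finrank_of_le (hle.trans hm)]
  exact hker.le h

lemma Indecomposable.isNilpotent_or_injective (hX : Indecomposable X) {f : VertexMap X X}
    (hf : IsHom f) : IsNilpotent f ∨ Injective f := by
  have hsq : (f ^ totalDim X) ⊚ (f ^ totalDim X) = f ^ (totalDim X + totalDim X) :=
    (pow_add _ _ _).symm
  obtain ⟨e, he, hee, heg, hge⟩ := exists_idempotent_of_ker_comp_self_le (hf.pow (totalDim X))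
    fun i v h => pow_totalDim_apply_eq_zero f (Nat.le_add_left _ _) (hsq ▸ h)
  rcases hX.2 e he hee with rfl | rfl
  · exact .inl ⟨_, heg.symm.trans (zero_comp _)⟩
  · obtain ⟨m, hm⟩ := Nat.exists_eq_succ_of_ne_zero fun h => hX.1 (totalDim_eq_zero_iff.mp h)
    rw [hm] at hge
    refine .inr fun i => (injective_iff_map_eq_zero _).mpr fun v hv => hge i v ?_
    change (f i ^ (m + 1)) v = 0
    rw [pow_succ, Module.End.mul_apply, hv, map_zero]

lemma exists_indecomposable_retract {K : QuiverRep Q k} (N : Submodule k (VertexMap K K))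
    (hN : idMap K ∉ N) :
    ∃ (D : QuiverRep Q k) (i : VertexMap D K) (r : VertexMap K D),
      Indecomposable D ∧ IsHom i ∧ IsHom r ∧ r ⊚ i = idMap D ∧ i ⊚ r ∉ N := by
  induction hn : totalDim K using Nat.strong_induction_on generalizing K with | _ n ih
  subst hn
  by_cases hK : Indecomposable K
  · exact ⟨K, idMap K, idMap K, hK, isHom_idMap K, isHom_idMap K, rfl, hN⟩
  have of_retract {U : QuiverRep Q k} (i : VertexMap U K) (r : VertexMap K U) (hi : IsHom i)
      (hr : IsHom r) (hri : r ⊚ i = idMap U) (hU : totalDim U < totalDim K) (hir : i ⊚ r ∉ N) :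
      ∃ (D : QuiverRep Q k) (i : VertexMap D K) (r : VertexMap K D),
        Indecomposable D ∧ IsHom i ∧ IsHom r ∧ r ⊚ i = idMap D ∧ i ⊚ r ∉ N := by
    obtain ⟨D, i', r', hD, hi', hr', hri', hN'⟩ :=
      ih _ hU (N.comap (compLeft i ∘ₗ compRight r)) hir rfl
    refine ⟨D, i ⊚ i', r' ⊚ r, hD, hi.comp hi', hr'.comp hr, ?_, hN'⟩
    rw [comp_assoc, ← comp_assoc r, hri, idMap_comp, hri']
  obtain ⟨U, V, S, hs, hr, hU, hV⟩ :=
    exists_splitting_of_not_indecomposable (fun h => hN (h ▸ N.zero_mem)) hK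
  have htd := S.totalDim_add
  have hU' := totalDim_pos_iff.mpr hU
  have hV' := totalDim_pos_iff.mpr hV
  by_cases hUN : S.incl ⊚ S.ret ∈ N
  · refine of_retract S.sec S.proj hs S.proj_hom S.proj_sec (by omega) fun hVN => hN ?_
    exact S.incl_ret_add_sec_proj ▸ N.add_mem hUN hVN
  · exact of_retract S.incl S.ret S.incl_hom hr S.ret_incl (by omega) hUN

lemma IsBrick.idMap_ne_zero (h : IsBrick X) : idMap X ≠ 0 := fun h0 =>
  one_ne_zero (h.symm.trans (homDim_eq_zero_iff.mpr fun f _ => eq_zero_of_idMap_source h0 f))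

lemma isBrick_iff (h0 : idMap X ≠ 0) :
    IsBrick X ↔ ∀ f : VertexMap X X, IsHom f → ∃ c : k, f = c • idMap X := by
  have h1 : (⟨idMap X, isHom_idMap X⟩ : LinearMap.ker (diff X X)) ≠ 0 :=
    fun h => h0 (congrArg Subtype.val h)
  rw [IsBrick, homDim, finrank_eq_one_iff_of_nonzero' _ h1]
  exact ⟨fun h f hf => (h ⟨f, hf⟩).imp fun c hc => (congrArg Subtype.val hc).symm,
    fun h f => (h f f.2).imp fun c hc => Subtype.ext hc.symm⟩

lemma IsBrick.eq_smul_idMap (h : IsBrick X) {f : VertexMap X X} (hf : IsHom f) :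
    ∃ c : k, f = c • idMap X :=
  (isBrick_iff h.idMap_ne_zero).mp h f hf

lemma IsBrick.indecomposable (h : IsBrick X) : Indecomposable X := by
  refine ⟨h.idMap_ne_zero, fun e he hee => ?_⟩
  obtain ⟨c, rfl⟩ := h.eq_smul_idMap he
  rw [smul_comp, idMap_comp, smul_smul] at hee
  have hc : c * c = c := smul_left_injective k h.idMap_ne_zero hee
  rcases IsIdempotentElem.iff_eq_zero_or_one.mp hc with rfl | rfl
  · exact .inl (zero_smul k _)
  · exact .inr (one_smul k _)

lemma IsBrick.of_isomorphic (h : IsBrick X) (hi : Isomorphic X Y) : IsBrick Y := by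
  rwa [IsBrick, ← hi.homDim_left, ← hi.homDim_right]

lemma IsBrick.injective_of_ne_zero (h : IsBrick X) {f : VertexMap X X} (hf : IsHom f)
    (h0 : f ≠ 0) : Injective f := by
  obtain ⟨c, rfl⟩ := h.eq_smul_idMap hf
  exact fun i => smul_right_injective _ fun hc : c = 0 => h0 (by rw [hc, zero_smul])

end Indecomposable

section NonBrick

variable {X K I D : QuiverRep Q k}

/-- `I` is isomorphic to the image of a square-zero endomorphism of `X`. -/
def IsSquareZeroImage (I X : QuiverRep Q k) : Prop :=
  ∃ (p : VertexMap X I) (j : VertexMap I X),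
    IsHom p ∧ IsHom j ∧ Surjective p ∧ Injective j ∧ p ⊚ j = 0

lemma Indecomposable.extDim_ne_zero_of_retract (hX : Indecomposable X) (S : ShortExact K X I)
    (hI : idMap I ≠ 0) {i : VertexMap D K} {r : VertexMap K D} (hi : IsHom i) (hr : IsHom r)
    (hri : r ⊚ i = idMap D) (hD : idMap D ≠ 0) : extDim I D ≠ 0 := by
  intro h0
  obtain ⟨h, hh⟩ := extDim_eq_zero_iff.mp h0 (r ◁ S.cocycle)
  obtain ⟨F, hF, hFi, -⟩ := S.exists_extension hr hh
  have hFX := hX.comp_eq_idMap (S.incl_hom.comp hi) hF (by rw [← comp_assoc, hFi, hri]) hD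
  have hXD := (Injective.of_comp_eq_id hFX).totalDim_le
  have hDK := (Injective.of_comp_eq_id hri).totalDim_le
  have hI' := totalDim_pos_iff.mpr hI
  have htd := S.totalDim_add
  omega

lemma ShortExact.injective_of_minimal_squareZeroImage (S : ShortExact K X I)
    (hmin : ∀ I' : QuiverRep Q k, idMap I' ≠ 0 → IsSquareZeroImage I' X → totalDim I ≤ totalDim I')
    {u : VertexMap I K} (hu : IsHom u) {i : VertexMap D K} {r : VertexMap K D} (hi : IsHom i)
    (hr : IsHom r) (hri : r ⊚ i = idMap D) (hru : r ⊚ u ≠ 0) : Injective (r ⊚ u) := by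
  obtain ⟨I', p, j, hp, hj, hps, hji, hjp⟩ := exists_image_factorization (hr.comp hu)
  rw [← hjp]
  refine hji.comp (hps.injective_of_totalDim_le (hmin I' (fun h => hru ?_) ?_))
  · rw [← hjp, eq_zero_of_idMap_target h p, comp_zero]
  · refine ⟨p ⊚ S.proj, S.incl ⊚ i ⊚ j, hp.comp S.proj_hom, S.incl_hom.comp (hi.comp hj),
      hps.comp S.surjective, S.injective.comp ((Injective.of_comp_eq_id hri).comp hji), ?_⟩
    rw [comp_assoc, ← comp_assoc S.proj, S.proj_incl, zero_comp, comp_zero]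

variable [IsAlgClosed k]

lemma exists_not_injective_sub_smul (h0 : idMap X ≠ 0) (f : VertexMap X X) :
    ∃ c : k, ¬Injective (f - c • idMap X) := by
  obtain ⟨i, hi⟩ : ∃ i, Nontrivial (X.space i) := by
    by_contra! hn
    exact h0 (by ext i v; exact Subsingleton.elim _ _)
  obtain ⟨c, hc⟩ := Module.End.exists_eigenvalue (f i)
  obtain ⟨v, hv⟩ := hc.exists_hasEigenvector
  refine ⟨c, fun h => hv.2 (h i ?_)⟩
  simp [hv.apply_eq_smul]

lemma Indecomposable.exists_squareZero (hX : Indecomposable X) (hb : ¬IsBrick X) :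
    ∃ f : VertexMap X X, IsHom f ∧ f ≠ 0 ∧ f ⊚ f = 0 := by
  rw [isBrick_iff hX.1] at hb
  push Not at hb
  obtain ⟨f, hf, hfc⟩ := hb
  obtain ⟨c, hc⟩ := exists_not_injective_sub_smul hX.1 f
  have hg : IsHom (f - c • idMap X) := hf.sub ((isHom_idMap X).smul c)
  have hg0 : f - c • idMap X ≠ 0 := sub_ne_zero.mpr (hfc c)
  have hnil := (hX.isNilpotent_or_injective hg).resolve_right hc
  set g := f - c • idMap X
  have hclass : 2 ≤ nilpotencyClass g := by
    by_contra! h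
    exact hg0 (pow_one g ▸ pow_eq_zero_of_le (Nat.le_of_lt_succ h) (pow_nilpotencyClass hnil))
  have : Nontrivial (VertexMap X X) := ⟨g, 0, hg0⟩
  refine ⟨g ^ (nilpotencyClass g - 1), hg.pow _, pow_pred_nilpotencyClass hnil, ?_⟩
  change g ^ (nilpotencyClass g - 1) * g ^ (nilpotencyClass g - 1) = 0
  rw [← pow_add]
  exact pow_eq_zero_of_le (by omega) (pow_nilpotencyClass hnil)

lemma Indecomposable.exists_minimal_squareZeroImage (hX : Indecomposable X) (hb : ¬IsBrick X) :
    ∃ I : QuiverRep Q k, idMap I ≠ 0 ∧ IsSquareZeroImage I X ∧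
      ∀ I' : QuiverRep Q k, idMap I' ≠ 0 → IsSquareZeroImage I' X → totalDim I ≤ totalDim I' := by
  classical
  have hex : ∃ m, ∃ I : QuiverRep Q k, idMap I ≠ 0 ∧ IsSquareZeroImage I X ∧ totalDim I = m := by
    obtain ⟨f, hf, h0, hff⟩ := hX.exists_squareZero hb
    obtain ⟨I, p, j, hp, hj, hps, hji, rfl⟩ := exists_image_factorization hf
    refine ⟨_, I, fun h => h0 ?_, ⟨p, j, hp, hj, hps, hji, ?_⟩, rfl⟩
    · rw [eq_zero_of_idMap_target h p, comp_zero]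
    · exact hji.eq_zero_of_comp (hps.eq_zero_of_comp hff)
  obtain ⟨I, hI, hIX, hId⟩ := Nat.find_spec hex
  exact ⟨I, hI, hIX, fun I' hI' hIX' => hId.trans_le (Nat.find_min' hex ⟨I', hI', hIX', rfl⟩)⟩

-- Minimality of the image `I` of a square-zero endomorphism forces `I` to embed into a summand `D`
-- of the kernel, and `Ext¹(I, D) ≠ 0` lifts to `Ext¹(D, D)` because `Ext¹` is right exact.
lemma Indecomposable.exists_smaller_selfExtension (hX : Indecomposable X) (hb : ¬IsBrick X) :
    ∃ (D : QuiverRep Q k) (j : VertexMap D X), Indecomposable D ∧ extDim D D ≠ 0 ∧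
      totalDim D < totalDim X ∧ IsHom j ∧ Injective j := by
  obtain ⟨I, hI, ⟨p, j, hp, hj, hps, hji, hpj⟩, hmin⟩ := hX.exists_minimal_squareZeroImage hb
  obtain ⟨K, S, rfl⟩ := exists_kernel hp hps
  have hu : IsHom (S.ret ⊚ j) := S.isHom_ret_comp hj hpj
  have hju := S.incl_ret_comp hpj
  obtain ⟨D, i, r, hD, hi, hr, hri, hiru⟩ := exists_indecomposable_retract
    (LinearMap.ker (compRight (S.ret ⊚ j))) fun hu0 => hI <| hji.eq_zero_of_comp <| by
      rw [comp_idMap, ← hju, show S.ret ⊚ j = 0 from hu0, comp_zero]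
  have hru : r ⊚ S.ret ⊚ j ≠ 0 := fun h => hiru (by
    rw [LinearMap.mem_ker, compRight_apply, comp_assoc, h, comp_zero])
  have hinj := S.injective_of_minimal_squareZeroImage hmin hu hi hr hri hru
  have hextID := hX.extDim_ne_zero_of_retract S hI hi hr hri hD.1
  have hextDD := extDim_le_of_injective (Z := D) (hr.comp hu) hinj
  have hDK := (Injective.of_comp_eq_id hri).totalDim_le
  have hI' := totalDim_pos_iff.mpr hI
  have htd := S.totalDim_add
  exact ⟨D, S.incl ⊚ i, hD, by omega, by omega, S.incl_hom.comp hi,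
    S.injective.comp (.of_comp_eq_id hri)⟩

lemma Indecomposable.exists_selfExtending_brick {X : QuiverRep Q k} (hX : Indecomposable X)
    (hb : ¬IsBrick X) :
    ∃ (U : QuiverRep Q k) (j : VertexMap U X),
      IsBrick U ∧ extDim U U ≠ 0 ∧ IsHom j ∧ Injective j := by
  induction hn : totalDim X using Nat.strong_induction_on generalizing X with | _ n ih
  obtain ⟨D, i, hD, hDD, hlt, hi, hii⟩ := hX.exists_smaller_selfExtension hb
  by_cases hDb : IsBrick D
  · exact ⟨D, i, hDb, hDD, hi, hii⟩
  · obtain ⟨U, j, hU, hUU, hj, hji⟩ := ih _ (hn ▸ hlt) hD hDb rfl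
    exact ⟨U, i ⊚ j, hU, hUU, hi.comp hj, hii.comp hji⟩

end NonBrick

/-! ### Representations with minimal endomorphism ring -/

section MinimalEnd

variable {A B C U V X Y Z : QuiverRep Q k}

namespace ShortExact

/-- Restriction of homomorphisms along the inclusion of a short exact sequence. -/
def restrictHom (S : ShortExact A B C) (Y : QuiverRep Q k) :
    LinearMap.ker (diff B Y) →ₗ[k] LinearMap.ker (diff A Y) :=
  (compRight S.incl).restrict fun _ hf => IsHom.comp hf S.incl_hom

lemma finrank_ker_restrictHom_le (S : ShortExact A B C) (Y : QuiverRep Q k) :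
    Module.finrank k (LinearMap.ker (S.restrictHom Y)) ≤ homDim C Y := by
  let F : LinearMap.ker (S.restrictHom Y) →ₗ[k] LinearMap.ker (diff C Y) :=
    LinearMap.codRestrict _ (compRight S.sec ∘ₗ Submodule.subtype _ ∘ₗ Submodule.subtype _)
      fun f => S.isHom_comp_sec f.1.2 (congrArg Subtype.val f.2)
  refine LinearMap.finrank_le_finrank_of_injective (f := F) fun f g hfg => ?_
  have hsec : f.1.1 ⊚ S.sec = g.1.1 ⊚ S.sec := congrArg Subtype.val hfg
  have h (f : LinearMap.ker (S.restrictHom Y)) : (f.1.1 ⊚ S.sec) ⊚ S.proj = f.1.1 :=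
    S.comp_sec_proj (congrArg Subtype.val f.2)
  exact Subtype.ext (Subtype.ext ((h f).symm.trans (hsec ▸ h g)))

lemma homDim_le_finrank_range_restrictHom_add (S : ShortExact A B C) (Y : QuiverRep Q k) :
    homDim B Y ≤ Module.finrank k (LinearMap.range (S.restrictHom Y)) + homDim C Y :=
  (LinearMap.finrank_range_add_finrank_ker (S.restrictHom Y)).symm.trans_le
    (Nat.add_le_add_left (S.finrank_ker_restrictHom_le Y) _)

lemma homDim_left_le_add (S : ShortExact A B C) (Y : QuiverRep Q k) :
    homDim B Y ≤ homDim A Y + homDim C Y :=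
  (S.homDim_le_finrank_range_restrictHom_add Y).trans
    (Nat.add_le_add_right (Submodule.finrank_le _) _)

lemma homDim_left_lt_add (S : ShortExact A B C) {f : VertexMap A Y} (hf : IsHom f)
    (h : ∀ F : VertexMap B Y, IsHom F → F ⊚ S.incl ≠ f) :
    homDim B Y < homDim A Y + homDim C Y := by
  refine (S.homDim_le_finrank_range_restrictHom_add Y).trans_lt
    (Nat.add_lt_add_right (Submodule.finrank_lt fun htop => ?_) _)
  obtain ⟨F, hF⟩ := LinearMap.range_eq_top.mp htop ⟨f, hf⟩
  exact h F.1 F.2 (congrArg Subtype.val hF)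

lemma homDim_right_le_add (S : ShortExact A B C) (Y : QuiverRep Q k) :
    homDim Y B ≤ homDim Y A + homDim Y C := by
  let G : LinearMap.ker (diff Y B) →ₗ[k] LinearMap.ker (diff Y C) :=
    (compLeft S.proj).restrict fun _ hf => S.proj_hom.comp hf
  let F : LinearMap.ker G →ₗ[k] LinearMap.ker (diff Y A) :=
    LinearMap.codRestrict _ (compLeft S.ret ∘ₗ Submodule.subtype _ ∘ₗ Submodule.subtype _)
      fun f => S.isHom_ret_comp f.1.2 (congrArg Subtype.val f.2)
  have hker : Module.finrank k (LinearMap.ker G) ≤ homDim Y A := by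
    refine LinearMap.finrank_le_finrank_of_injective (f := F) fun f g hfg => ?_
    have hret : S.ret ⊚ f.1.1 = S.ret ⊚ g.1.1 := congrArg Subtype.val hfg
    have h (f : LinearMap.ker G) : S.incl ⊚ S.ret ⊚ f.1.1 = f.1.1 :=
      S.incl_ret_comp (congrArg Subtype.val f.2)
    exact Subtype.ext (Subtype.ext ((h f).symm.trans (hret ▸ h g)))
  have hrange : Module.finrank k (LinearMap.range G) ≤ homDim Y C := Submodule.finrank_le _
  have hsum : _ = homDim Y B := LinearMap.finrank_range_add_finrank_ker G
  omega

lemma add_homDim_right_le (S : ShortExact A B C) (hs : IsHom S.sec) (Y : QuiverRep Q k) :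
    homDim Y A + homDim Y C ≤ homDim Y B := by
  let F : LinearMap.ker (diff Y A) × LinearMap.ker (diff Y C) →ₗ[k] LinearMap.ker (diff Y B) :=
    LinearMap.coprod ((compLeft S.incl).restrict fun _ hf => S.incl_hom.comp hf)
      ((compLeft S.sec).restrict fun _ hf => hs.comp hf)
  have hF : Function.Injective F := by
    rw [← LinearMap.ker_eq_bot, LinearMap.ker_eq_bot']
    rintro ⟨f, g⟩ h
    have h : S.incl ⊚ f.1 + S.sec ⊚ g.1 = 0 := congrArg Subtype.val h
    have hf := congrArg (S.ret ⊚ ·) h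
    have hg := congrArg (S.proj ⊚ ·) h
    simp only [comp_add, ← comp_assoc, S.ret_incl, S.ret_sec, S.proj_sec, S.proj_incl, idMap_comp,
      zero_comp, add_zero, zero_add, comp_zero] at hf hg
    exact Prod.ext (Subtype.ext hf) (Subtype.ext hg)
  simpa only [homDim, Module.finrank_prod] using LinearMap.finrank_le_finrank_of_injective hF

lemma add_homDim_left_le (S : ShortExact A B C) (hr : IsHom S.ret) (Y : QuiverRep Q k) :
    homDim A Y + homDim C Y ≤ homDim B Y := by
  let F : LinearMap.ker (diff A Y) × LinearMap.ker (diff C Y) →ₗ[k] LinearMap.ker (diff B Y) :=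
    LinearMap.coprod ((compRight S.ret).restrict fun _ hf => IsHom.comp hf hr)
      ((compRight S.proj).restrict fun _ hf => IsHom.comp hf S.proj_hom)
  have hF : Function.Injective F := by
    rw [← LinearMap.ker_eq_bot, LinearMap.ker_eq_bot']
    rintro ⟨f, g⟩ h
    have h : f.1 ⊚ S.ret + g.1 ⊚ S.proj = 0 := congrArg Subtype.val h
    have hf := congrArg (· ⊚ S.incl) h
    have hg := congrArg (· ⊚ S.sec) h
    simp only [add_comp, comp_assoc, S.ret_incl, S.ret_sec, S.proj_sec, S.proj_incl, comp_idMap,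
      comp_zero, zero_comp, add_zero, zero_add] at hf hg
    exact Prod.ext (Subtype.ext hf) (Subtype.ext hg)
  simpa only [homDim, Module.finrank_prod] using LinearMap.finrank_le_finrank_of_injective hF

lemma homDim_self_lt_of_nonSplit (S : ShortExact U X V) (hs : IsHom S.sec) (hr : IsHom S.ret)
    (T : ShortExact U Z V) (hT : NonSplit T.cocycle) : homDim Z Z < homDim X X := by
  have hlt : homDim Z U < homDim U U + homDim V U := by
    refine T.homDim_left_lt_add (isHom_idMap U) fun F hF h => hT (F ⊚ T.sec) ?_
    rw [T.diff_of_extension hF, h, idMap_postcomp]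
  have := T.homDim_right_le_add Z
  have := T.homDim_left_le_add V
  have := S.add_homDim_right_le hs X
  have := S.add_homDim_left_le hr U
  have := S.add_homDim_left_le hr V
  omega

end ShortExact

/-- `X` has an endomorphism ring of least dimension among the representations of its dimension
vector; equivalently, the isomorphism class of `X` is an orbit of greatest dimension. -/
def MinimalEnd (X : QuiverRep Q k) : Prop :=
  ∀ Y : QuiverRep Q k, dimVec Y = dimVec X → homDim X X ≤ homDim Y Y

lemma exists_dimVec_eq (k : Type) [Field k] {α : Q.V → ℤ} (h : ∀ i, 0 ≤ α i) :
    ∃ X : QuiverRep Q k, dimVec X = α :=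
  ⟨{ space := fun i => Fin (α i).toNat → k, map := 0 }, funext fun i => by simp [dimVec, h i]⟩

lemma exists_minimalEnd (k : Type) [Field k] {α : Q.V → ℤ} (h : ∀ i, 0 ≤ α i) :
    ∃ X : QuiverRep Q k, dimVec X = α ∧ MinimalEnd X := by
  have : Nonempty {X : QuiverRep Q k // dimVec X = α} := nonempty_subtype.mpr (exists_dimVec_eq k h)
  let X := Function.argmin fun X : {X : QuiverRep Q k // dimVec X = α} => homDim X.1 X.1
  exact ⟨X.1, X.2, fun Y hY => Function.argmin_le
    (fun X : {X : QuiverRep Q k // dimVec X = α} => homDim X.1 X.1) ⟨Y, hY.trans X.2⟩⟩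

lemma MinimalEnd.extDim_eq_zero (h : MinimalEnd X) (S : ShortExact U X V) (hs : IsHom S.sec)
    (hr : IsHom S.ret) : extDim V U = 0 := by
  by_contra h0
  obtain ⟨z, hz⟩ := exists_nonSplit h0
  refine (S.homDim_self_lt_of_nonSplit hs hr (extension U V z) ?_).not_ge (h _ ?_)
  · rwa [extension_cocycle]
  · rw [S.dimVec_add, (extension U V z).dimVec_add]

end MinimalEnd

end QuiverRep

/-! ### Pencils of linear maps -/

section Pencil

variable {k U V W : Type*} [Field k] [AddCommGroup U] [Module k U] [AddCommGroup V] [Module k V]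
  [AddCommGroup W] [Module k W]

lemma injective_comp_subtype_of_isCompl {M : U →ₗ[k] W} {C : Submodule k U}
    (hC : IsCompl (LinearMap.ker M) C) : Function.Injective (M ∘ₗ C.subtype) :=
  (injective_iff_map_eq_zero _).mpr fun v hv =>
    Subtype.ext (Submodule.disjoint_def.mp hC.disjoint v hv v.2)

variable [FiniteDimensional k U]

lemma finite_not_injective_add_smul (M N : U →ₗ[k] W) (hM : Function.Injective M) :
    {t : k | ¬ Function.Injective (M + t • N)}.Finite := by
  obtain ⟨L, hL⟩ := M.exists_leftInverse_of_injective (LinearMap.ker_eq_bot.mpr hM)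
  refine ((Module.End.finite_hasEigenvalue (L ∘ₗ N)).image fun c => -c⁻¹).subset fun t ht => ?_
  obtain ⟨v, hv, hv0⟩ : ∃ v, (M + t • N) v = 0 ∧ v ≠ 0 := by
    simpa [injective_iff_map_eq_zero] using ht
  have hLv : v + t • L (N v) = 0 := by
    simpa [show L (M v) = v from LinearMap.congr_fun hL v] using congrArg L hv
  have ht0 : t ≠ 0 := by
    rintro rfl
    exact hv0 (by simpa using hLv)
  refine ⟨-t⁻¹, Module.End.hasEigenvalue_of_hasEigenvector (x := v)
    ⟨Module.End.mem_eigenspace_iff.mpr ?_, hv0⟩, by simp⟩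
  calc L (N v) = t⁻¹ • t • L (N v) := (inv_smul_smul₀ ht0 _).symm
    _ = -t⁻¹ • v := by rw [eq_neg_of_add_eq_zero_right hLv, smul_neg, neg_smul]

lemma finrank_ker_add_finrank_le (M : U →ₗ[k] W) (B : V →ₗ[k] U)
    (h : Function.Injective (M ∘ₗ B)) :
    Module.finrank k (LinearMap.ker M) + Module.finrank k V ≤ Module.finrank k U := by
  rw [← LinearMap.finrank_range_add_finrank_ker M, add_comm, ← LinearMap.finrank_range_of_inj h]
  exact Nat.add_le_add_right (Submodule.finrank_mono (LinearMap.range_comp_le_range B M)) _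

lemma finite_finrank_ker_lt (M N : U →ₗ[k] W) :
    {t : k | Module.finrank k (LinearMap.ker M) <
      Module.finrank k (LinearMap.ker (M + t • N))}.Finite := by
  obtain ⟨C, hC⟩ := Submodule.exists_isCompl (LinearMap.ker M)
  refine (finite_not_injective_add_smul (M ∘ₗ C.subtype) (N ∘ₗ C.subtype)
    (injective_comp_subtype_of_isCompl hC)).subset fun t ht hinj => ?_
  have hle := finrank_ker_add_finrank_le (M + t • N) C.subtype hinj
  have hlt : Module.finrank k (LinearMap.ker M) < _ := ht
  have hsum := Submodule.finrank_add_eq_of_isCompl hC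
  omega

/- With `C` a complement of `ker M`, the map `(c, x) ↦ (M + s N) (c + x s⁻¹ v)` on `C × k`
degenerates to the injective map `(c, x) ↦ M c + x N v` as `s → 0`. -/
lemma exists_finrank_ker_lt [Infinite k] {M N : U →ₗ[k] W} {v : U} (hv : M v = 0)
    (hNv : N v ∉ LinearMap.range M) :
    ∃ s : k, Module.finrank k (LinearMap.ker (M + s • N)) < Module.finrank k (LinearMap.ker M) := by
  obtain ⟨C, hC⟩ := Submodule.exists_isCompl (LinearMap.ker M)
  let A₀ : C × k →ₗ[k] W := (M ∘ₗ C.subtype).coprod (LinearMap.toSpanSingleton k W (N v))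
  let A₁ : C × k →ₗ[k] W := (N ∘ₗ C.subtype).coprod 0
  have hA₀ : Function.Injective A₀ := by
    rw [injective_iff_map_eq_zero]
    rintro ⟨c, x⟩ h
    have h : M c + x • N v = 0 := by simpa [A₀] using h
    obtain rfl : x = 0 := by
      by_contra hx
      refine hNv ⟨-(x⁻¹ • (c : U)), ?_⟩
      rw [map_neg, map_smul, eq_neg_of_add_eq_zero_left h, smul_neg, neg_neg, inv_smul_smul₀ hx]
    rw [zero_smul, add_zero] at h
    exact Prod.ext ((injective_iff_map_eq_zero _).mp (injective_comp_subtype_of_isCompl hC) c h)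
      rfl
  obtain ⟨s, hs⟩ := ((finite_not_injective_add_smul A₀ A₁ hA₀).union
    (Set.finite_singleton 0)).infinite_compl.nonempty
  obtain ⟨hs, hs0⟩ : Function.Injective (A₀ + s • A₁) ∧ s ≠ 0 := by simpa [and_comm] using hs
  let B : C × k →ₗ[k] U := C.subtype.coprod (LinearMap.toSpanSingleton k U (s⁻¹ • v))
  have hB : (M + s • N) ∘ₗ B = A₀ + s • A₁ := by
    ext <;> simp [A₀, A₁, B, hv, hs0]
  refine ⟨s, ?_⟩
  have hle := finrank_ker_add_finrank_le (M + s • N) B (hB ▸ hs)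
  have hsum := Submodule.finrank_add_eq_of_isCompl hC
  rw [Module.finrank_prod, Module.finrank_self] at hle
  omega

lemma finite_not_map_ker_le_range (M N : U →ₗ[k] W) :
    {t : k | ¬ ∀ v, (M + t • N) v = 0 → N v ∈ LinearMap.range (M + t • N)}.Finite := by
  cases finite_or_infinite k
  · exact Set.toFinite _
  let rk (t : k) : ℕ := Module.finrank k (LinearMap.ker (M + t • N))
  let t₀ : k := Function.argmin rk
  have hshift (t : k) : M + t₀ • N + (t - t₀) • N = M + t • N := by
    rw [add_assoc, ← add_smul, add_sub_cancel]
  refine ((finite_finrank_ker_lt (M + t₀ • N) N).image (· + t₀)).subset fun t ht => ?_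
  refine ⟨t - t₀, ?_, sub_add_cancel t t₀⟩
  obtain ⟨v, hv, hNv⟩ : ∃ v, (M + t • N) v = 0 ∧ N v ∉ LinearMap.range (M + t • N) := by
    simpa only [Set.mem_ofPred_eq, not_forall, exists_prop] using ht
  obtain ⟨s, hs⟩ := exists_finrank_ker_lt hv hNv
  rw [add_assoc, ← add_smul] at hs
  rw [Set.mem_ofPred_eq, hshift]
  exact (Function.argmin_le rk (t + s)).trans_lt hs

end Pencil

/-! ### Affine Euler forms -/

namespace FinQuiver

variable {Q : FinQuiver}

lemma eulerForm_add_left (x y z : Q.V → ℤ) :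
    Q.eulerForm (x + y) z = Q.eulerForm x z + Q.eulerForm y z := by
  simp only [eulerForm, Pi.add_apply, add_mul, Finset.sum_add_distrib]
  ring
lemma eulerForm_add_right (z x y : Q.V → ℤ) :
    Q.eulerForm z (x + y) = Q.eulerForm z x + Q.eulerForm z y := by
  simp only [eulerForm, Pi.add_apply, mul_add, Finset.sum_add_distrib]
  ring
lemma eulerForm_smul_left (m : ℤ) (x z : Q.V → ℤ) :
    Q.eulerForm (m • x) z = m * Q.eulerForm x z := by
  simp only [eulerForm, Pi.smul_apply, smul_eq_mul, mul_sub, Finset.mul_sum, mul_assoc]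
lemma eulerForm_smul_right (m : ℤ) (z x : Q.V → ℤ) :
    Q.eulerForm z (m • x) = m * Q.eulerForm z x := by
  simp only [eulerForm, Pi.smul_apply, smul_eq_mul, mul_sub, Finset.mul_sum, mul_left_comm]
lemma eulerForm_zero_left (z : Q.V → ℤ) : Q.eulerForm 0 z = 0 := by simp [eulerForm]
lemma eulerForm_zero_right (z : Q.V → ℤ) : Q.eulerForm z 0 = 0 := by simp [eulerForm]
lemma eulerForm_sub_left (x y z : Q.V → ℤ) :
    Q.eulerForm (x - y) z = Q.eulerForm x z - Q.eulerForm y z :=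
  map_sub (AddMonoidHom.mk' (Q.eulerForm · z) (eulerForm_add_left · · z)) x y
lemma eulerForm_sub_right (z x y : Q.V → ℤ) :
    Q.eulerForm z (x - y) = Q.eulerForm z x - Q.eulerForm z y :=
  map_sub (AddMonoidHom.mk' (Q.eulerForm z) (eulerForm_add_right z)) x y
lemma eulerForm_sum_left {ι : Type} (s : Finset ι) (f : ι → Q.V → ℤ) (z : Q.V → ℤ) :
    Q.eulerForm (∑ j ∈ s, f j) z = ∑ j ∈ s, Q.eulerForm (f j) z :=
  map_sum (AddMonoidHom.mk' (Q.eulerForm · z) (eulerForm_add_left · · z)) f s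

lemma eulerForm_nonpos_of_mul_eq_zero {x y : Q.V → ℤ} (hx : 0 ≤ x) (hy : 0 ≤ y)
    (hxy : ∀ i, x i * y i = 0) : Q.eulerForm x y ≤ 0 := by
  simp only [eulerForm, hxy, Finset.sum_const_zero, zero_sub, Left.neg_nonpos_iff]
  exact Finset.sum_nonneg fun a _ => mul_nonneg (hx _) (hy _)

/-- The properties of the Euler form of an affine quiver used in the proof; unlike the definition
through connectedness and acyclicity, they are visibly invariant under reversing all arrows. The
vectors in the last two fields are the dimension vectors of the indecomposable projective and
injective representations. -/
structure IsAffine (Q : FinQuiver) (δ : Q.V → ℤ) : Prop where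
  nonempty : Nonempty Q.V
  delta_pos : ∀ i, 0 < δ i
  semidefinite : ∀ x, 0 ≤ Q.eulerForm x x
  radical_iff : ∀ x : Q.V → ℤ,
    (∀ y, Q.eulerForm x y + Q.eulerForm y x = 0) ↔ ∃ m : ℤ, x = m • δ
  exists_projective : ∀ j, ∃ p : Q.V → ℤ, (∀ i, 0 ≤ p i) ∧ ∀ y, Q.eulerForm p y = y j
  exists_injective : ∀ j, ∃ p : Q.V → ℤ, (∀ i, 0 ≤ p i) ∧ ∀ y, Q.eulerForm y p = y j

/-- A real root which has nonzero defect or does not dominate `δ`. These are the real roots whose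
indecomposable representation has no self-extensions. -/
structure IsRigidRoot (Q : FinQuiver) (δ α : Q.V → ℤ) : Prop where
  eulerForm_self : Q.eulerForm α α = 1
  defect_ne_zero_or_lt : Q.eulerForm δ α ≠ 0 ∨ ∃ i, α i < δ i

namespace IsAffine

variable {δ : Q.V → ℤ}

lemma delta_ne_zero (H : Q.IsAffine δ) : δ ≠ 0 := by
  obtain ⟨i⟩ := H.nonempty
  exact fun h => (H.delta_pos i).ne' (congrFun h i)

lemma eulerForm_delta_right (H : Q.IsAffine δ) (y) : Q.eulerForm y δ = -Q.eulerForm δ y :=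
  eq_neg_of_add_eq_zero_right ((H.radical_iff δ).mpr ⟨1, (one_smul ℤ δ).symm⟩ y)
lemma eulerForm_delta_self (H : Q.IsAffine δ) : Q.eulerForm δ δ = 0 :=
  self_eq_neg.mp (H.eulerForm_delta_right δ)

lemma eulerForm_add_smul_delta_self (H : Q.IsAffine δ) (x) (m : ℤ) :
    Q.eulerForm (x + m • δ) (x + m • δ) = Q.eulerForm x x := by
  simp only [eulerForm_add_left, eulerForm_add_right, eulerForm_smul_left, eulerForm_smul_right,
    H.eulerForm_delta_right x, H.eulerForm_delta_self]
  ring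

lemma eq_smul_delta_of_isotropic (H : Q.IsAffine δ) {x} (h : Q.eulerForm x x = 0) :
    ∃ m : ℤ, x = m • δ := by
  rw [← H.radical_iff]
  intro y
  set s := Q.eulerForm x y + Q.eulerForm y x
  have hline (n : ℤ) : 0 ≤ n * s + Q.eulerForm y y := by
    have := H.semidefinite (n • x + y)
    simp only [eulerForm_add_left, eulerForm_add_right, eulerForm_smul_left,
      eulerForm_smul_right, h] at this
    linarith
  by_contra hs
  have hss : 0 < s * s := mul_self_pos.mpr hs
  nlinarith [H.semidefinite y, hline (-(s * (Q.eulerForm y y + 1)))]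

lemma one_le_of_smul_delta_nonneg (H : Q.IsAffine δ) {m : ℤ} (h : ∀ i, 0 ≤ (m • δ) i)
    (hne : m • δ ≠ 0) : 1 ≤ m := by
  obtain ⟨i⟩ := H.nonempty
  have hm : 0 ≤ m := nonneg_of_mul_nonneg_left (h i) (H.delta_pos i)
  have hm0 : m ≠ 0 := by
    rintro rfl
    exact hne (zero_smul ℤ δ)
  omega

lemma exists_eq_smul_delta (H : Q.IsAffine δ) {x : Q.V → ℤ} (hx : ∀ i, 0 ≤ x i) (hx0 : x ≠ 0)
    (h : Q.eulerForm x x = 0) : ∃ m : ℤ, 1 ≤ m ∧ x = m • δ := by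
  obtain ⟨m, rfl⟩ := H.eq_smul_delta_of_isotropic h
  exact ⟨m, H.one_le_of_smul_delta_nonneg hx hx0, rfl⟩

lemma eq_of_eulerForm_left (H : Q.IsAffine δ) {x y : Q.V → ℤ}
    (h : ∀ z, (∀ i, 0 ≤ z i) → Q.eulerForm z x = Q.eulerForm z y) : x = y := by
  funext j
  obtain ⟨p, hp, hpj⟩ := H.exists_projective j
  rw [← hpj x, ← hpj y, h p hp]

lemma eq_zero_of_isotropic_of_mul_eq_zero (H : Q.IsAffine δ) {x y : Q.V → ℤ}
    (hx : Q.eulerForm x x = 0) (hx0 : x ≠ 0) (hxy : ∀ i, x i * y i = 0) : y = 0 := by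
  obtain ⟨m, rfl⟩ := H.eq_smul_delta_of_isotropic hx
  have hm : m ≠ 0 := by
    rintro rfl
    exact hx0 (zero_smul ℤ δ)
  exact funext fun i => (mul_eq_zero.mp (hxy i)).resolve_left
    (mul_ne_zero hm (H.delta_pos i).ne')

lemma nonneg_or_nonpos_of_root (H : Q.IsAffine δ) {x : Q.V → ℤ} (h : Q.eulerForm x x = 1) :
    0 ≤ x ∨ x ≤ 0 := by
  have hdisj (i) : x⁺ i * x⁻ i = 0 := by
    rcases le_total 0 (x i) with hi | hi <;> simp [hi]
  have hdisj' (i) : x⁻ i * x⁺ i = 0 := mul_comm (x⁺ i) _ ▸ hdisj i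
  have hsplit : Q.eulerForm x x = Q.eulerForm x⁺ x⁺ + Q.eulerForm x⁻ x⁻
      - Q.eulerForm x⁺ x⁻ - Q.eulerForm x⁻ x⁺ := by
    conv_lhs => rw [← posPart_sub_negPart x]
    simp only [eulerForm_sub_left, eulerForm_sub_right]
    ring
  have hpn := eulerForm_nonpos_of_mul_eq_zero (posPart_nonneg x) (negPart_nonneg x) hdisj
  have hnp := eulerForm_nonpos_of_mul_eq_zero (negPart_nonneg x) (posPart_nonneg x) hdisj'
  have hpos := H.semidefinite x⁺
  have hneg := H.semidefinite x⁻
  rw [← negPart_eq_zero, ← posPart_eq_zero]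
  rcases (by omega : Q.eulerForm x⁺ x⁺ = 0 ∨ Q.eulerForm x⁻ x⁻ = 0) with h0 | h0
  · exact or_iff_not_imp_right.mpr fun hx => H.eq_zero_of_isotropic_of_mul_eq_zero h0 hx hdisj
  · exact or_iff_not_imp_left.mpr fun hx => H.eq_zero_of_isotropic_of_mul_eq_zero h0 hx hdisj'

lemma exists_add_smul_delta (H : Q.IsAffine δ) (x : Q.V → ℤ) :
    ∃ m : ℤ, (∀ i, 0 ≤ (x + m • δ) i) ∧ ∃ i, (x + m • δ) i < δ i := by
  have := H.nonempty
  obtain ⟨i, -, hi⟩ := Finset.exists_min_image Finset.univ (fun j => x j / δ j)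
    Finset.univ_nonempty
  refine ⟨-(x i / δ i), fun j => ?_, i, ?_⟩ <;>
    simp only [Pi.add_apply, Pi.smul_apply, smul_eq_mul]
  · nlinarith [hi j (Finset.mem_univ j), H.delta_pos j,
      Int.ediv_mul_le (x j) (H.delta_pos j).ne']
  · linarith [Int.emod_lt_of_pos (x i) (H.delta_pos i), Int.emod_def (x i) (δ i),
      mul_comm (x i / δ i) (δ i)]

lemma ne_smul_delta_add (H : Q.IsAffine δ) {α v : Q.V → ℤ} (hα : Q.IsRigidRoot δ α) {m : ℤ}
    (hm : 1 ≤ m) (hv : ∀ i, 0 ≤ v i) (hdefect : Q.eulerForm δ v = 0) : α ≠ m • δ + v := by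
  rintro rfl
  rcases hα.defect_ne_zero_or_lt with h | ⟨i, hi⟩
  · rw [eulerForm_add_right, eulerForm_smul_right, H.eulerForm_delta_self, hdefect] at h
    exact h (by ring)
  · rw [Pi.add_apply, Pi.smul_apply, smul_eq_mul] at hi
    nlinarith [hv i, H.delta_pos i]

lemma eulerForm_self_pos_of_summand (H : Q.IsAffine δ) {u v : Q.V → ℤ}
    (hα : Q.IsRigidRoot δ (u + v)) (hu : ∀ i, 0 ≤ u i) (hv : ∀ i, 0 ≤ v i) (hu0 : u ≠ 0)
    (huv : 0 ≤ Q.eulerForm u v) (hvu : 0 ≤ Q.eulerForm v u) : 0 < Q.eulerForm u u := by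
  refine (H.semidefinite u).lt_of_ne' fun h => ?_
  obtain ⟨m, hm, rfl⟩ := H.exists_eq_smul_delta hu hu0 h
  rw [eulerForm_smul_left] at huv
  rw [eulerForm_smul_right, H.eulerForm_delta_right] at hvu
  exact H.ne_smul_delta_add hα hm hv (by nlinarith) rfl

end IsAffine

end FinQuiver

namespace QuiverRep

open FinQuiver

variable {Q : FinQuiver} {δ : Q.V → ℤ} {k : Type} [Field k] {X : QuiverRep Q k}

lemma MinimalEnd.exists_decomposition (hm : MinimalEnd X) (h0 : idMap X ≠ 0)
    (hX : ¬ Indecomposable X) :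
    ∃ u v : Q.V → ℤ, (∀ i, 0 ≤ u i) ∧ (∀ i, 0 ≤ v i) ∧ u ≠ 0 ∧ v ≠ 0 ∧ dimVec X = u + v ∧
      0 ≤ Q.eulerForm u v ∧ 0 ≤ Q.eulerForm v u := by
  obtain ⟨U, V, S, hs, hr, hU, hV⟩ := exists_splitting_of_not_indecomposable h0 hX
  have hVU := hm.extDim_eq_zero S hs hr
  have hUV := hm.extDim_eq_zero (S.swap hs hr) S.incl_hom S.proj_hom
  refine ⟨dimVec U, dimVec V, dimVec_nonneg U, dimVec_nonneg V, dimVec_eq_zero_iff.not.mpr hU,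
    dimVec_eq_zero_iff.not.mpr hV, S.dimVec_add, ?_, ?_⟩
  · rw [← homDim_sub_extDim, hUV]
    simp
  · rw [← homDim_sub_extDim, hVU]
    simp

lemma exists_indecomposable_of_isRigidRoot (H : Q.IsAffine δ) (k : Type) [Field k]
    {α : Q.V → ℤ} (hα : ∀ i, 0 ≤ α i) (hr : Q.IsRigidRoot δ α) :
    ∃ X : QuiverRep Q k, dimVec X = α ∧ Indecomposable X := by
  obtain ⟨X, rfl, hm⟩ := exists_minimalEnd k hα
  have hX0 : dimVec X ≠ 0 := fun h => by simpa [h, eulerForm_zero_left] using hr.eulerForm_self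
  refine ⟨X, rfl, by_contra fun hX => ?_⟩
  obtain ⟨u, v, hu, hv, hu0, hv0, huv, huv', hvu'⟩ :=
    hm.exists_decomposition (dimVec_eq_zero_iff.not.mp hX0) hX
  rw [huv] at hr
  have hqu := H.eulerForm_self_pos_of_summand hr hu hv hu0 huv' hvu'
  have hqv := H.eulerForm_self_pos_of_summand (add_comm u v ▸ hr) hv hu hv0 hvu' huv'
  have hq := hr.eulerForm_self
  simp only [eulerForm_add_left, eulerForm_add_right] at hq
  omega

lemma exists_indecomposable_dimVec_delta (H : Q.IsAffine δ) (k : Type) [Field k] :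
    ∃ X : QuiverRep Q k, dimVec X = δ ∧ Indecomposable X := by
  obtain ⟨X, hX, hmin⟩ := exists_minimalEnd k fun i => (H.delta_pos i).le
  refine ⟨X, hX, by_contra fun hind => ?_⟩
  obtain ⟨u, v, hu, hv, hu0, hv0, huv, huv', hvu'⟩ := hmin.exists_decomposition
    (dimVec_eq_zero_iff.not.mp (hX ▸ H.delta_ne_zero)) hind
  rw [hX] at huv
  have hq : Q.eulerForm (u + v) (u + v) = 0 := huv ▸ H.eulerForm_delta_self
  simp only [eulerForm_add_left, eulerForm_add_right] at hq
  have hqu := H.semidefinite u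
  have hqv := H.semidefinite v
  obtain ⟨m, hm, rfl⟩ := H.exists_eq_smul_delta hu hu0 (by omega)
  obtain ⟨n, hn, rfl⟩ := H.exists_eq_smul_delta hv hv0 (by omega)
  obtain ⟨i⟩ := H.nonempty
  have hi := congrFun huv i
  simp only [Pi.add_apply, Pi.smul_apply, smul_eq_mul] at hi
  nlinarith [H.delta_pos i]

variable [IsAlgClosed k]

lemma Indecomposable.exists_isotropic_brick (H : Q.IsAffine δ) (hX : Indecomposable X)
    (hb : ¬ IsBrick X) : ∃ (U : QuiverRep Q k) (j : VertexMap U X),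
      IsBrick U ∧ IsHom j ∧ Injective j ∧ ∃ r : ℤ, 1 ≤ r ∧ dimVec U = r • δ := by
  obtain ⟨U, j, hU, hext, hj, hinj⟩ := hX.exists_selfExtending_brick hb
  refine ⟨U, j, hU, hj, hinj, H.exists_eq_smul_delta (dimVec_nonneg U)
    (dimVec_eq_zero_iff.not.mpr hU.idMap_ne_zero) ?_⟩
  have := homDim_sub_extDim U U
  have := H.semidefinite (dimVec U)
  have : homDim U U = 1 := hU
  omega

lemma exists_brick_dimVec_delta (H : Q.IsAffine δ) (k : Type) [Field k] [IsAlgClosed k] :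
    ∃ X : QuiverRep Q k, dimVec X = δ ∧ IsBrick X := by
  obtain ⟨X, hX, hind⟩ := exists_indecomposable_dimVec_delta H k
  refine ⟨X, hX, by_contra fun hb => ?_⟩
  obtain ⟨U, j, hU, hj, hinj, r, hr, hdim⟩ := hind.exists_isotropic_brick H hb
  have hle : totalDim X ≤ totalDim U := by
    zify
    rw [totalDim_eq_sum, totalDim_eq_sum, hX, hdim]
    exact Finset.sum_le_sum fun i _ => le_mul_of_one_le_left (H.delta_pos i).le hr
  exact hb (hU.of_isomorphic (.of_bijective hj hinj (hinj.surjective_of_totalDim_le hle)))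

end QuiverRep

/-! ### Rigidity of bricks -/

namespace QuiverRep

open FinQuiver

section Perturbation

variable {Q : FinQuiver} {k : Type} [Field k] {X Y Z I : QuiverRep Q k}

/-- The representation obtained by moving the arrow maps of `X` along the line in direction `w`. -/
abbrev perturb (X : QuiverRep Q k) (w : ArrowMap X X) (t : k) : QuiverRep Q k :=
  withMaps X (X.map + t • w)

lemma perturb_zero (X : QuiverRep Q k) (t : k) : perturb X 0 t = X := by
  simp [perturb, withMaps]

/-- The derivative of `f ↦ diff (perturb X u t) (perturb Y w t) f` with respect to `t`. -/
def perturbDiff (u : ArrowMap X X) (w : ArrowMap Y Y) : VertexMap X Y →ₗ[k] ArrowMap X Y where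
  toFun f := w ▷ f - f ◁ u
  map_add' f g := by rw [precomp_add, add_postcomp, add_sub_add_comm]
  map_smul' c f := by rw [precomp_smul, smul_postcomp, smul_sub, RingHom.id_apply]

lemma diff_perturb (u : ArrowMap X X) (w : ArrowMap Y Y) (t : k) :
    diff (perturb X u t) (perturb Y w t) = diff X Y + t • perturbDiff u w := by
  refine LinearMap.ext fun f => funext fun a => LinearMap.ext fun v => ?_
  change (Y.map a + t • w a) (f _ v) - f _ ((X.map a + t • u a) v) =
    (Y.map a (f _ v) - f _ (X.map a v)) + t • (w a (f _ v) - f _ (u a v))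
  simp only [LinearMap.add_apply, LinearMap.smul_apply, map_add, map_smul, smul_sub]
  abel

lemma diff_perturb_right (X : QuiverRep Q k) (w : ArrowMap Y Y) (t : k) :
    diff X (perturb Y w t) = diff X Y + t • perturbDiff 0 w := by
  refine LinearMap.ext fun f => funext fun a => LinearMap.ext fun v => ?_
  change (Y.map a + t • w a) (f _ v) - f _ (X.map a v) =
    (Y.map a (f _ v) - f _ (X.map a v)) + t • (w a (f _ v) - f _ ((0 : _ →ₗ[k] _) v))
  simp only [LinearMap.add_apply, LinearMap.smul_apply, LinearMap.zero_apply, map_zero, sub_zero]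
  abel

lemma finite_homDim_lt_perturb (u : ArrowMap X X) (w : ArrowMap Y Y) :
    {t : k | homDim X Y < homDim (perturb X u t) (perturb Y w t)}.Finite := by
  refine (finite_finrank_ker_lt (diff X Y) (perturbDiff u w)).subset fun t ht => ?_
  exact ht.trans_eq (congrArg (fun D => Module.finrank k (LinearMap.ker D)) (diff_perturb u w t))

lemma finite_homDim_lt_perturb_left (u : ArrowMap X X) (Y : QuiverRep Q k) :
    {t : k | homDim X Y < homDim (perturb X u t) Y}.Finite := by
  simpa only [perturb_zero] using finite_homDim_lt_perturb u (0 : ArrowMap Y Y)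

lemma finite_homDim_lt_perturb_right (X : QuiverRep Q k) (w : ArrowMap Y Y) :
    {t : k | homDim X Y < homDim X (perturb Y w t)}.Finite := by
  simpa only [perturb_zero] using finite_homDim_lt_perturb (0 : ArrowMap X X) w

lemma eulerForm_image_eq_one {p : VertexMap X I} {j : VertexMap I Z} (hp : IsHom p)
    (hj : IsHom j) (sp : Surjective p) (ij : Injective j) (hp0 : p ≠ 0) (hj0 : j ≠ 0)
    (hXZ : dimVec X = dimVec Z) (hq : Q.eulerForm (dimVec Z) (dimVec Z) = 1)
    (hXX : homDim X X ≤ 1) (hX : homDim X Z ≤ 1) (hZ : homDim Z X ≤ 1) (hZZ : homDim Z Z ≤ 1) :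
    Q.eulerForm (dimVec Z) (dimVec I) = 1 ∧ Q.eulerForm (dimVec I) (dimVec Z) = 1 ∧
      Q.eulerForm (dimVec I) (dimVec I) = 1 := by
  have hXX' := homDim_sub_extDim X X
  have hZX' := homDim_sub_extDim Z X
  have hZZ' := homDim_sub_extDim Z Z
  have hXI := homDim_sub_extDim X I
  have hIZ := homDim_sub_extDim I Z
  have hII := homDim_sub_extDim I I
  rw [hXZ] at hXX' hZX' hXI
  have hI0 : idMap I ≠ 0 := fun h => hp0 (eq_zero_of_idMap_target h p)
  have := homDim_pos hp hp0
  have := homDim_pos hj hj0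
  have := homDim_pos (isHom_idMap I) hI0
  have := homDim_le_of_injective (X := X) hj ij
  have := homDim_le_of_injective (X := I) hj ij
  have := homDim_le_of_surjective (Z := Z) hp sp
  have := extDim_le_of_surjective (X := X) hp sp
  have := extDim_le_of_surjective (X := Z) hp sp
  have := extDim_le_of_injective (Z := Z) hj ij
  have := extDim_le_of_injective (Z := I) hj ij
  omega

end Perturbation

variable {Q : FinQuiver} {δ α : Q.V → ℤ} {k : Type} [Field k] {X Y Z : QuiverRep Q k}

lemma isomorphic_of_homDim_le_one (H : Q.IsAffine δ) (hα : Q.IsRigidRoot δ α)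
    (hX : dimVec X = α) (hZ : dimVec Z = α) (hXX : homDim X X ≤ 1) (hXZ : homDim X Z ≤ 1)
    (hZX : homDim Z X ≤ 1) (hZZ : homDim Z Z ≤ 1) : Isomorphic X Z := by
  subst hZ
  obtain ⟨f, hf, hf0⟩ := exists_hom_ne_zero (X := X) (Y := Z) fun h => by
    have := homDim_sub_extDim X Z
    rw [hX, hα.eulerForm_self] at this
    omega
  obtain ⟨I, p, j, hp, hj, sp, ij, rfl⟩ := exists_image_factorization hf
  obtain ⟨hZI, hIZ, hII⟩ := eulerForm_image_eq_one hp hj sp ij (right_ne_zero_of_comp hf0)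
    (left_ne_zero_of_comp hf0) hX hα.eulerForm_self hXX hXZ hZX hZZ
  by_cases hI : dimVec Z - dimVec I = 0
  · have hZI : dimVec Z = dimVec I := sub_eq_zero.mp hI
    have ip := sp.injective_of_totalDim_le (totalDim_congr (hX.trans hZI)).le
    have sj := ij.surjective_of_totalDim_le (totalDim_congr hZI).le
    exact .of_bijective hf (ij.comp ip) (sj.comp sp)
  have hisotropic : Q.eulerForm (dimVec Z - dimVec I) (dimVec Z - dimVec I) = 0 := by
    simp only [eulerForm_sub_left, eulerForm_sub_right, hα.eulerForm_self, hZI, hIZ, hII]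
    norm_num
  obtain ⟨m, hm, hsub⟩ := H.exists_eq_smul_delta
    (fun i => sub_nonneg.mpr (ij.dimVec_le i)) hI hisotropic
  have hZ : dimVec Z = m • δ + dimVec I := sub_eq_iff_eq_add.mp hsub
  refine absurd hZ (H.ne_smul_delta_add hα hm (dimVec_nonneg I) ?_)
  rw [hZ, eulerForm_add_left, eulerForm_smul_left, hII] at hZI
  exact (mul_eq_zero.mp (add_eq_right.mp hZI)).resolve_left (by omega)

lemma IsBrick.isomorphic_of_isRigidRoot [Infinite k] (H : Q.IsAffine δ)
    (hα : Q.IsRigidRoot δ α) (hX : dimVec X = α) (hY : dimVec Y = α) (hbX : IsBrick X)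
    (hbY : IsBrick Y) : Isomorphic X Y := by
  obtain ⟨m, hm⟩ := exists_withMaps (hX.trans hY.symm)
  refine Isomorphic.trans ?_ hm
  replace hbY := hbY.of_isomorphic hm.symm
  set Y' := withMaps X m
  let w : ArrowMap X X := m - X.map
  -- The line through `X` and `Y'`; almost all of its points are as rigid as `X` and `Y'`.
  let Z (t : k) : QuiverRep Q k := perturb X w t
  have hZ (t : k) : perturb (X := Y') w (t - 1) = Z t :=
    congrArg (withMaps X) (by rw [sub_smul, one_smul]; simp only [w]; abel)
  have hshift {s : Set k} (hs : s.Finite) : ((fun t : k => t - 1) ⁻¹' s).Finite :=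
    hs.preimage (sub_left_injective.injOn)
  obtain ⟨t, ht⟩ := ((((finite_homDim_lt_perturb_right X w).union
    (finite_homDim_lt_perturb_left w X)).union (finite_homDim_lt_perturb w w)).union
    ((hshift (finite_homDim_lt_perturb_right Y' (Y := Y') w)).union
      (hshift (finite_homDim_lt_perturb_left (X := Y') w Y')))).infinite_compl.nonempty
  simp only [Set.mem_compl_iff, Set.mem_union, Set.mem_preimage, Set.mem_ofPred_eq, not_or,
    not_lt, hZ] at ht
  obtain ⟨⟨⟨hXZ, hZX⟩, hZZ⟩, hYZ, hZY⟩ := ht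
  rw [IsBrick] at hbX hbY
  rw [hbX] at hXZ hZX hZZ
  rw [hbY] at hYZ hZY
  have hdY : dimVec Y' = α := hX
  have hdZ : dimVec (Z t) = α := hX
  exact (isomorphic_of_homDim_le_one H hα hX hdZ hbX.le hXZ hZX hZZ).trans
    (isomorphic_of_homDim_le_one H hα hdY hdZ hbY.le hYZ hZY hZZ).symm

end QuiverRep

/-! ### Stability -/

namespace QuiverRep

open FinQuiver

variable {Q : FinQuiver} {δ : Q.V → ℤ} {k : Type} [Field k] {A B C X Y T : QuiverRep Q k}

lemma ShortExact.eulerForm_right (S : ShortExact A B C) (x : Q.V → ℤ) :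
    Q.eulerForm x (dimVec B) = Q.eulerForm x (dimVec A) + Q.eulerForm x (dimVec C) := by
  rw [S.dimVec_add, eulerForm_add_right]

/-- Semistability with respect to the defect `Q.eulerForm δ`. -/
structure Semistable (δ : Q.V → ℤ) (X : QuiverRep Q k) : Prop where
  defect_eq : Q.eulerForm δ (dimVec X) = 0
  defect_nonpos : ∀ ⦃Y : QuiverRep Q k⦄ ⦃j : VertexMap Y X⦄, IsHom j → Injective j →
    Q.eulerForm δ (dimVec Y) ≤ 0

/-- Stability with respect to the defect `Q.eulerForm δ`. -/
structure Stable (δ : Q.V → ℤ) (X : QuiverRep Q k) : Prop where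
  idMap_ne_zero : idMap X ≠ 0
  defect_eq : Q.eulerForm δ (dimVec X) = 0
  defect_neg : ∀ ⦃Y : QuiverRep Q k⦄ ⦃j : VertexMap Y X⦄, IsHom j → Injective j → idMap Y ≠ 0 →
    ¬Surjective j → Q.eulerForm δ (dimVec Y) < 0

/-- All quotients have nonnegative defect. Unlike semistability, this allows positive defect. -/
def NonnegQuotients (δ : Q.V → ℤ) (X : QuiverRep Q k) : Prop :=
  ∀ ⦃Y : QuiverRep Q k⦄ ⦃p : VertexMap X Y⦄, IsHom p → Surjective p →
    0 ≤ Q.eulerForm δ (dimVec Y)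

lemma Stable.semistable (h : Stable δ X) : Semistable δ X := by
  refine ⟨h.defect_eq, fun Y j hj ij => ?_⟩
  by_cases h0 : idMap Y = 0
  · rw [dimVec_eq_zero_iff.mpr h0, eulerForm_zero_right]
  by_cases hs : Surjective j
  · rw [(Isomorphic.of_bijective hj ij hs).dimVec_eq, h.defect_eq]
  · exact (h.defect_neg hj ij h0 hs).le

lemma Semistable.nonnegQuotients (h : Semistable δ X) : NonnegQuotients δ X := by
  intro Y p hp sp
  obtain ⟨K, S, rfl⟩ := exists_kernel hp sp
  have := h.defect_nonpos S.incl_hom S.injective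
  have := h.defect_eq
  rw [S.eulerForm_right] at this
  omega

lemma Semistable.of_isomorphic (h : Semistable δ X) (hi : Isomorphic X Y) : Semistable δ Y := by
  refine ⟨hi.dimVec_eq ▸ h.defect_eq, fun Z j hj ij => ?_⟩
  obtain ⟨f, g, -, hg, -, hfg⟩ := hi
  exact h.defect_nonpos (hg.comp hj) ((Injective.of_comp_eq_id hfg).comp ij)

lemma Stable.of_isomorphic (h : Stable δ X) (hi : Isomorphic X Y) : Stable δ Y := by
  refine ⟨?_, hi.dimVec_eq ▸ h.defect_eq, fun Z j hj ij hZ hs => ?_⟩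
  · rw [Ne, ← dimVec_eq_zero_iff, ← hi.dimVec_eq, dimVec_eq_zero_iff]
    exact h.idMap_ne_zero
  obtain ⟨f, g, -, hg, -, hfg⟩ := hi
  refine h.defect_neg (hg.comp hj) ((Injective.of_comp_eq_id hfg).comp ij) hZ fun hs' => hs ?_
  have hfgj : f ⊚ (g ⊚ j) = j := by rw [← comp_assoc, hfg, idMap_comp]
  exact hfgj ▸ (Surjective.of_comp_eq_id hfg).comp hs'

lemma NonnegQuotients.surjective_of_ne_zero (hA : NonnegQuotients δ A) (hT : Stable δ T)
    {f : VertexMap A T} (hf : IsHom f) (h0 : f ≠ 0) : Surjective f := by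
  obtain ⟨I, p, j, hp, hj, sp, ij, rfl⟩ := exists_image_factorization hf
  have hI0 : idMap I ≠ 0 := fun h => h0 (by rw [eq_zero_of_idMap_target h p, comp_zero])
  refine Surjective.comp (by_contra fun hs => ?_) sp
  exact (hA hp sp).not_gt (hT.defect_neg hj ij hI0 hs)

lemma Stable.injective_of_ne_zero (hT : Stable δ T) (hX : Semistable δ X) {f : VertexMap T X}
    (hf : IsHom f) (h0 : f ≠ 0) : Injective f := by
  obtain ⟨I, p, j, hp, hj, sp, ij, rfl⟩ := exists_image_factorization hf
  obtain ⟨K, S, rfl⟩ := exists_kernel hp sp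
  refine ij.comp (sp.injective_of_totalDim_le ?_)
  suffices hK : idMap K = 0 by
    rw [S.totalDim_add, totalDim_eq_zero_iff.mpr hK, zero_add]
  by_contra hK
  have hincl : ¬Surjective S.incl := fun hs =>
    right_ne_zero_of_comp h0 (hs.eq_zero_of_comp S.proj_incl)
  have := hT.defect_neg S.incl_hom S.injective hK hincl
  have := hX.defect_nonpos hj ij
  have := hT.defect_eq
  rw [S.eulerForm_right] at this
  omega

lemma Stable.isomorphic_of_ne_zero (hX : Stable δ X) (hY : Stable δ Y) {f : VertexMap X Y}
    (hf : IsHom f) (h0 : f ≠ 0) : Isomorphic X Y :=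
  .of_bijective hf (hX.injective_of_ne_zero hY.semistable hf h0)
    (hX.semistable.nonnegQuotients.surjective_of_ne_zero hY hf h0)

lemma Stable.isBrick [IsAlgClosed k] (hX : Stable δ X) : IsBrick X := by
  refine (isBrick_iff hX.idMap_ne_zero).mpr fun f hf => ?_
  obtain ⟨c, hc⟩ := exists_not_injective_sub_smul hX.idMap_ne_zero f
  refine ⟨c, sub_eq_zero.mp (by_contra fun h0 => hc ?_)⟩
  exact hX.injective_of_ne_zero hX.semistable (hf.sub ((isHom_idMap X).smul c)) h0

lemma IsBrick.semistable (H : Q.IsAffine δ) {r : ℤ} (hr : 1 ≤ r) (hX : dimVec X = r • δ)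
    (hb : IsBrick X) : Semistable δ X := by
  refine ⟨by rw [hX, eulerForm_smul_right, H.eulerForm_delta_self, mul_zero],
    fun Y j hj ij => ?_⟩
  by_cases h0 : idMap Y = 0
  · rw [dimVec_eq_zero_iff.mpr h0, eulerForm_zero_right]
  have hhom := homDim_pos hj (ij.ne_zero h0)
  have hext := extDim_le_of_injective (Z := X) hj ij
  have hYX := homDim_sub_extDim Y X
  have hXX := homDim_sub_extDim X X
  rw [hX, eulerForm_smul_left, eulerForm_smul_right, H.eulerForm_delta_self] at hXX
  rw [hX, eulerForm_smul_right, H.eulerForm_delta_right] at hYX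
  rw [IsBrick] at hb
  nlinarith

lemma Semistable.of_shortExact (hX : Semistable δ X) (S : ShortExact A X C)
    (hA : 0 ≤ Q.eulerForm δ (dimVec A)) : Semistable δ A ∧ Semistable δ C := by
  have hA0 := (hX.defect_nonpos S.incl_hom S.injective).antisymm hA
  have hC0 : Q.eulerForm δ (dimVec C) = 0 := by
    have := hX.defect_eq
    rwa [S.eulerForm_right, hA0, zero_add] at this
  refine ⟨⟨hA0, fun _ _ hj ij => hX.defect_nonpos (S.incl_hom.comp hj) (S.injective.comp ij)⟩,
    ⟨hC0, fun _ _ hj ij => ?_⟩⟩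
  obtain ⟨D, S', -⟩ := exists_cokernel hj ij
  have := hX.nonnegQuotients (S'.proj_hom.comp S.proj_hom) (S'.surjective.comp S.surjective)
  rw [S'.eulerForm_right] at hC0
  omega

lemma Semistable.exists_shortExact_of_not_stable (hX : Semistable δ X) (h0 : idMap X ≠ 0)
    (hs : ¬Stable δ X) : ∃ (A C : QuiverRep Q k) (_ : ShortExact A X C),
      totalDim A < totalDim X ∧ totalDim C < totalDim X ∧ idMap A ≠ 0 ∧ idMap C ≠ 0 ∧
      Semistable δ A ∧ Semistable δ C := by
  obtain ⟨A, i, hi, ii, hA0, his, hA⟩ : ∃ (A : QuiverRep Q k) (i : VertexMap A X), IsHom i ∧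
      Injective i ∧ idMap A ≠ 0 ∧ ¬Surjective i ∧ 0 ≤ Q.eulerForm δ (dimVec A) := by
    by_contra! hn
    exact hs ⟨h0, hX.defect_eq, fun _ _ hj ij hY hsj => hn _ _ hj ij hY hsj⟩
  obtain ⟨C, S, rfl⟩ := exists_cokernel hi ii
  have hAX : totalDim A < totalDim X := not_le.mp fun h => his (ii.surjective_of_totalDim_le h)
  have hdim := S.totalDim_add
  have := totalDim_pos_iff.mpr hA0
  exact ⟨A, C, S, hAX, by omega, hA0, totalDim_pos_iff.mp (by omega), hX.of_shortExact S hA⟩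

lemma Semistable.exists_stable_subobject (hX : Semistable δ X) (h0 : idMap X ≠ 0) :
    ∃ (Y : QuiverRep Q k) (j : VertexMap Y X), IsHom j ∧ Injective j ∧ Stable δ Y := by
  induction hn : totalDim X using Nat.strong_induction_on generalizing X with
  | h n ih =>
  subst hn
  by_cases hs : Stable δ X
  · exact ⟨X, idMap X, isHom_idMap X, injective_idMap X, hs⟩
  obtain ⟨A, C, S, hAX, -, hA0, -, hA, -⟩ := hX.exists_shortExact_of_not_stable h0 hs
  obtain ⟨Y, j, hj, ij, hY⟩ := ih _ hAX hA hA0 rfl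
  exact ⟨Y, S.incl ⊚ j, S.incl_hom.comp hj, S.injective.comp ij, hY⟩

lemma Semistable.exists_stable_quotient (hX : Semistable δ X) (h0 : idMap X ≠ 0) :
    ∃ (Y : QuiverRep Q k) (p : VertexMap X Y), IsHom p ∧ Surjective p ∧ Stable δ Y := by
  induction hn : totalDim X using Nat.strong_induction_on generalizing X with
  | h n ih =>
  subst hn
  by_cases hs : Stable δ X
  · exact ⟨X, idMap X, isHom_idMap X, surjective_idMap X, hs⟩
  obtain ⟨A, C, S, -, hCX, -, hC0, -, hC⟩ := hX.exists_shortExact_of_not_stable h0 hs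
  obtain ⟨Y, p, hp, sp, hY⟩ := ih _ hCX hC hC0 rfl
  exact ⟨Y, p ⊚ S.proj, hp.comp S.proj_hom, sp.comp S.surjective, hY⟩

lemma NonnegQuotients.of_shortExact (hA : NonnegQuotients δ A) (S : ShortExact B A C)
    (hC : Q.eulerForm δ (dimVec C) = 0) : NonnegQuotients δ B := by
  intro Y p hp sp
  obtain ⟨N, S', rfl⟩ := exists_kernel hp sp
  obtain ⟨P, S'', -⟩ := exists_cokernel (S.incl_hom.comp S'.incl_hom)
    (S.injective.comp S'.injective)
  have hP := hA S''.proj_hom S''.surjective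
  have hNP := S''.eulerForm_right δ
  rw [S.eulerForm_right, S'.eulerForm_right, hC] at hNP
  omega

end QuiverRep

/-! ### A line of stable representations -/

namespace QuiverRep

open FinQuiver

variable {Q : FinQuiver} {δ : Q.V → ℤ} {k : Type} [Field k] {A X T : QuiverRep Q k}

/-- `X` is a brick whose first-order deformation in direction `z` is nontrivial. -/
def IsTransverse (z : ArrowMap X X) : Prop := IsBrick X ∧ NonSplit z

lemma isTransverse_iff (h0 : idMap X ≠ 0) {z : ArrowMap X X} :
    IsTransverse z ↔ Module.finrank k (LinearMap.ker
      ((diff X X).coprod (LinearMap.toSpanSingleton k (ArrowMap X X) z))) ≤ 1 := by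
  have hmem (f : VertexMap X X) (c : k) : (f, c) ∈ LinearMap.ker ((diff X X).coprod
      (LinearMap.toSpanSingleton k (ArrowMap X X) z)) ↔ diff X X f + c • z = 0 := by
    simp
  have hid : (idMap X, (0 : k)) ∈ LinearMap.ker ((diff X X).coprod
      (LinearMap.toSpanSingleton k (ArrowMap X X) z)) := by
    rw [hmem, zero_smul, add_zero]
    exact isHom_idMap X
  rw [finrank_le_one_iff]
  refine ⟨?_, ?_⟩
  · rintro ⟨hb, hz⟩
    refine ⟨⟨_, hid⟩, ?_⟩
    rintro ⟨⟨f, s⟩, hfs⟩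
    rw [hmem] at hfs
    have hs : s = 0 := by
      by_contra hs
      refine hz (-(s⁻¹ • f)) ?_
      rw [map_neg, map_smul, eq_neg_of_add_eq_zero_left hfs, smul_neg, inv_smul_smul₀ hs, neg_neg]
    subst hs
    rw [zero_smul, add_zero] at hfs
    obtain ⟨c, rfl⟩ := hb.eq_smul_idMap hfs
    exact ⟨c, Subtype.ext (Prod.ext rfl (smul_zero c))⟩
  · rintro ⟨v, hv⟩
    obtain ⟨c, hc⟩ := hv ⟨_, hid⟩
    have hcv : c • v.1 = (idMap X, 0) := congrArg Subtype.val hc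
    have hc0 : c ≠ 0 := by
      rintro rfl
      exact h0 (congrArg Prod.fst hcv |>.symm.trans (zero_smul k v.1.1))
    have hspan (f : VertexMap X X) (s : k) (hf : diff X X f + s • z = 0) :
        s = 0 ∧ ∃ b : k, f = b • idMap X := by
      obtain ⟨d, hd⟩ := hv ⟨(f, s), (hmem f s).mpr hf⟩
      have hfs : (f, s) = (d * c⁻¹) • (idMap X, (0 : k)) := by
        rw [← hcv, mul_smul, inv_smul_smul₀ hc0]
        exact (congrArg Subtype.val hd).symm
      exact ⟨by simpa using congrArg Prod.snd hfs, _, congrArg Prod.fst hfs⟩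
    refine ⟨(isBrick_iff h0).mpr fun f hf => (hspan f 0 ?_).2, fun f hf => ?_⟩
    · rw [zero_smul, add_zero, hf]
    · exact neg_ne_zero.mpr one_ne_zero (hspan f (-1) (by rw [hf, neg_one_smul, add_neg_cancel])).1

lemma IsTransverse.finite_not_perturb {z : ArrowMap T T} (hz : IsTransverse z) :
    {t : k | ¬IsTransverse (X := perturb T z t) z}.Finite := by
  have h0 : idMap T ≠ 0 := hz.1.idMap_ne_zero
  refine (finite_finrank_ker_lt
    ((diff T T).coprod (LinearMap.toSpanSingleton k (ArrowMap T T) z))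
    ((perturbDiff z z).coprod 0)).subset fun t ht => ?_
  have ht := not_le.mp (mt (isTransverse_iff (X := perturb T z t) h0).mpr ht)
  have hlin : (diff (perturb T z t) (perturb T z t)).coprod
      (LinearMap.toSpanSingleton k (ArrowMap T T) z) =
      (diff T T).coprod (LinearMap.toSpanSingleton k (ArrowMap T T) z) +
        t • (perturbDiff z z).coprod 0 := by
    rw [diff_perturb]
    refine LinearMap.ext fun v => ?_
    simp only [LinearMap.coprod_apply, LinearMap.add_apply, LinearMap.smul_apply,
      LinearMap.zero_apply, add_zero]
    abel
  exact ((isTransverse_iff h0).mp hz).trans_lt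
    (ht.trans_eq (congrArg (fun D => Module.finrank k (LinearMap.ker D)) hlin))

lemma IsTransverse.nonSplit_precomp (hT : extDim T T = 1) {z : ArrowMap T T}
    (hz : IsTransverse z) {f : VertexMap X T} (hf : IsHom f) (hi : Injective f)
    (hX : extDim X T ≠ 0) : NonSplit (z ▷ f) := by
  intro g hg
  refine hX (extDim_eq_zero_iff.mpr fun w => ?_)
  obtain ⟨r, hr⟩ := hi.exists_retraction
  obtain ⟨c, h, hc⟩ := hz.2.exists_eq_smul_add hT (w ▷ r)
  refine ⟨h ⊚ f + c • g, ?_⟩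
  rw [map_add, map_smul, hg, hf.diff_precomp, ← smul_precomp, ← add_precomp, add_comm, ← hc,
    precomp_precomp, hr, precomp_idMap]

lemma IsTransverse.semistable (H : Q.IsAffine δ) (hT : dimVec T = δ) {z : ArrowMap T T}
    (hz : IsTransverse z) : Semistable δ T :=
  hz.1.semistable H le_rfl (by rw [hT, one_smul])

lemma finite_homDim_perturb_ne_zero (H : Q.IsAffine δ) (hT : dimVec T = δ) (z : ArrowMap T T)
    (hX : Stable δ X) :
    {t : k | IsTransverse (X := perturb T z t) z ∧ homDim X (perturb T z t) ≠ 0}.Finite := by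
  refine (finite_not_map_ker_le_range (diff X T) (perturbDiff 0 z)).subset ?_
  rintro t ⟨hz, hne⟩ hrange
  have hdT : dimVec (perturb T z t) = δ := hT
  rw [← diff_perturb_right] at hrange
  obtain ⟨f, hf, hf0⟩ := exists_hom_ne_zero hne
  obtain ⟨g, hg⟩ := hrange f hf
  have hext : extDim (perturb T z t) (perturb T z t) = 1 := by
    have := homDim_sub_extDim (perturb T z t) (perturb T z t)
    rw [hdT, H.eulerForm_delta_self, hz.1] at this
    omega
  refine hz.nonSplit_precomp hext hf (hX.injective_of_ne_zero (hz.semistable H hdT) hf hf0) ?_ g ?_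
  · have := homDim_sub_extDim X (perturb T z t)
    rw [hdT, H.eulerForm_delta_right, hX.defect_eq] at this
    omega
  · rw [hg]
    exact (congrArg _ (postcomp_zero f)).trans (sub_zero _)

lemma NonnegQuotients.finite_homDim_perturb_ne_zero (H : Q.IsAffine δ) (hT : dimVec T = δ)
    (z : ArrowMap T T) (hA : NonnegQuotients δ A) :
    {t : k | IsTransverse (X := perturb T z t) z ∧ Stable δ (perturb T z t) ∧
      homDim A (perturb T z t) ≠ 0}.Finite := by
  induction hn : totalDim A using Nat.strong_induction_on generalizing A with
  | h n ih =>
  subst hn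
  rcases Set.eq_empty_or_nonempty {t : k | IsTransverse (X := perturb T z t) z ∧
    Stable δ (perturb T z t) ∧ homDim A (perturb T z t) ≠ 0} with hempty | ⟨t, -, hst, hne⟩
  · exact hempty ▸ Set.finite_empty
  obtain ⟨f, hf, hf0⟩ := exists_hom_ne_zero hne
  obtain ⟨K, S, -⟩ := exists_kernel hf (hA.surjective_of_ne_zero hst hf hf0)
  have hlt : totalDim K < totalDim A := by
    have := S.totalDim_add
    have := totalDim_pos_iff.mpr hst.idMap_ne_zero
    omega
  refine ((ih _ hlt (hA.of_shortExact S hst.defect_eq) rfl).union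
    (QuiverRep.finite_homDim_perturb_ne_zero H hT z hst)).subset ?_
  rintro s ⟨hz, hs, hAs⟩
  by_contra! hns
  exact hAs (S.homDim_left_eq_zero (by_contra fun h => hns (.inl ⟨hz, hs, h⟩))
    (by_contra fun h => hns (.inr ⟨hz, h⟩)))

variable [IsAlgClosed k]

lemma Stable.isRigidRoot (H : Q.IsAffine δ) (hX : Stable δ X) (h : ∃ i, dimVec X i < δ i) :
    Q.IsRigidRoot δ (dimVec X) := by
  refine ⟨?_, .inr h⟩
  have hq : Q.eulerForm (dimVec X) (dimVec X) ≠ 0 := fun h0 => by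
    obtain ⟨m, hm, hX⟩ := H.exists_eq_smul_delta (dimVec_nonneg X)
      (dimVec_eq_zero_iff.not.mpr hX.idMap_ne_zero) h0
    obtain ⟨i, hi⟩ := h
    rw [hX, Pi.smul_apply, smul_eq_mul] at hi
    nlinarith [H.delta_pos i]
  have := homDim_sub_extDim X X
  have := H.semidefinite (dimVec X)
  have : homDim X X = 1 := hX.isBrick
  omega

lemma finite_exists_stable_homDim_perturb_ne_zero (H : Q.IsAffine δ) (hT : dimVec T = δ)
    (z : ArrowMap T T) {d : Q.V → ℤ} (hd : ∃ i, d i < δ i) :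
    {t : k | IsTransverse (X := perturb T z t) z ∧
      ∃ X : QuiverRep Q k, Stable δ X ∧ dimVec X = d ∧ homDim X (perturb T z t) ≠ 0}.Finite := by
  by_cases hex : ∃ X : QuiverRep Q k, Stable δ X ∧ dimVec X = d
  · obtain ⟨X, hX, rfl⟩ := hex
    refine (finite_homDim_perturb_ne_zero H hT z hX).subset ?_
    rintro t ⟨hz, Y, hY, hYX, hne⟩
    have hiso := hY.isBrick.isomorphic_of_isRigidRoot H (hX.isRigidRoot H hd) hYX rfl hX.isBrick
    exact ⟨hz, hiso.homDim_left ▸ hne⟩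
  · refine Set.finite_empty.subset ?_
    rintro t ⟨-, X, hX, hd, -⟩
    exact hex ⟨X, hX, hd⟩

lemma finite_not_stable_perturb (H : Q.IsAffine δ) (hT : dimVec T = δ) (z : ArrowMap T T) :
    {t : k | IsTransverse (X := perturb T z t) z ∧ ¬Stable δ (perturb T z t)}.Finite := by
  have hfin : {d : Q.V → ℤ | d ∈ Set.Icc 0 δ ∧ ∃ i, d i < δ i}.Finite :=
    (Set.finite_Icc 0 δ).subset (Set.sep_subset _ _)
  refine (hfin.biUnion
    fun d hd => finite_exists_stable_homDim_perturb_ne_zero H hT z hd.2).subset ?_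
  rintro t ⟨hz, hns⟩
  have hdT : dimVec (perturb T z t) = δ := hT
  obtain ⟨Y, j, hj, ij, hY⟩ :=
    (hz.semistable H hdT).exists_stable_subobject hz.1.idMap_ne_zero
  have hle (i) : dimVec Y i ≤ δ i := (ij.dimVec_le i).trans_eq (congrFun hdT i)
  have hlt : ∃ i, dimVec Y i < δ i := by
    by_contra! hge
    have hdim : dimVec (perturb T z t) = dimVec Y :=
      hdT.trans (funext fun i => (hge i).antisymm (hle i))
    exact hns (hY.of_isomorphic
      (.of_bijective hj ij (ij.surjective_of_totalDim_le (totalDim_congr hdim).le)))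
  exact Set.mem_iUnion₂.mpr ⟨dimVec Y, ⟨⟨dimVec_nonneg Y, hle⟩, hlt⟩, hz, Y, hY, rfl,
    (homDim_pos hj (ij.ne_zero hY.idMap_ne_zero)).ne'⟩

lemma NonnegQuotients.exists_stable_homDim_eq_zero (H : Q.IsAffine δ)
    (hA : NonnegQuotients δ A) :
    ∃ T : QuiverRep Q k, Stable δ T ∧ dimVec T = δ ∧ homDim A T = 0 := by
  obtain ⟨T, hT, hb⟩ := exists_brick_dimVec_delta H k
  obtain ⟨z, hz⟩ : ∃ z : ArrowMap T T, NonSplit z := exists_nonSplit fun h => by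
    have := homDim_sub_extDim T T
    rw [hT, H.eulerForm_delta_self, h, hb] at this
    omega
  have : Infinite k := IsAlgClosed.instInfinite
  obtain ⟨t, ht⟩ := (((IsTransverse.finite_not_perturb ⟨hb, hz⟩).union
    (finite_not_stable_perturb H hT z)).union
    (hA.finite_homDim_perturb_ne_zero H hT z)).infinite_compl.nonempty
  simp only [Set.mem_compl_iff, Set.mem_union, Set.mem_ofPred_eq, not_or, not_not,
    not_and] at ht
  obtain ⟨⟨hz, hst⟩, hA⟩ := ht
  exact ⟨perturb T z t, hst hz, hT, hA hz (hst hz)⟩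

end QuiverRep

/-! ### Serre duality -/

namespace QuiverRep

open FinQuiver

variable {Q : FinQuiver} {δ : Q.V → ℤ} {k : Type} [Field k]
variable {A B C E S T W X Y Z : QuiverRep Q k}

/-- The dual of `Ext¹(E, Y)`, realized as the functionals on arrow maps that vanish on the image
of the differential. -/
abbrev extDual (E Y : QuiverRep Q k) : Submodule k (Module.Dual k (ArrowMap E Y)) :=
  (LinearMap.range (diff E Y)).dualAnnihilator

lemma mem_extDual {ψ : Module.Dual k (ArrowMap E Y)} :
    ψ ∈ extDual E Y ↔ ∀ f, ψ (diff E Y f) = 0 := by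
  rw [Submodule.mem_dualAnnihilator]
  exact Set.forall_mem_range

lemma finrank_extDual (E Y : QuiverRep Q k) :
    Module.finrank k (extDual E Y) = extDim E Y := by
  rw [← (Submodule.dualQuotEquivDualAnnihilator (LinearMap.range (diff E Y))).finrank_eq]
  exact Subspace.dual_finrank_eq

lemma IsHom.comp_mem_extDual {h : VertexMap X Y} (hh : IsHom h)
    {ψ : Module.Dual k (ArrowMap E Y)} (hψ : ψ ∈ extDual E Y) :
    ψ ∘ₗ postcompLinear h ∈ extDual E X :=
  mem_extDual.mpr fun f => by
    rw [LinearMap.comp_apply, postcompLinear_apply, ← hh.diff_postcomp, mem_extDual.mp hψ]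

lemma ShortExact.exists_mem_extDual_right (S : ShortExact A B C)
    {χ : Module.Dual k (ArrowMap E B)} (hχ : χ ∈ extDual E B)
    (h : ∀ w : ArrowMap E A, χ (S.incl ◁ w) = 0) :
    ∃ ψ ∈ extDual E C, χ = ψ ∘ₗ postcompLinear S.proj := by
  refine ⟨χ ∘ₗ postcompLinear S.sec, mem_extDual.mpr fun f => ?_, LinearMap.ext fun w => ?_⟩
  · have hf := mem_extDual.mp hχ (S.sec ⊚ f)
    rwa [diff_comp, map_add, ← S.incl_postcomp_cocycle, ← postcomp_precomp, h, zero_add] at hf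
  · change χ w = χ (S.sec ◁ S.proj ◁ w)
    rw [postcomp_postcomp, S.sec_proj, sub_postcomp, idMap_postcomp, map_sub, ← postcomp_postcomp,
      h, sub_zero]

/-- The connecting homomorphism `g ↦ S.cocycle ▷ g` describes the kernel of
`Ext¹(E, A) → Ext¹(E, B)`. -/
lemma ShortExact.exists_mem_extDual_middle (S : ShortExact A B C)
    {ψ : Module.Dual k (ArrowMap E A)} (hψ : ψ ∈ extDual E A)
    (h : ∀ g : VertexMap E C, IsHom g → ψ (S.cocycle ▷ g) = 0) :
    ∃ χ ∈ extDual E B, ψ = χ ∘ₗ postcompLinear S.incl := by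
  let q := (LinearMap.range (diff E B)).mkQ
  have hker : ψ ∈ (LinearMap.ker (q ∘ₗ postcompLinear S.incl)).dualAnnihilator := by
    rw [Submodule.mem_dualAnnihilator]
    intro w hw
    obtain ⟨g, hg⟩ := (Submodule.Quotient.mk_eq_zero _).mp hw
    rw [S.eq_cocycle_precomp_add hg, map_add, h _ (S.isHom_proj_comp hg), mem_extDual.mp hψ,
      add_zero]
  rw [← LinearMap.range_dualMap_eq_dualAnnihilator_ker] at hker
  obtain ⟨χ, rfl⟩ := hker
  refine ⟨χ ∘ₗ q, mem_extDual.mpr fun f => ?_, rfl⟩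
  have hf : q (diff E B f) = 0 := (Submodule.Quotient.mk_eq_zero _).mpr ⟨f, rfl⟩
  rw [LinearMap.comp_apply, hf, map_zero]

/-- The natural transformation `Hom(-, Y) → D Ext¹(E, -)` defined by `ψ ∈ D Ext¹(E, Y)` is
injective. -/
def IsSeparating (ψ : Module.Dual k (ArrowMap E Y)) : Prop :=
  ∀ ⦃X : QuiverRep Q k⦄ ⦃h : VertexMap X Y⦄, IsHom h → (∀ w : ArrowMap E X, ψ (h ◁ w) = 0) →
    h = 0

lemma exists_quotient_of_not_isSeparating {χ : Module.Dual k (ArrowMap E Y)}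
    (hχ : χ ∈ extDual E Y) (hs : ¬IsSeparating χ) :
    ∃ (Z : QuiverRep Q k) (p : VertexMap Y Z), IsHom p ∧ totalDim Z < totalDim Y ∧
      ∃ ψ ∈ extDual E Z, χ = ψ ∘ₗ postcompLinear p := by
  unfold IsSeparating at hs
  push Not at hs
  obtain ⟨X, h, hh, hχh, h0⟩ := hs
  obtain ⟨I, q, j, -, hj, sq, ij, rfl⟩ := exists_image_factorization hh
  obtain ⟨Z, S, rfl⟩ := exists_cokernel hj ij
  obtain ⟨g, hg⟩ := sq.exists_section
  have hI : 0 < totalDim I :=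
    totalDim_pos_iff.mpr fun hI => h0 (by rw [eq_zero_of_idMap_target hI q, comp_zero])
  refine ⟨Z, S.proj, S.proj_hom, by have := S.totalDim_add; omega,
    S.exists_mem_extDual_right hχ fun w => ?_⟩
  rw [← comp_idMap S.incl, ← hg, ← comp_assoc, ← postcomp_postcomp, hχh]

lemma exists_isSeparating_quotient {χ : Module.Dual k (ArrowMap E Y)} (hχ : χ ∈ extDual E Y) :
    ∃ (Z : QuiverRep Q k) (p : VertexMap Y Z), IsHom p ∧
      ∃ ψ ∈ extDual E Z, IsSeparating ψ ∧ χ = ψ ∘ₗ postcompLinear p := by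
  induction hn : totalDim Y using Nat.strong_induction_on generalizing Y with
  | h n ih =>
  subst hn
  by_cases hs : IsSeparating χ
  · exact ⟨Y, idMap Y, isHom_idMap Y, χ, hχ, hs,
      LinearMap.ext fun w => congrArg χ (idMap_postcomp w).symm⟩
  obtain ⟨Z, p, hp, hlt, ψ, hψ, rfl⟩ := exists_quotient_of_not_isSeparating hχ hs
  obtain ⟨Z', p', hp', ψ', hψ', hs', rfl⟩ := ih _ hlt hψ rfl
  exact ⟨Z', p' ⊚ p, hp'.comp hp, ψ', hψ', hs',
    LinearMap.ext fun w => congrArg ψ' (postcomp_postcomp p' p w)⟩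

/-- The component `Hom(X, Y) → D Ext¹(E, X)` of the natural transformation defined by an element
of `D Ext¹(E, Y)`. -/
def pullback {ψ : Module.Dual k (ArrowMap E Y)} (hψ : ψ ∈ extDual E Y) (X : QuiverRep Q k) :
    LinearMap.ker (diff X Y) →ₗ[k] extDual E X where
  toFun h := ⟨ψ ∘ₗ postcompLinear h.1, IsHom.comp_mem_extDual h.2 hψ⟩
  map_add' h h' := Subtype.ext <| LinearMap.ext fun w => by
    change ψ ((h.1 + h'.1) ◁ w) = ψ (h.1 ◁ w) + ψ (h'.1 ◁ w)
    rw [add_postcomp, map_add]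
  map_smul' c h := Subtype.ext <| LinearMap.ext fun w => by
    change ψ ((c • h.1) ◁ w) = c • ψ (h.1 ◁ w)
    rw [smul_postcomp, map_smul]

lemma IsSeparating.homDim_le {ψ : Module.Dual k (ArrowMap E Y)} (hs : IsSeparating ψ)
    (hψ : ψ ∈ extDual E Y) (X : QuiverRep Q k) : homDim X Y ≤ extDim E X := by
  rw [← finrank_extDual]
  refine LinearMap.finrank_le_finrank_of_injective (f := pullback hψ X) ?_
  rw [injective_iff_map_eq_zero]
  exact fun h hh => Subtype.ext (hs h.2 fun w => congrArg (fun u => u.1 w) hh)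

/-- `W` represents the functor `D Ext¹(E, -)` with universal element `ψ`. -/
structure IsUniversal (ψ : Module.Dual k (ArrowMap E W)) : Prop where
  mem : ψ ∈ extDual E W
  isSeparating : IsSeparating ψ
  exists_hom : ∀ ⦃Y : QuiverRep Q k⦄ ⦃η : Module.Dual k (ArrowMap E Y)⦄, η ∈ extDual E Y →
    ∃ h : VertexMap Y W, IsHom h ∧ η = ψ ∘ₗ postcompLinear h

lemma injective_of_eq_zero_of_comp {f : VertexMap X Y} (hf : IsHom f)
    (h : ∀ (K : QuiverRep Q k) (g : VertexMap K X), IsHom g → f ⊚ g = 0 → g = 0) :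
    Injective f := by
  obtain ⟨I, p, j, hp, -, sp, ij, rfl⟩ := exists_image_factorization hf
  obtain ⟨K, S, rfl⟩ := exists_kernel hp sp
  have hincl : S.incl = 0 := h K S.incl S.incl_hom (by rw [comp_assoc, S.proj_incl, comp_zero])
  have hK : totalDim K = 0 := by
    rw [totalDim_eq_zero_iff, ← S.ret_incl, hincl, comp_zero]
  exact ij.comp (sp.injective_of_totalDim_le (by rw [S.totalDim_add, hK, zero_add]))

/-- Apply the separating quotient to `W ⊕ Y` with the functional `(ψ, η)`: by maximality it is a
copy of `W`, through which `η` then factors. -/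
lemma IsSeparating.isUniversal_of_maximal {ψ : Module.Dual k (ArrowMap E W)}
    (hs : IsSeparating ψ) (hψ : ψ ∈ extDual E W)
    (hmax : ∀ ⦃Z : QuiverRep Q k⦄ ⦃φ : Module.Dual k (ArrowMap E Z)⦄, φ ∈ extDual E Z →
      IsSeparating φ → totalDim Z ≤ totalDim W) : IsUniversal ψ := by
  refine ⟨hψ, hs, fun Y η hη => ?_⟩
  let S := extension W Y 0
  have hsec : IsHom S.sec := by
    rw [IsHom, ← S.incl_postcomp_cocycle, extension_cocycle, postcomp_zero]
  have hret : IsHom S.ret := by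
    rw [IsHom, ← neg_eq_zero, ← S.cocycle_precomp_proj, extension_cocycle, zero_precomp]
  obtain ⟨Z, q, hq, φ, hφ, hsφ, hsum⟩ := exists_isSeparating_quotient
    (add_mem (hret.comp_mem_extDual hψ) (S.proj_hom.comp_mem_extDual hη))
  have happly (w : ArrowMap E (extensionRep W Y 0)) :
      ψ (S.ret ◁ w) + η (S.proj ◁ w) = φ (q ◁ w) := LinearMap.congr_fun hsum w
  have hincl (w) : ψ w = φ ((q ⊚ S.incl) ◁ w) := by
    rw [← postcomp_postcomp, ← happly, postcomp_postcomp, postcomp_postcomp, S.ret_incl,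
      S.proj_incl, idMap_postcomp, zero_postcomp, map_zero, add_zero]
  have hinj : Injective (q ⊚ S.incl) := injective_of_eq_zero_of_comp (hq.comp S.incl_hom)
    fun K g hg hg0 => hs hg fun w => by
      rw [hincl, postcomp_postcomp, hg0, zero_postcomp, map_zero]
  obtain ⟨g, hg, -, hgr⟩ := (hq.comp S.incl_hom).exists_inverse hinj
    (hinj.surjective_of_totalDim_le (hmax hφ hsφ))
  refine ⟨g ⊚ q ⊚ S.sec, hg.comp (hq.comp hsec), LinearMap.ext fun w => ?_⟩
  rw [LinearMap.comp_apply, postcompLinear_apply, hincl, postcomp_postcomp, ← comp_assoc, hgr,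
    idMap_comp, ← postcomp_postcomp, ← happly, postcomp_postcomp, postcomp_postcomp, S.ret_sec,
    S.proj_sec, zero_postcomp, map_zero, idMap_postcomp, zero_add]

lemma exists_forall_totalDim_le_homDim (H : Q.IsAffine δ) (k : Type) [Field k] :
    ∃ X : QuiverRep Q k, ∀ Y : QuiverRep Q k, totalDim Y ≤ homDim X Y := by
  choose p hp hpj using H.exists_projective
  obtain ⟨X, hX⟩ := exists_dimVec_eq k (α := ∑ j, p j) fun i => by
    rw [Finset.sum_apply]
    exact Finset.sum_nonneg fun j _ => hp j i
  refine ⟨X, fun Y => ?_⟩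
  have := homDim_sub_extDim X Y
  simp only [hX, eulerForm_sum_left, hpj, ← totalDim_eq_sum] at this
  omega

lemma exists_isUniversal (H : Q.IsAffine δ) (E : QuiverRep Q k) :
    ∃ (W : QuiverRep Q k) (ψ : Module.Dual k (ArrowMap E W)), IsUniversal ψ := by
  obtain ⟨X, hX⟩ := exists_forall_totalDim_le_homDim H k
  let s : Set ℕ := {n | ∃ (W : QuiverRep Q k) (ψ : Module.Dual k (ArrowMap E W)),
    ψ ∈ extDual E W ∧ IsSeparating ψ ∧ totalDim W = n}
  have hbdd : BddAbove s := by
    refine ⟨extDim E X, ?_⟩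
    rintro n ⟨W, ψ, hψ, hs, rfl⟩
    exact (hX W).trans (hs.homDim_le hψ X)
  have hne : s.Nonempty := by
    obtain ⟨W, -, -, ψ, hψ, hs, -⟩ := exists_isSeparating_quotient (extDual E E).zero_mem
    exact ⟨_, W, ψ, hψ, hs, rfl⟩
  obtain ⟨W, ψ, hψ, hs, hn⟩ := Nat.sSup_mem hne hbdd
  exact ⟨W, ψ, hs.isUniversal_of_maximal hψ fun Z φ hφ hsφ =>
    (le_csSup hbdd ⟨Z, φ, hφ, hsφ, rfl⟩).trans_eq hn.symm⟩

/-- The pairing of `Ext¹(S, W)` with `Hom(E, S)` given by composition and `ψ`. -/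
def extPairing (ψ : Module.Dual k (ArrowMap E W)) (S : QuiverRep Q k) :
    ArrowMap S W →ₗ[k] Module.Dual k (LinearMap.ker (diff E S)) :=
  LinearMap.mk₂ k (fun ξ g => ψ (ξ ▷ g.1))
    (fun ξ ξ' g => by rw [add_precomp, map_add])
    (fun c ξ g => by rw [smul_precomp, map_smul])
    (fun ξ g g' => by rw [Submodule.coe_add, precomp_add, map_add])
    (fun c ξ g => by rw [Submodule.coe_smul, precomp_smul, map_smul])

namespace IsUniversal

variable {ψ : Module.Dual k (ArrowMap E W)}

lemma homDim_eq (hψ : IsUniversal ψ) (Y : QuiverRep Q k) : homDim Y W = extDim E Y := by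
  refine (hψ.isSeparating.homDim_le hψ.mem Y).antisymm ?_
  rw [← finrank_extDual]
  refine LinearMap.finrank_le_finrank_of_surjective (f := pullback hψ.mem Y) fun η => ?_
  obtain ⟨h, hh, hη⟩ := hψ.exists_hom η.2
  exact ⟨⟨h, hh⟩, Subtype.ext hη.symm⟩

lemma ker_extPairing_le (hψ : IsUniversal ψ) (S : QuiverRep Q k) :
    LinearMap.ker (extPairing ψ S) ≤ LinearMap.range (diff S W) := by
  intro ξ hξ
  let T := extension W S ξ
  obtain ⟨χ, hχ, hψχ⟩ := T.exists_mem_extDual_middle hψ.mem fun g hg => by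
    rw [extension_cocycle]
    exact LinearMap.congr_fun hξ ⟨g, hg⟩
  obtain ⟨h, hh, rfl⟩ := hψ.exists_hom hχ
  have hret : h ⊚ T.incl = idMap W := by
    refine sub_eq_zero.mp (hψ.isSeparating ((hh.comp T.incl_hom).sub (isHom_idMap W)) fun w => ?_)
    have hw : ψ w = ψ (h ◁ T.incl ◁ w) := LinearMap.congr_fun hψχ w
    rw [sub_postcomp, map_sub, idMap_postcomp, ← postcomp_postcomp, ← hw, sub_self]
  have := T.diff_of_extension hh
  rw [hret, idMap_postcomp, extension_cocycle] at this
  exact ⟨_, this⟩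

lemma extDim_le (hψ : IsUniversal ψ) (S : QuiverRep Q k) : extDim S W ≤ homDim E S := by
  have := Submodule.finrank_quotient_add_finrank (LinearMap.range (diff S W))
  have := Submodule.finrank_mono (hψ.ker_extPairing_le S)
  have := LinearMap.finrank_range_add_finrank_ker (extPairing ψ S)
  have := Submodule.finrank_le (LinearMap.range (extPairing ψ S))
  rw [Subspace.dual_finrank_eq] at this
  change Module.finrank k (ArrowMap S W ⧸ LinearMap.range (diff S W)) ≤
    Module.finrank k (LinearMap.ker (diff E S))
  omega

end IsUniversal

/-- The numerical form of `W` being the Auslander–Reiten translate of `E`, for an `E` without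
projective summands. -/
structure IsTranslate (E W : QuiverRep Q k) : Prop where
  homDim_eq : ∀ X, homDim X W = extDim E X
  extDim_eq : ∀ X, extDim X W = homDim E X

lemma IsTranslate.eulerForm_eq (h : IsTranslate E W) {x : Q.V → ℤ} (hx : ∀ i, 0 ≤ x i) :
    Q.eulerForm x (dimVec W) = -Q.eulerForm (dimVec E) x := by
  obtain ⟨X, rfl⟩ := exists_dimVec_eq k hx
  rw [← homDim_sub_extDim, ← homDim_sub_extDim, h.homDim_eq, h.extDim_eq, neg_sub]

lemma IsTranslate.defect_eq (H : Q.IsAffine δ) (h : IsTranslate E W) :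
    Q.eulerForm δ (dimVec W) = Q.eulerForm δ (dimVec E) := by
  rw [h.eulerForm_eq fun i => (H.delta_pos i).le, H.eulerForm_delta_right, neg_neg]

/-- The difference `homDim E X - extDim X W` is nonnegative and an additive function of `dimVec X`.
It vanishes at `δ = dimVec T`, hence everywhere. -/
lemma IsUniversal.isTranslate (H : Q.IsAffine δ) {ψ : Module.Dual k (ArrowMap E W)}
    (hψ : IsUniversal ψ) (hT : dimVec T = δ) (hET : homDim E T = 0) : IsTranslate E W := by
  refine ⟨hψ.homDim_eq, fun X => (hψ.extDim_le X).antisymm ?_⟩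
  have hv (Y : QuiverRep Q k) : Q.eulerForm (dimVec Y) (dimVec W) +
      Q.eulerForm (dimVec E) (dimVec Y) = homDim E Y - extDim Y W := by
    rw [← homDim_sub_extDim, ← homDim_sub_extDim, hψ.homDim_eq Y]
    ring
  obtain ⟨Y, hY⟩ := exists_dimVec_eq k (α := (∑ j, dimVec X j) • δ - dimVec X) fun i => by
    have := Finset.single_le_sum (f := dimVec X) (fun j _ => dimVec_nonneg X j) (Finset.mem_univ i)
    have := H.delta_pos i
    have := dimVec_nonneg X i
    simp only [Pi.sub_apply, Pi.smul_apply, smul_eq_mul]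
    nlinarith
  have hX := hv X
  have hY := hY ▸ hv Y
  have hδ := hv T
  have := hψ.extDim_le X
  have := hψ.extDim_le Y
  rw [eulerForm_sub_left, eulerForm_sub_right, eulerForm_smul_left, eulerForm_smul_right] at hY
  rw [hT, hET] at hδ
  have hsum : 0 ≤ ∑ j, dimVec X j := Finset.sum_nonneg fun j _ => dimVec_nonneg X j
  have := mul_nonpos_of_nonneg_of_nonpos hsum (hδ.trans_le (by simp))
  rw [mul_add] at this
  omega

variable [IsAlgClosed k]

lemma NonnegQuotients.exists_isTranslate (H : Q.IsAffine δ) (hE : NonnegQuotients δ E) :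
    ∃ W, IsTranslate E W := by
  obtain ⟨T, -, hT, hET⟩ := hE.exists_stable_homDim_eq_zero H
  obtain ⟨W, ψ, hψ⟩ := exists_isUniversal H E
  exact ⟨W, hψ.isTranslate H hT hET⟩

lemma Stable.extDim_eq_homDim (H : Q.IsAffine δ) (hT : Stable δ T) (hd : dimVec T = δ)
    (A : QuiverRep Q k) : extDim T A = homDim A T := by
  obtain ⟨W, hW⟩ := hT.semistable.nonnegQuotients.exists_isTranslate H
  have hdW : dimVec W = δ := H.eq_of_eulerForm_left fun z hz => by
    rw [hW.eulerForm_eq hz, hd, H.eulerForm_delta_right]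
  have hTT := homDim_sub_extDim T T
  have hTb : homDim T T = 1 := hT.isBrick
  rw [hd, H.eulerForm_delta_self] at hTT
  have hWb : IsBrick W := by rw [IsBrick, hW.homDim_eq, hW.extDim_eq, hTb]
  obtain ⟨f, hf, hf0⟩ := exists_hom_ne_zero (X := T) (Y := W) (by rw [hW.homDim_eq]; omega)
  have hi := hT.injective_of_ne_zero (hWb.semistable H le_rfl (by rw [hdW, one_smul])) hf hf0
  have hs := hi.surjective_of_totalDim_le (totalDim_congr (hdW.trans hd.symm)).le
  rw [(Isomorphic.of_bijective hf hi hs).homDim_right, hW.homDim_eq]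

end QuiverRep

/-! ### The torsion pair defined by the defect -/

namespace QuiverRep

open FinQuiver

variable {Q : FinQuiver} {δ α : Q.V → ℤ} {k : Type} [Field k] {A B C T U X Y : QuiverRep Q k}

/-- All nonzero subrepresentations have negative defect. -/
def NegativeSubs (δ : Q.V → ℤ) (X : QuiverRep Q k) : Prop :=
  ∀ ⦃Y : QuiverRep Q k⦄ ⦃j : VertexMap Y X⦄, IsHom j → Injective j → idMap Y ≠ 0 →
    Q.eulerForm δ (dimVec Y) < 0

lemma NegativeSubs.of_injective (h : NegativeSubs δ X) {j : VertexMap Y X} (hj : IsHom j)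
    (ij : Injective j) : NegativeSubs δ Y :=
  fun _ _ hu iu => h (hj.comp hu) (ij.comp iu)

lemma NegativeSubs.defect_neg (h : NegativeSubs δ X) (h0 : idMap X ≠ 0) :
    Q.eulerForm δ (dimVec X) < 0 :=
  h (isHom_idMap X) (injective_idMap X) h0

lemma NonnegQuotients.of_surjective (h : NonnegQuotients δ X) {p : VertexMap X Y} (hp : IsHom p)
    (sp : Surjective p) : NonnegQuotients δ Y :=
  fun _ _ hq sq => h (hq.comp hp) (sq.comp sp)

lemma NonnegQuotients.semistable (h : NonnegQuotients δ X)
    (hd : Q.eulerForm δ (dimVec X) ≤ 0) : Semistable δ X := by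
  have hX := hd.antisymm (h (isHom_idMap X) (surjective_idMap X))
  refine ⟨hX, fun Y j hj ij => ?_⟩
  obtain ⟨C, S, rfl⟩ := exists_cokernel hj ij
  have := h S.proj_hom S.surjective
  rw [S.eulerForm_right] at hX
  omega

lemma ShortExact.exists_preimage (S : ShortExact A X C) {u : VertexMap U C} (hu : IsHom u)
    (iu : Injective u) : ∃ (P : QuiverRep Q k) (j : VertexMap P X),
      IsHom j ∧ Injective j ∧ dimVec P = dimVec A + dimVec U := by
  obtain ⟨F, SF, rfl⟩ := exists_cokernel hu iu
  obtain ⟨P, SP, -⟩ := exists_kernel (SF.proj_hom.comp S.proj_hom) (SF.surjective.comp S.surjective)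
  refine ⟨P, SP.incl, SP.incl_hom, SP.injective, add_right_cancel (b := dimVec F) ?_⟩
  rw [← SP.dimVec_add, S.dimVec_add, SF.dimVec_add, add_assoc]

lemma exists_lex_max_subobject (δ : Q.V → ℤ) (X : QuiverRep Q k) :
    ∃ (A : QuiverRep Q k) (j : VertexMap A X), IsHom j ∧ Injective j ∧
      ∀ ⦃Y : QuiverRep Q k⦄ ⦃u : VertexMap Y X⦄, IsHom u → Injective u →
        Q.eulerForm δ (dimVec Y) < Q.eulerForm δ (dimVec A) ∨
          Q.eulerForm δ (dimVec Y) = Q.eulerForm δ (dimVec A) ∧ totalDim Y ≤ totalDim A := by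
  let D : Set (Q.V → ℤ) :=
    {d | ∃ (Y : QuiverRep Q k) (j : VertexMap Y X), IsHom j ∧ Injective j ∧ dimVec Y = d}
  have hfin : D.Finite := (Set.finite_Icc 0 (dimVec X)).subset <| by
    rintro d ⟨Y, j, -, ij, rfl⟩
    exact ⟨dimVec_nonneg Y, ij.dimVec_le⟩
  obtain ⟨_, ⟨A, j, hj, ij, rfl⟩, hmax⟩ := Set.exists_max_image D
    (fun d => toLex (Q.eulerForm δ d, ∑ i, d i)) hfin
    ⟨_, X, idMap X, isHom_idMap X, injective_idMap X, rfl⟩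
  refine ⟨A, j, hj, ij, fun Y u hu iu => ?_⟩
  have := Prod.Lex.toLex_le_toLex.mp (hmax _ ⟨Y, u, hu, iu, rfl⟩)
  rwa [← totalDim_eq_sum, ← totalDim_eq_sum, Nat.cast_le] at this

lemma exists_shortExact_nonnegQuotients_negativeSubs (δ : Q.V → ℤ) (X : QuiverRep Q k) :
    ∃ (A C : QuiverRep Q k), Nonempty (ShortExact A X C) ∧
      NonnegQuotients δ A ∧ NegativeSubs δ C := by
  obtain ⟨A, j, hj, ij, hmax⟩ := exists_lex_max_subobject δ X
  obtain ⟨C, S, rfl⟩ := exists_cokernel hj ij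
  refine ⟨A, C, ⟨S⟩, fun G p hp sp => ?_, fun U u hu iu hU => ?_⟩
  · obtain ⟨K, SK, rfl⟩ := exists_kernel hp sp
    have := hmax (S.incl_hom.comp SK.incl_hom) (S.injective.comp SK.injective)
    have := SK.eulerForm_right δ
    omega
  · obtain ⟨P, v, hv, iv, hP⟩ := S.exists_preimage hu iu
    have hlt : totalDim A < totalDim P := by
      have := totalDim_pos_iff.mpr hU
      zify at this ⊢
      rw [totalDim_eq_sum] at this ⊢
      rw [totalDim_eq_sum, hP]
      simpa only [Pi.add_apply, Finset.sum_add_distrib, lt_add_iff_pos_right]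
    have := hmax hv iv
    rw [hP, eulerForm_add_right] at this
    omega

lemma extDim_eq_zero_of_idMap_left (h : idMap B = 0) : extDim B A = 0 :=
  extDim_eq_zero_iff.mpr fun z => ⟨0, by rw [map_zero, ← precomp_idMap z, h, precomp_zero]⟩

lemma Indecomposable.nonSplit_cocycle (hB : Indecomposable B) (S : ShortExact A B C)
    (hA : idMap A ≠ 0) (hC : idMap C ≠ 0) : NonSplit S.cocycle := by
  intro f hf
  obtain ⟨G, hG, hpG⟩ := S.exists_lift (isHom_idMap C) (h := f) (by rw [precomp_idMap, hf])
  have hGp := hB.comp_eq_idMap hG S.proj_hom hpG hC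
  apply hA
  rw [← S.ret_incl, ← idMap_comp S.incl, ← hGp, comp_assoc, S.proj_incl, comp_zero, comp_zero]

variable [IsAlgClosed k]

/-- Since `B` has negative defect it maps nontrivially to `T`, and `Ext¹` from the image of such a
map to `A` vanishes by Serre duality for `T`. -/
lemma NegativeSubs.extDim_eq_zero_of_stable (H : Q.IsAffine δ) (hB : NegativeSubs δ B)
    (hT : Stable δ T) (hd : dimVec T = δ) (hA : homDim A T = 0) : extDim B A = 0 := by
  induction hn : totalDim B using Nat.strong_induction_on generalizing B with
  | h n ih =>
  subst hn
  by_cases h0 : idMap B = 0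
  · exact extDim_eq_zero_of_idMap_left h0
  have hBT := homDim_sub_extDim B T
  rw [hd, H.eulerForm_delta_right] at hBT
  have := hB.defect_neg h0
  obtain ⟨g, hg, hg0⟩ := exists_hom_ne_zero (X := B) (Y := T) (by omega)
  obtain ⟨I, p, j, hp, hj, sp, ij, rfl⟩ := exists_image_factorization hg
  have hI : 0 < totalDim I :=
    totalDim_pos_iff.mpr fun hI => hg0 (by rw [eq_zero_of_idMap_target hI p, comp_zero])
  obtain ⟨K, S, rfl⟩ := exists_kernel hp sp
  have hIA := extDim_le_of_injective (Z := A) hj ij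
  rw [hT.extDim_eq_homDim H hd, hA, Nat.le_zero] at hIA
  have := S.totalDim_add
  exact S.extDim_left_eq_zero (ih _ (by omega) (hB.of_injective S.incl_hom S.injective) rfl) hIA

lemma NegativeSubs.extDim_eq_zero (H : Q.IsAffine δ) (hB : NegativeSubs δ B)
    (hA : NonnegQuotients δ A) : extDim B A = 0 := by
  obtain ⟨T, hT, hd, hAT⟩ := hA.exists_stable_homDim_eq_zero H
  exact hB.extDim_eq_zero_of_stable H hT hd hAT

lemma Indecomposable.nonnegQuotients_or_negativeSubs (H : Q.IsAffine δ) (hX : Indecomposable X) :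
    NonnegQuotients δ X ∨ NegativeSubs δ X := by
  obtain ⟨A, C, ⟨S⟩, hA, hC⟩ := exists_shortExact_nonnegQuotients_negativeSubs δ X
  have := S.totalDim_add
  have h0 : idMap A = 0 ∨ idMap C = 0 := by
    by_contra! h0
    exact (hX.nonSplit_cocycle S h0.1 h0.2).extDim_ne_zero (hC.extDim_eq_zero H hA)
  rcases h0 with h | h <;>
    rw [← totalDim_eq_zero_iff] at h
  · exact .inr (hC.of_injective S.proj_hom (S.surjective.injective_of_totalDim_le (by omega)))
  · exact .inl (hA.of_surjective S.incl_hom (S.injective.surjective_of_totalDim_le (by omega)))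

lemma Indecomposable.semistable (H : Q.IsAffine δ) (hX : Indecomposable X)
    (hd : Q.eulerForm δ (dimVec X) = 0) : Semistable δ X :=
  ((hX.nonnegQuotients_or_negativeSubs H).resolve_right fun h =>
    (h.defect_neg hX.1).ne hd).semistable hd.le

lemma Indecomposable.isBrick_of_defect_neg (H : Q.IsAffine δ) (hX : Indecomposable X)
    (hd : Q.eulerForm δ (dimVec X) < 0) : IsBrick X := by
  have hneg := (hX.nonnegQuotients_or_negativeSubs H).resolve_left fun h =>
    hd.not_ge (h (isHom_idMap X) (surjective_idMap X))
  by_contra hb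
  obtain ⟨U, j, hU, hj, ij, r, -, hr⟩ := hX.exists_isotropic_brick H hb
  have := hneg hj ij hU.idMap_ne_zero
  rw [hr, eulerForm_smul_right, H.eulerForm_delta_self, mul_zero] at this
  exact this.false

lemma Indecomposable.isomorphic_of_defect_neg (H : Q.IsAffine δ) (hα : Q.eulerForm α α = 1)
    (hd : Q.eulerForm δ α < 0) (hX : dimVec X = α) (hY : dimVec Y = α) (iX : Indecomposable X)
    (iY : Indecomposable Y) : Isomorphic X Y := by
  have : Infinite k := IsAlgClosed.instInfinite
  exact (iX.isBrick_of_defect_neg H (hX ▸ hd)).isomorphic_of_isRigidRoot H ⟨hα, .inl hd.ne⟩ hX hY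
    (iY.isBrick_of_defect_neg H (hY ▸ hd))

end QuiverRep

/-! ### The translate of a stable representation -/

namespace QuiverRep

open FinQuiver

variable {Q : FinQuiver} {δ : Q.V → ℤ} {k : Type} [Field k] {A C D E F G W X Y Z : QuiverRep Q k}

lemma NonSplit.postcomp {z : ArrowMap X Y} (h : NonSplit z) (h1 : extDim X Y = 1)
    {q : VertexMap Y Z} (hq : IsHom q) (sq : Surjective q) (hZ : extDim X Z ≠ 0) :
    NonSplit (q ◁ z) := by
  intro f hf
  refine hZ (extDim_eq_zero_iff.mpr fun w => ?_)
  obtain ⟨t, ht⟩ := sq.exists_section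
  obtain ⟨c, g, hg⟩ := h.exists_eq_smul_add h1 (t ◁ w)
  refine ⟨c • f + q ⊚ g, ?_⟩
  rw [map_add, map_smul, hf, hq.diff_postcomp, ← postcomp_smul, ← postcomp_add, ← hg,
    postcomp_postcomp, ht, idMap_postcomp]

lemma ShortExact.semistable (S : ShortExact A X C) (hA : Semistable δ A) (hC : Semistable δ C) :
    Semistable δ X := by
  refine ⟨by rw [S.eulerForm_right, hA.defect_eq, hC.defect_eq, add_zero], fun Y j hj ij => ?_⟩
  obtain ⟨I, p, u, hp, hu, sp, iu, hup⟩ := exists_image_factorization (S.proj_hom.comp hj)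
  obtain ⟨N, S', rfl⟩ := exists_kernel hp sp
  have h0 : S.proj ⊚ (j ⊚ S'.incl) = 0 := by
    rw [← comp_assoc, ← hup, comp_assoc, S'.proj_incl, comp_zero]
  have hret := S.isHom_ret_comp (hj.comp S'.incl_hom) h0
  have hinj : Injective (S.ret ⊚ j ⊚ S'.incl) := by
    refine Injective.of_comp (g := S.incl) ?_
    rw [S.incl_ret_comp h0]
    exact ij.comp S'.injective
  rw [S'.eulerForm_right]
  exact add_nonpos (hA.defect_nonpos hret hinj) (hC.defect_nonpos hu iu)

lemma Semistable.of_retract (hX : Semistable δ X) {i : VertexMap D X} {r : VertexMap X D}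
    (hi : IsHom i) (hr : IsHom r) (h : r ⊚ i = idMap D) : Semistable δ D :=
  (hX.nonnegQuotients.of_surjective hr (Surjective.of_comp_eq_id h)).semistable
    (hX.defect_nonpos hi (Injective.of_comp_eq_id h))

lemma Semistable.induction {P : QuiverRep Q k → Prop} (hX : Semistable δ X)
    (zero : ∀ ⦃Y⦄, idMap Y = 0 → P Y)
    (extend : ∀ ⦃A Y C⦄, ShortExact A Y C → Stable δ A → P C → P Y) : P X := by
  induction hn : totalDim X using Nat.strong_induction_on generalizing X with
  | h n ih =>
  subst hn
  by_cases h0 : idMap X = 0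
  · exact zero h0
  obtain ⟨A, j, hj, ij, hA⟩ := hX.exists_stable_subobject h0
  obtain ⟨C, S, rfl⟩ := exists_cokernel hj ij
  have := S.totalDim_add
  have := totalDim_pos_iff.mpr hA.idMap_ne_zero
  exact extend S hA (ih _ (by omega) (hX.of_shortExact S hA.defect_eq.ge).2 rfl)

lemma Semistable.extDim_eq_zero (hX : Semistable δ X)
    (h : ∀ ⦃Y : QuiverRep Q k⦄, Stable δ Y → extDim Y G = 0) : extDim X G = 0 :=
  hX.induction (fun _ => extDim_eq_zero_of_idMap_left) fun _ _ _ S hA hC =>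
    S.extDim_left_eq_zero (h hA) hC

lemma Semistable.eulerForm_eq_zero (hX : Semistable δ X) {x : Q.V → ℤ}
    (h : ∀ ⦃Y : QuiverRep Q k⦄, Stable δ Y → Q.eulerForm x (dimVec Y) = 0) :
    Q.eulerForm x (dimVec X) = 0 :=
  hX.induction (P := fun Y => Q.eulerForm x (dimVec Y) = 0)
    (fun _ hY => by rw [dimVec_eq_zero_iff.mpr hY, eulerForm_zero_right])
    fun _ _ _ S hA hC => by rw [S.eulerForm_right, h hA, hC, add_zero]

lemma IsTranslate.of_isomorphic (h : IsTranslate E W) (hi : Isomorphic W Z) : IsTranslate E Z :=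
  ⟨fun X => by rw [← h.homDim_eq, hi.homDim_right], fun X => by rw [← h.extDim_eq, hi.extDim_right]⟩

lemma IsTranslate.isBrick (h : IsTranslate E W) (hE : IsBrick E) : IsBrick W := by
  rw [IsBrick, h.homDim_eq, h.extDim_eq, hE]

lemma Stable.isomorphic_of_homDim_ne_zero (hX : Stable δ X) (hY : Stable δ Y)
    (h : homDim X Y ≠ 0) : Isomorphic X Y := by
  obtain ⟨f, hf, hf0⟩ := exists_hom_ne_zero h
  exact hX.isomorphic_of_ne_zero hY hf hf0

variable [IsAlgClosed k]

lemma Stable.homDim_eq_one (hX : Stable δ X) (h : Isomorphic X Y) : homDim X Y = 1 := by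
  rw [← h.homDim_right]
  exact hX.isBrick

open Classical in
lemma Stable.homDim_eq_ite (hX : Stable δ X) (hY : Stable δ Y) :
    homDim X Y = if Isomorphic X Y then 1 else 0 := by
  split_ifs with h
  · exact hX.homDim_eq_one h
  · exact not_not.mp fun h0 => h (hX.isomorphic_of_homDim_ne_zero hY h0)

/-- If `Ext¹(Y, G) = 0` for all stable `Y`, then `dim G` is a real root, and an indecomposable `X`
of dimension vector `m • δ - dim G` would satisfy `homDim X G = -1`. -/
lemma Stable.exists_extDim_ne_zero (H : Q.IsAffine δ) (hG : Stable δ G) :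
    ∃ Y : QuiverRep Q k, Stable δ Y ∧ extDim Y G ≠ 0 := by
  by_contra! hall
  have hGG := homDim_sub_extDim G G
  rw [hG.homDim_eq_one (.refl G), hall G hG] at hGG
  obtain ⟨m, hm0, hm⟩ := H.exists_add_smul_delta ((-1 : ℤ) • dimVec G)
  have hroot : Q.IsRigidRoot δ ((-1 : ℤ) • dimVec G + m • δ) := by
    refine ⟨?_, .inr hm⟩
    rw [H.eulerForm_add_smul_delta_self, eulerForm_smul_left, eulerForm_smul_right, ← hGG]
    norm_num
  obtain ⟨X, hX, iX⟩ := exists_indecomposable_of_isRigidRoot H k hm0 hroot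
  have hX0 : Q.eulerForm δ (dimVec X) = 0 := by
    rw [hX, eulerForm_add_right, eulerForm_smul_right, eulerForm_smul_right, hG.defect_eq,
      H.eulerForm_delta_self, mul_zero, mul_zero, add_zero]
  have hXG := homDim_sub_extDim X G
  rw [(iX.semistable H hX0).extDim_eq_zero hall, hX, eulerForm_add_left, eulerForm_smul_left,
    eulerForm_smul_left, hG.defect_eq, ← hGG] at hXG
  omega

lemma IsTranslate.stable (H : Q.IsAffine δ) (hE : Stable δ E) (h : IsTranslate E W) :
    Stable δ W := by
  have hb := h.isBrick hE.isBrick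
  have hW := hb.indecomposable.semistable H (h.defect_eq H ▸ hE.defect_eq)
  obtain ⟨G, p, hp, sp, hG⟩ := hW.exists_stable_quotient hb.idMap_ne_zero
  suffices ip : Injective p from hG.of_isomorphic (Isomorphic.of_bijective hp ip sp).symm
  obtain ⟨Y, hY, hYG⟩ := hG.exists_extDim_ne_zero H
  have hEY : Isomorphic E Y := hE.isomorphic_of_homDim_ne_zero hY fun h0 => hYG <|
    Nat.le_zero.mp <| (extDim_le_of_surjective hp sp).trans (by rw [h.extDim_eq, h0])
  rw [← hEY.extDim_left, ← h.homDim_eq] at hYG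
  obtain ⟨g, hg, hg0⟩ := exists_hom_ne_zero hYG
  exact (hb.injective_of_ne_zero (hg.comp hp) fun h => hg0 (sp.eq_zero_of_comp h)).of_comp

lemma Stable.exists_isTranslate (H : Q.IsAffine δ) (hE : Stable δ E) :
    ∃ W, Stable δ W ∧ IsTranslate E W := by
  obtain ⟨W, hW⟩ := hE.semistable.nonnegQuotients.exists_isTranslate H
  exact ⟨W, hW.stable H hE, hW⟩

lemma IsTranslate.isomorphic (hE : Stable δ E) (hW : Stable δ W) (hZ : Stable δ Z)
    (h : IsTranslate E W) (h' : IsTranslate F Z) (hi : Isomorphic E F) : Isomorphic W Z := by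
  refine hW.isomorphic_of_homDim_ne_zero hZ ?_
  rw [h'.homDim_eq, ← hi.extDim_left, h.extDim_eq, hE.homDim_eq_one (.refl E)]
  exact one_ne_zero

end QuiverRep

/-! ### Uniserial semistable representations -/

namespace QuiverRep

open FinQuiver

variable {Q : FinQuiver} {δ : Q.V → ℤ} {k : Type} [Field k]

section Top

variable {A A' B B' C C' D E G K W X Y Z : QuiverRep Q k}

lemma ShortExact.exists_surjective (S : ShortExact A B C) (S' : ShortExact A' B' C')
    {a : VertexMap A A'} (ha : IsHom a) (sa : Surjective a)
    {c : VertexMap C C'} (hc : IsHom c) (sc : Surjective c)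
    {h : VertexMap C A'} (hh : a ◁ S.cocycle = S'.cocycle ▷ c + diff C A' h) :
    ∃ f : VertexMap B B', IsHom f ∧ Surjective f := by
  obtain ⟨f, hf, hincl, hsec⟩ := S.exists_extension (S'.incl_hom.comp ha)
    (h := S'.sec ⊚ c + S'.incl ⊚ h) <| by
      rw [map_add, hc.diff_precomp, S'.incl_hom.diff_postcomp, ← S'.incl_postcomp_cocycle,
        ← postcomp_precomp, ← postcomp_add, ← hh, postcomp_postcomp]
  have hproj : S'.proj ⊚ f ⊚ S.sec = c := by
    rw [hsec, comp_add, ← comp_assoc, ← comp_assoc, S'.proj_sec, S'.proj_incl, idMap_comp,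
      zero_comp, add_zero]
  refine ⟨f, hf, fun i y => ?_⟩
  obtain ⟨u, hu⟩ := sc i (S'.proj i y)
  have hy : S'.proj i (y - f i (S.sec i u)) = 0 := by
    rw [map_sub, sub_eq_zero, ← hu, ← hproj]
    rfl
  obtain ⟨v, hv⟩ := sa i (S'.ret i (y - f i (S.sec i u)))
  have hfv : f i (S.incl i v) = y - f i (S.sec i u) := by
    rw [← S'.incl_ret_apply hy, ← hv]
    exact congr_apply hincl i v
  exact ⟨S.incl i v + S.sec i u, by rw [map_add, hfv, sub_add_cancel]⟩

lemma ShortExact.exists_of_isomorphic (S : ShortExact A B C) (hB : Isomorphic B B') :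
    ∃ S' : ShortExact A B' C, S'.cocycle = S.cocycle := by
  obtain ⟨f, g, hf, hg, hgf, hfg⟩ := hB
  have cancel : ∀ {X Y : QuiverRep Q k} (w : VertexMap X B) (v : VertexMap B Y),
      (v ⊚ g) ⊚ f ⊚ w = v ⊚ w := fun w v => by
    rw [comp_assoc, ← comp_assoc g, hgf, idMap_comp]
  refine ⟨⟨f ⊚ S.incl, S.proj ⊚ g, f ⊚ S.sec, S.ret ⊚ g, hf.comp S.incl_hom, S.proj_hom.comp hg,
    ?_, ?_, ?_, ?_, ?_⟩, ?_⟩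
  · rw [cancel, S.ret_incl]
  · rw [cancel, S.proj_sec]
  · calc (f ⊚ S.incl) ⊚ S.ret ⊚ g + (f ⊚ S.sec) ⊚ S.proj ⊚ g
        = f ⊚ (S.incl ⊚ S.ret + S.sec ⊚ S.proj) ⊚ g := by rw [add_comp, comp_add]; rfl
      _ = idMap B' := by rw [S.incl_ret_add_sec_proj, idMap_comp, hfg]
  · rw [cancel, S.proj_incl]
  · rw [cancel, S.ret_sec]
  · rw [cocycle, hf.diff_postcomp, postcomp_postcomp, comp_assoc, hgf, comp_idMap, cocycle]

lemma NonSplit.postcomp_of_comp_eq_id {z : ArrowMap X Y} (h : NonSplit z) {f : VertexMap Y Z}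
    {g : VertexMap Z Y} (hg : IsHom g) (hgf : g ⊚ f = idMap Y) : NonSplit (f ◁ z) := fun u hu =>
  h (g ⊚ u) <| by rw [hg.diff_postcomp, hu, postcomp_postcomp, hgf, idMap_postcomp]

lemma NonSplit.precomp_of_comp_eq_id {z : ArrowMap Y Z} (h : NonSplit z) {f : VertexMap X Y}
    {g : VertexMap Y X} (hg : IsHom g) (hfg : f ⊚ g = idMap Y) : NonSplit (z ▷ f) := fun u hu =>
  h (u ⊚ g) <| by rw [hg.diff_precomp, hu, precomp_precomp, hfg, precomp_idMap]

/-- `X` has simple top `E` among semistable representations: up to scalars it has a unique map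
onto a stable representation, and that representation is `E`. -/
structure HasTop (δ : Q.V → ℤ) (X E : QuiverRep Q k) : Prop where
  homDim_eq_one : homDim X E = 1
  isomorphic : ∀ ⦃G : QuiverRep Q k⦄, Stable δ G → homDim X G ≠ 0 → Isomorphic G E

lemma Stable.hasTop [IsAlgClosed k] (hE : Stable δ E) (hX : Isomorphic X E) : HasTop δ X E := by
  refine ⟨by rw [hX.homDim_left, hE.homDim_eq_one (.refl E)], fun G hG h0 => ?_⟩
  rw [hX.homDim_left] at h0
  exact (hE.isomorphic_of_homDim_ne_zero hG h0).symm

namespace HasTop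

lemma extDim_eq_one (hK : HasTop δ K W) (hW : IsTranslate E W) : extDim E K = 1 := by
  rw [← hW.homDim_eq, hK.homDim_eq_one]

lemma homDim_ne_zero (hX : HasTop δ X E) : homDim X E ≠ 0 := by
  rw [hX.homDim_eq_one]
  exact one_ne_zero

lemma homDim_pos_of_retract (h : HasTop δ X E) (hX : Semistable δ X) {i : VertexMap D X}
    {r : VertexMap X D} (hi : IsHom i) (hr : IsHom r) (hri : r ⊚ i = idMap D)
    (h0 : idMap D ≠ 0) : 0 < homDim D E := by
  obtain ⟨G, q, hq, sq, hG⟩ := (hX.of_retract hi hr hri).exists_stable_quotient h0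
  have hq0 : q ≠ 0 := sq.ne_zero hG.idMap_ne_zero
  have hqr : q ⊚ r ≠ 0 := fun h => hq0 ((Surjective.of_comp_eq_id hri).eq_zero_of_comp h)
  rw [← (h.isomorphic hG (homDim_pos (hq.comp hr) hqr).ne').homDim_right]
  exact homDim_pos hq hq0

lemma indecomposable (h : HasTop δ X E) (hX : Semistable δ X) (h0 : idMap X ≠ 0) :
    Indecomposable X := by
  by_contra hdec
  obtain ⟨U, V, S, hs, hr, hU, hV⟩ := exists_splitting_of_not_indecomposable h0 hdec
  have h1 := h.homDim_pos_of_retract hX S.incl_hom hr S.ret_incl hU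
  have h2 := h.homDim_pos_of_retract hX hs S.proj_hom S.proj_sec hV
  have h3 := S.add_homDim_left_le hr E
  rw [h.homDim_eq_one] at h3
  omega

variable [IsAlgClosed k]

lemma comp_incl_eq_zero (hT : HasTop δ K W) (hK : Semistable δ K)
    (h : IsTranslate E W) (S : ShortExact K X E) (hS : NonSplit S.cocycle) (hG : Stable δ G)
    {f : VertexMap X G} (hf : IsHom f) : f ⊚ S.incl = 0 := by
  by_contra h0
  have hfi := hf.comp S.incl_hom
  have hi := hT.isomorphic hG (homDim_pos hfi h0).ne'
  have hEG : extDim E G ≠ 0 := by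
    rw [← h.homDim_eq, hG.homDim_eq_one hi]
    exact one_ne_zero
  exact hS.postcomp (hT.extDim_eq_one h) hfi
    (hK.nonnegQuotients.surjective_of_ne_zero hG hfi h0) hEG _ (S.diff_of_extension hf)

lemma of_shortExact (hT : HasTop δ K W) (hK : Semistable δ K)
    (h : IsTranslate E W) (hE : Stable δ E) (S : ShortExact K X E) (hS : NonSplit S.cocycle) :
    HasTop δ X E := by
  have factor : ∀ ⦃G⦄, Stable δ G → ∀ ⦃f : VertexMap X G⦄, IsHom f →
      IsHom (f ⊚ S.sec) ∧ (f ⊚ S.sec) ⊚ S.proj = f := fun G hG f hf =>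
    have h0 := hT.comp_incl_eq_zero hK h S hS hG hf
    ⟨S.isHom_comp_sec hf h0, S.comp_sec_proj h0⟩
  have homDim_le : ∀ ⦃G⦄, Stable δ G → homDim X G ≤ homDim E G := fun G hG =>
    homDim_le_of_linearMap (compRight S.sec) (fun f hf => (factor hG hf).1) fun f hf h0 => by
      rw [← (factor hG hf).2, show f ⊚ S.sec = 0 from h0, zero_comp]
  have hEE := hE.homDim_eq_one (.refl E)
  refine ⟨le_antisymm (hEE ▸ homDim_le hE) ?_, fun G hG h0 => ?_⟩
  · exact hEE ▸ homDim_le_of_surjective S.proj_hom S.surjective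
  · exact (hE.isomorphic_of_homDim_ne_zero hG fun h => h0 (Nat.le_zero.mp (h ▸ homDim_le hG))).symm

end HasTop

end Top

section Uniserial

variable {E E' G K W X X' Y Z Z' : QuiverRep Q k} {l m : ℕ}

/-- `Uniserial δ l E X Z`: the representation `X` is uniserial in the category of semistable
representations, of length `l + 1`, with stable composition factors `E, τE, …, τˡE` from top to
socle, and `Z = τˡ⁺¹E`. -/
inductive Uniserial (δ : Q.V → ℤ) :
    ℕ → QuiverRep Q k → QuiverRep Q k → QuiverRep Q k → Prop
  | simple {E X Z : QuiverRep Q k} (hE : Stable δ E) (hZ : IsTranslate E Z)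
      (hX : Isomorphic X E) : Uniserial δ 0 E X Z
  | extend {l : ℕ} {E W K X Z : QuiverRep Q k} (hE : Stable δ E) (hW : IsTranslate E W)
      (hK : Uniserial δ l W K Z) (S : ShortExact K X E) (hS : NonSplit S.cocycle) :
      Uniserial δ (l + 1) E X Z

namespace Uniserial

lemma stable_top (h : Uniserial δ l E X Z) : Stable δ E := by
  cases h <;> assumption

lemma semistable (h : Uniserial δ l E X Z) : Semistable δ X := by
  induction h with
  | simple hE _ hX => exact hE.semistable.of_isomorphic hX.symm
  | extend hE _ _ S _ ih => exact S.semistable ih hE.semistable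

lemma lt_totalDim (h : Uniserial δ l E X Z) : l < totalDim X := by
  induction h with
  | simple hE _ hX =>
    rw [totalDim_congr hX.dimVec_eq]
    exact totalDim_pos_iff.mpr hE.idMap_ne_zero
  | extend hE _ _ S _ ih =>
    have := S.totalDim_add
    have := totalDim_pos_iff.mpr hE.idMap_ne_zero
    omega

lemma idMap_ne_zero (h : Uniserial δ l E X Z) : idMap X ≠ 0 :=
  totalDim_pos_iff.mp (Nat.zero_lt_of_lt h.lt_totalDim)

lemma of_isomorphic (h : Uniserial δ l E X Z) (hi : Isomorphic X Y) : Uniserial δ l E Y Z := by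
  cases h with
  | simple hE hZ hX => exact .simple hE hZ (hi.symm.trans hX)
  | extend hE hW hK S hS =>
    obtain ⟨S', hS'⟩ := S.exists_of_isomorphic hi
    exact .extend hE hW hK S' (hS' ▸ hS)

lemma of_isomorphic_translate (h : Uniserial δ l E X Z) (hi : Isomorphic Z Z') :
    Uniserial δ l E X Z' := by
  induction h with
  | simple hE hZ hX => exact .simple hE (hZ.of_isomorphic hi) hX
  | extend hE hW _ S hS ih => exact .extend hE hW (ih hi) S hS

variable [IsAlgClosed k]

lemma hasTop (h : Uniserial δ l E X Z) : HasTop δ X E := by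
  induction h with
  | simple hE _ hX => exact hE.hasTop hX
  | extend hE hW hK S hS ih => exact ih.of_shortExact hK.semistable hW hE S hS

lemma indecomposable (h : Uniserial δ l E X Z) : Indecomposable X :=
  h.hasTop.indecomposable h.semistable h.idMap_ne_zero

lemma isomorphic (h : Uniserial δ l E X Z) (h' : Uniserial δ l E' X' Z') (hE : Isomorphic E E') :
    Isomorphic X X' := by
  induction h generalizing E' X' Z' with
  | simple _ _ hX => cases h' with | simple _ _ hX' => exact hX.trans (hE.trans hX'.symm)
  | @extend l E W K X Z hE₁ hW hK S hS ih =>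
  cases h' with | @extend _ _ W' K' _ _ hE' hW' hK' S' hS' =>
  have hKK := ih hK' (hW.isomorphic hE₁ hK.stable_top hK'.stable_top hW' hE)
  have hEK : extDim E K' = 1 := by rw [← hKK.extDim_right, hK.hasTop.extDim_eq_one hW]
  have hdim : totalDim X = totalDim X' := by
    rw [S.totalDim_add, S'.totalDim_add, totalDim_congr hKK.dimVec_eq, totalDim_congr hE.dimVec_eq]
  obtain ⟨φ, φ', hφ, hφ', hφφ, hφφ'⟩ := hKK
  obtain ⟨ε, ε', hε, hε', -, hεε'⟩ := hE
  obtain ⟨c, h, hc⟩ := (hS'.precomp_of_comp_eq_id hε' hεε').exists_eq_smul_add hEK (φ ◁ S.cocycle)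
  have hc0 : c ≠ 0 := by
    rintro rfl
    rw [zero_smul, zero_add] at hc
    exact hS.postcomp_of_comp_eq_id hφ' hφφ h hc.symm
  have scε : Surjective (c • ε) := .of_comp_eq_id (f := c⁻¹ • ε') <| by
    rw [comp_smul, smul_comp, smul_smul, inv_mul_cancel₀ hc0, one_smul, hεε']
  obtain ⟨f, hf, sf⟩ := S.exists_surjective S' hφ (.of_comp_eq_id hφφ') (hε.smul c) scε (h := h)
    (by rw [hc, precomp_smul])
  exact .of_bijective hf (sf.injective_of_totalDim_le hdim.le) sf

lemma exists_quotient (H : Q.IsAffine δ) (h : Uniserial δ l E X Z) (hm : m ≤ l) :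
    ∃ X' Z' : QuiverRep Q k, Uniserial δ m E X' Z' ∧
      ∃ q : VertexMap X X', IsHom q ∧ Surjective q := by
  induction m generalizing l E X Z with
  | zero =>
    obtain ⟨W, -, hW⟩ := h.stable_top.exists_isTranslate H
    obtain ⟨f, hf, hf0⟩ := exists_hom_ne_zero h.hasTop.homDim_ne_zero
    exact ⟨E, W, .simple h.stable_top hW (.refl E), f, hf,
      h.semistable.nonnegQuotients.surjective_of_ne_zero h.stable_top hf hf0⟩
  | succ m ih =>
    cases h with
    | simple => omega
    | @extend l _ W K _ _ hE hW hK S hS =>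
      obtain ⟨K', Z', hK', q, hq, sq⟩ := ih hK (by omega)
      obtain ⟨X', S', hS'⟩ : ∃ X', ∃ S' : ShortExact K' X' E, S'.cocycle = q ◁ S.cocycle :=
        ⟨_, extension K' E (q ◁ S.cocycle), extension_cocycle ..⟩
      have hEK' : extDim E K' ≠ 0 := by
        rw [hK'.hasTop.extDim_eq_one hW]
        exact one_ne_zero
      refine ⟨X', Z', .extend hE hW hK' S' ?_, ?_⟩
      · rw [hS']
        exact hS.postcomp (hK.hasTop.extDim_eq_one hW) hq sq hEK'
      · exact S.exists_surjective S' hq sq (isHom_idMap E) (surjective_idMap E) (h := 0) <| by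
          rw [hS', precomp_idMap, map_zero, add_zero]

lemma exists_cons (hE : Stable δ E) (hW : IsTranslate E W) (hX : Uniserial δ l W X Z) :
    ∃ M : QuiverRep Q k, Uniserial δ (l + 1) E M Z ∧ dimVec M = dimVec E + dimVec X := by
  obtain ⟨z, hz⟩ := exists_nonSplit (X := E) (Y := X) <| by
    rw [hX.hasTop.extDim_eq_one hW]
    exact one_ne_zero
  refine ⟨_, .extend hE hW hX (extension X E z) ?_, ?_⟩
  · rwa [extension_cocycle]
  · rw [(extension X E z).dimVec_add, add_comm]

lemma exists_append (h : Uniserial δ l E X Z) (h' : Uniserial δ m Z Y Z') :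
    ∃ M : QuiverRep Q k, Uniserial δ (l + m + 1) E M Z' ∧ dimVec M = dimVec X + dimVec Y := by
  induction h with
  | simple hE hZ hX =>
    rw [zero_add, hX.dimVec_eq]
    exact exists_cons hE hZ h'
  | extend hE hW _ S _ ih =>
    obtain ⟨N, hN, hdN⟩ := ih h'
    obtain ⟨M, hM, hdM⟩ := exists_cons hE hW hN
    refine ⟨M, by convert hM using 1; omega, ?_⟩
    rw [hdM, hdN, S.dimVec_add]
    abel

open Classical in
lemma eulerForm_eq (H : Q.IsAffine δ) (h : Uniserial δ l E X Z) (hG : Stable δ G) :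
    Q.eulerForm (dimVec X) (dimVec G) =
      (if Isomorphic G E then 1 else 0) - (if Isomorphic G Z then 1 else 0) := by
  have eulerForm_stable : ∀ {E W : QuiverRep Q k}, Stable δ E → IsTranslate E W →
      Q.eulerForm (dimVec E) (dimVec G) =
        (if Isomorphic G E then 1 else 0) - (if Isomorphic G W then 1 else 0) := by
    intro E W hE hW
    have hEG : Isomorphic E G ↔ Isomorphic G E := ⟨.symm, .symm⟩
    rw [← homDim_sub_extDim, ← hW.homDim_eq, hG.homDim_eq_ite (hW.stable H hE),
      hE.homDim_eq_ite hG, hEG]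
    push_cast
    rfl
  induction h with
  | simple hE hZ hX => rw [hX.dimVec_eq, eulerForm_stable hE hZ]
  | extend hE hW _ S _ ih =>
    rw [S.dimVec_add, eulerForm_add_left, ih, eulerForm_stable hE hW]
    ring

lemma not_isomorphic (H : Q.IsAffine δ) (h : Uniserial δ l E X Z)
    (hq : Q.eulerForm (dimVec X) (dimVec X) = 1) : ¬ Isomorphic E Z := by
  intro hi
  suffices Q.eulerForm (dimVec X) (dimVec X) = 0 by omega
  refine h.semistable.eulerForm_eq_zero fun G hG => ?_
  have hGE : Isomorphic G E ↔ Isomorphic G Z := ⟨fun g => g.trans hi, fun g => g.trans hi.symm⟩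
  classical rw [h.eulerForm_eq H hG, if_congr hGE rfl rfl, sub_self]

end Uniserial

end Uniserial

section Splitting

variable {C D E F G K W X Y Z Z' : QuiverRep Q k} {l m : ℕ}

lemma exists_eq_postcomp_add (z : ArrowMap E K) (x : ArrowMap E D)
    (h : ∀ ⦃C : QuiverRep Q k⦄ ⦃i : VertexMap C K⦄ ⦃r : VertexMap K C⦄, Indecomposable C →
      IsHom i → IsHom r → r ⊚ i = idMap C →
      ∃ g : VertexMap D C, IsHom g ∧ ∃ u, r ◁ z = g ◁ x + diff E C u) :
    ∃ g : VertexMap D K, IsHom g ∧ ∃ u, z = g ◁ x + diff E K u := by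
  let N : Submodule k (VertexMap K K) :=
    { carrier := {f | ∃ g : VertexMap D K, IsHom g ∧ ∃ u, f ◁ z = g ◁ x + diff E K u}
      zero_mem' := ⟨0, isHom_zero, 0, by rw [zero_postcomp, zero_postcomp, map_zero, add_zero]⟩
      add_mem' := by
        rintro f f' ⟨g, hg, u, hu⟩ ⟨g', hg', u', hu'⟩
        refine ⟨g + g', hg.add hg', u + u', ?_⟩
        rw [add_postcomp, hu, hu', add_postcomp, map_add, add_add_add_comm]
      smul_mem' := by
        rintro c f ⟨g, hg, u, hu⟩
        exact ⟨c • g, hg.smul c, c • u, by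
          rw [smul_postcomp, hu, smul_add, smul_postcomp, map_smul]⟩ }
  suffices idMap K ∈ N from this
  by_contra hN
  obtain ⟨C, i, r, hC, hi, hr, hri, hirN⟩ := exists_indecomposable_retract N hN
  obtain ⟨g, hg, u, hu⟩ := h hC hi hr hri
  refine hirN ⟨i ⊚ g, hi.comp hg, i ⊚ u, ?_⟩
  rw [← postcomp_postcomp, hu, postcomp_add, postcomp_postcomp, hi.diff_postcomp]

lemma NonSplit.exists_indecomposable_retract {z : ArrowMap E K} (hz : NonSplit z) :
    ∃ (C : QuiverRep Q k) (i : VertexMap C K) (r : VertexMap K C),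
      Indecomposable C ∧ IsHom i ∧ IsHom r ∧ r ⊚ i = idMap C ∧ NonSplit (r ◁ z) := by
  by_contra! h
  obtain ⟨g, -, u, hu⟩ := exists_eq_postcomp_add z (0 : ArrowMap E K) fun C i r hC hi hr hri => by
    obtain ⟨u, hu⟩ := not_forall_not.mp (h C i r hC hi hr hri)
    exact ⟨0, isHom_zero, u, by rw [zero_postcomp, zero_add, hu]⟩
  exact hz u (by rw [hu, postcomp_zero, zero_add])

lemma Indecomposable.injective_of_cocycle_eq (hX : Indecomposable X) (S : ShortExact K X E)
    (hE : idMap E ≠ 0) {π : VertexMap K D} (hπ : IsHom π) {g : VertexMap D K} (hg : IsHom g)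
    {u : VertexMap E K} (hu : S.cocycle = g ◁ π ◁ S.cocycle + diff E K u) : Injective π := by
  obtain ⟨P, hP, hPi, -⟩ := S.exists_extension ((isHom_idMap K).sub (hg.comp hπ)) (h := u) <| by
    rw [sub_postcomp, idMap_postcomp, ← postcomp_postcomp, ← sub_eq_iff_eq_add'.mpr hu]
  rcases hX.isNilpotent_or_injective (S.incl_hom.comp hP) with ⟨n, hn⟩ | hinj
  · refine fun i => (injective_iff_map_eq_zero _).mpr fun v hv => ?_
    have hPv : P i (S.incl i v) = v := calc
      P i (S.incl i v) = v - g i (π i v) := congr_apply hPi i v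
      _ = v := by rw [hv, map_zero, sub_zero]
    have hfix : (S.incl ⊚ P) i (S.incl i v) = S.incl i v := congrArg (S.incl i) hPv
    have hpow : ((S.incl ⊚ P) ^ n) i (S.incl i v) = S.incl i v := by
      rw [Pi.pow_apply, Module.End.pow_apply, Function.iterate_fixed hfix]
    rw [hn] at hpow
    exact S.injective i (hpow.symm.trans (map_zero _).symm)
  · have hproj : S.proj = 0 := (hinj.surjective_of_totalDim_le le_rfl).eq_zero_of_comp <| by
      rw [← comp_assoc, S.proj_incl, zero_comp]
    exact absurd (by rw [← S.proj_sec, hproj, zero_comp]) hE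

lemma HasTop.isomorphic_of_nonSplit (hD : HasTop δ D F) (hW : IsTranslate E W)
    (sW : Stable δ W) {z : ArrowMap E D} (hz : NonSplit z) : Isomorphic W F :=
  hD.isomorphic sW (by rw [hW.homDim_eq]; exact hz.extDim_ne_zero)

lemma HasTop.of_isomorphic_top (hD : HasTop δ D F) (hi : Isomorphic W F) : HasTop δ D W :=
  ⟨by rw [hi.homDim_right, hD.homDim_eq_one], fun _ hG h0 => (hD.isomorphic hG h0).trans hi.symm⟩

variable [IsAlgClosed k]

namespace Uniserial

lemma exists_eq_postcomp_add (H : Q.IsAffine δ) (hW : IsTranslate E W) (sW : Stable δ W)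
    (hD : Uniserial δ l F D Z) (hC : Uniserial δ m G C Z') (hm : m ≤ l)
    {x : ArrowMap E D} (hx : NonSplit x) {y : ArrowMap E C} (hy : NonSplit y) :
    ∃ g : VertexMap D C, IsHom g ∧ ∃ u, y = g ◁ x + diff E C u := by
  have hWF := hD.hasTop.isomorphic_of_nonSplit hW sW hx
  have hWG := hC.hasTop.isomorphic_of_nonSplit hW sW hy
  obtain ⟨X, Y, hX, q, hq, sq⟩ := hD.exists_quotient H hm
  obtain ⟨f, g, hf, -, -, hfg⟩ := hX.isomorphic hC (hWF.symm.trans hWG)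
  have hfq := hx.postcomp ((hD.hasTop.of_isomorphic_top hWF).extDim_eq_one hW) (hf.comp hq)
    ((Surjective.of_comp_eq_id hfg).comp sq) hy.extDim_ne_zero
  obtain ⟨c, u, hu⟩ := hfq.exists_eq_smul_add
    ((hC.hasTop.of_isomorphic_top hWG).extDim_eq_one hW) y
  exact ⟨c • f ⊚ q, (hf.comp hq).smul c, u, by rw [hu, smul_postcomp]⟩

/-- Take a uniserial quotient of `K` of maximal length among those to which `z` projects
nontrivially. -/
lemma exists_generating_quotient (H : Q.IsAffine δ) (hW : IsTranslate E W) (sW : Stable δ W)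
    {z : ArrowMap E K} (hz : NonSplit z)
    (hK : ∀ ⦃C : QuiverRep Q k⦄ ⦃i : VertexMap C K⦄ ⦃r : VertexMap K C⦄, Indecomposable C →
      IsHom i → IsHom r → r ⊚ i = idMap C → ∃ l F Z, Uniserial δ l F C Z) :
    ∃ (l : ℕ) (F D Z : QuiverRep Q k) (π : VertexMap K D), Uniserial δ l F D Z ∧ IsHom π ∧
      Surjective π ∧ NonSplit (π ◁ z) ∧
      ∃ g : VertexMap D K, IsHom g ∧ ∃ u, z = g ◁ π ◁ z + diff E K u := by
  let s : Set ℕ := {l | ∃ (F D Z : QuiverRep Q k) (π : VertexMap K D), Uniserial δ l F D Z ∧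
    IsHom π ∧ Surjective π ∧ NonSplit (π ◁ z)}
  have hbdd : BddAbove s := by
    refine ⟨totalDim K, ?_⟩
    rintro l ⟨F, D, Z, π, hD, -, sπ, -⟩
    exact hD.lt_totalDim.le.trans sπ.totalDim_le
  have hne : s.Nonempty := by
    obtain ⟨D, i, r, hD, hi, hr, hri, hrz⟩ := hz.exists_indecomposable_retract
    obtain ⟨l, F, Z, hU⟩ := hK hD hi hr hri
    exact ⟨l, F, D, Z, r, hU, hr, .of_comp_eq_id hri, hrz⟩
  obtain ⟨F, D, Z, π, hD, hπ, sπ, hπz⟩ := Nat.sSup_mem hne hbdd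
  refine ⟨sSup s, F, D, Z, π, hD, hπ, sπ, hπz,
    QuiverRep.exists_eq_postcomp_add z (π ◁ z) fun C i r hC hi hr hri => ?_⟩
  by_cases hrz : NonSplit (r ◁ z)
  · obtain ⟨m, G, Z', hU⟩ := hK hC hi hr hri
    have hm := le_csSup hbdd ⟨G, C, Z', r, hU, hr, .of_comp_eq_id hri, hrz⟩
    exact hD.exists_eq_postcomp_add H hW sW hU hm hπz hrz
  · obtain ⟨u, hu⟩ := not_forall_not.mp hrz
    exact ⟨0, isHom_zero, u, by rw [zero_postcomp, zero_add, hu]⟩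

end Uniserial

lemma Semistable.exists_uniserial (H : Q.IsAffine δ) (hX : Semistable δ X)
    (iX : Indecomposable X) : ∃ l E Z, Uniserial δ l E X Z := by
  induction hn : totalDim X using Nat.strong_induction_on generalizing X with
  | h n ih =>
  subst hn
  obtain ⟨E, p, hp, sp, hE⟩ := hX.exists_stable_quotient iX.1
  obtain ⟨K, S, rfl⟩ := exists_kernel hp sp
  obtain ⟨W, sW, hW⟩ := hE.exists_isTranslate H
  have hdim := S.totalDim_add
  by_cases hK0 : idMap K = 0
  · have := totalDim_eq_zero_iff.mpr hK0
    exact ⟨0, E, W, .simple hE hW (.of_bijective S.proj_hom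
      (S.surjective.injective_of_totalDim_le (by omega)) S.surjective)⟩
  have hE0 := totalDim_pos_iff.mpr hE.idMap_ne_zero
  have hS := iX.nonSplit_cocycle S hK0 hE.idMap_ne_zero
  have hdK := S.eulerForm_right δ
  rw [hX.defect_eq, hE.defect_eq, add_zero] at hdK
  have hK := (hX.of_shortExact S hdK.le).1
  obtain ⟨l, F, D, Z, π, hD, hπ, sπ, hπS, g, hg, u, hu⟩ :=
    Uniserial.exists_generating_quotient H hW sW hS fun C i r hC hi hr hri =>
      have hCK := (Injective.of_comp_eq_id hri).totalDim_le
      ih _ (by omega) (hK.of_retract hi hr hri) hC rfl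
  have iπ := iX.injective_of_cocycle_eq S hE.idMap_ne_zero hπ hg hu
  have hWF := hD.hasTop.isomorphic_of_nonSplit hW sW hπS
  exact ⟨l + 1, E, Z, .extend hE (hW.of_isomorphic hWF)
    (hD.of_isomorphic (Isomorphic.of_bijective hπ iπ sπ).symm) S hS⟩

end Splitting

end QuiverRep

namespace FinQuiver.IsAffine

variable {Q : FinQuiver} {δ β : Q.V → ℤ}

lemma eulerForm_delta_sub_self (H : Q.IsAffine δ) (β : Q.V → ℤ) :
    Q.eulerForm (δ - β) (δ - β) = Q.eulerForm β β := by
  rw [eulerForm_sub_left, eulerForm_sub_right, eulerForm_sub_right, H.eulerForm_delta_self,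
    H.eulerForm_delta_right β]
  ring

lemma delta_sub_nonneg (H : Q.IsAffine δ) (hq : Q.eulerForm β β = 1) (hlt : ∃ i, β i < δ i) :
    0 ≤ δ - β := by
  obtain ⟨i, hi⟩ := hlt
  exact (H.nonneg_or_nonpos_of_root (hq ▸ H.eulerForm_delta_sub_self β)).resolve_right
    fun h => hi.not_ge (sub_nonpos.mp (h i))

lemma isRigidRoot_delta_sub (H : Q.IsAffine δ) (hq : Q.eulerForm β β = 1) (hβ : 0 ≤ β) :
    Q.IsRigidRoot δ (δ - β) := by
  have hβ0 : β ≠ 0 := by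
    rintro rfl
    simp [eulerForm_zero_left] at hq
  obtain ⟨-, i, hi⟩ := Pi.lt_def.mp (hβ.lt_of_ne' hβ0)
  exact ⟨(H.eulerForm_delta_sub_self β).trans hq, .inr ⟨i, sub_lt_self _ hi⟩⟩

lemma exists_eq_add_nsmul_delta (H : Q.IsAffine δ) {α : Q.V → ℤ} (hα : ∀ i, 0 ≤ α i) :
    ∃ (n : ℕ) (β : Q.V → ℤ), (∀ i, 0 ≤ β i) ∧ (∃ i, β i < δ i) ∧ α = β + n • δ := by
  obtain ⟨m, hm, i, hi⟩ := H.exists_add_smul_delta α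
  have hm0 : m ≤ 0 := by
    have := hα i
    have := H.delta_pos i
    rw [Pi.add_apply, Pi.smul_apply, smul_eq_mul] at hi
    by_contra! hm0
    nlinarith
  refine ⟨(-m).toNat, α + m • δ, hm, ⟨i, hi⟩, ?_⟩
  rw [← natCast_zsmul, Int.toNat_of_nonneg (neg_nonneg.mpr hm0), neg_smul, add_neg_cancel_right]

end FinQuiver.IsAffine

namespace QuiverRep

open FinQuiver

variable {Q : FinQuiver} {δ α : Q.V → ℤ} {k : Type} [Field k] [IsAlgClosed k]
  {E E' F G X X' Y Z Z' : QuiverRep Q k} {l m : ℕ}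

namespace Uniserial

lemma eulerForm_eq_one_iff (H : Q.IsAffine δ) (h : Uniserial δ l E X Z)
    (hq : Q.eulerForm (dimVec X) (dimVec X) = 1) (hG : Stable δ G) :
    Q.eulerForm (dimVec X) (dimVec G) = 1 ↔ Isomorphic G E := by
  have hEZ (hE : Isomorphic G E) : ¬ Isomorphic G Z :=
    fun hZ => h.not_isomorphic H hq (hE.symm.trans hZ)
  classical
  rw [h.eulerForm_eq H hG]
  split_ifs <;> simp_all

lemma eulerForm_eq_neg_one_iff (H : Q.IsAffine δ) (h : Uniserial δ l E X Z)
    (hq : Q.eulerForm (dimVec X) (dimVec X) = 1) (hG : Stable δ G) :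
    Q.eulerForm (dimVec X) (dimVec G) = -1 ↔ Isomorphic G Z := by
  have hEZ (hE : Isomorphic G E) : ¬ Isomorphic G Z :=
    fun hZ => h.not_isomorphic H hq (hE.symm.trans hZ)
  classical
  rw [h.eulerForm_eq H hG]
  split_ifs <;> simp_all

lemma isomorphic_of_totalDim_eq (H : Q.IsAffine δ) (h : Uniserial δ l E X Z)
    (h' : Uniserial δ m E' X' Z') (hE : Isomorphic E E') (hdim : totalDim X = totalDim X') :
    Isomorphic X X' := by
  wlog hm : m ≤ l generalizing l m E E' X X' Z Z'
  · exact (this h' h hE.symm hdim.symm (le_of_not_ge hm)).symm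
  obtain ⟨Y, W, hY, q, hq, sq⟩ := h.exists_quotient H hm
  have hYX' := hY.isomorphic h' hE
  have hXY : totalDim X ≤ totalDim Y := by rw [hdim, totalDim_congr hYX'.dimVec_eq]
  exact (Isomorphic.of_bijective hq (sq.injective_of_totalDim_le hXY) sq).trans hYX'

lemma exists_add_nsmul_delta (hX : Uniserial δ l E X F) (hY : Uniserial δ m F Y E)
    (hsum : dimVec X + dimVec Y = δ) (n : ℕ) :
    ∃ (l' : ℕ) (M : QuiverRep Q k), Uniserial δ l' E M F ∧ dimVec M = dimVec X + n • δ := by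
  induction n with
  | zero => exact ⟨l, X, hX, by rw [zero_smul, add_zero]⟩
  | succ n ih =>
    obtain ⟨l', M, hM, hdM⟩ := ih
    obtain ⟨N, hN, hdN⟩ := hM.exists_append hY
    obtain ⟨P, hP, hdP⟩ := hN.exists_append hX
    exact ⟨_, P, hP, by rw [hdP, hdN, hdM, succ_nsmul, ← hsum]; abel⟩

end Uniserial

lemma Indecomposable.isomorphic_of_defect_eq_zero (H : Q.IsAffine δ)
    (hα : Q.eulerForm α α = 1) (hd : Q.eulerForm δ α = 0) (hX : dimVec X = α)
    (hY : dimVec Y = α) (iX : Indecomposable X) (iY : Indecomposable Y) : Isomorphic X Y := by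
  subst hX
  obtain ⟨l, E, Z, hU⟩ := (iX.semistable H hd).exists_uniserial H iX
  obtain ⟨m, F, W, hV⟩ := (iY.semistable H (hY ▸ hd)).exists_uniserial H iY
  refine hU.isomorphic_of_totalDim_eq H hV ?_ (totalDim_congr hY.symm)
  rw [← hV.eulerForm_eq_one_iff H (hY ▸ hα) hU.stable_top, hY,
    hU.eulerForm_eq_one_iff H hα hU.stable_top]
  exact .refl E

/-- Adding `δ` to the dimension vector amounts to going once more around the tube: indecomposables
`X` and `Y` of dimension vectors `β < δ` and `δ - β` can be stacked alternately. -/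
lemma exists_indecomposable_of_defect_eq_zero (H : Q.IsAffine δ) (k : Type) [Field k]
    [IsAlgClosed k] (hα : ∀ i, 0 ≤ α i) (hq : Q.eulerForm α α = 1) (hd : Q.eulerForm δ α = 0) :
    ∃ X : QuiverRep Q k, dimVec X = α ∧ Indecomposable X := by
  obtain ⟨n, β, hβ, hlt, rfl⟩ := H.exists_eq_add_nsmul_delta hα
  rw [← natCast_zsmul] at hq hd
  rw [H.eulerForm_add_smul_delta_self] at hq
  rw [eulerForm_add_right, eulerForm_smul_right, H.eulerForm_delta_self, mul_zero, add_zero] at hd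
  obtain ⟨X, rfl, iX⟩ := exists_indecomposable_of_isRigidRoot H k hβ ⟨hq, .inr hlt⟩
  have hrY := H.isRigidRoot_delta_sub hq hβ
  obtain ⟨Y, hY, iY⟩ :=
    exists_indecomposable_of_isRigidRoot H k (H.delta_sub_nonneg hq hlt) hrY
  have hqY := hY ▸ hrY.eulerForm_self
  have hdY : Q.eulerForm δ (dimVec Y) = 0 := by
    rw [hY, eulerForm_sub_right, H.eulerForm_delta_self, hd, sub_zero]
  obtain ⟨l, E, F, hE⟩ := (iX.semistable H hd).exists_uniserial H iX
  obtain ⟨m, F', E', hF⟩ := (iY.semistable H hdY).exists_uniserial H iY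
  have hYG {G : QuiverRep Q k} (hG : Stable δ G) :
      Q.eulerForm (dimVec Y) (dimVec G) = -Q.eulerForm (dimVec X) (dimVec G) := by
    rw [hY, eulerForm_sub_left, hG.defect_eq, zero_sub]
  have hEE' : Isomorphic E E' := by
    rw [← hF.eulerForm_eq_neg_one_iff H hqY hE.stable_top, hYG hE.stable_top, neg_inj,
      hE.eulerForm_eq_one_iff H hq hE.stable_top]
    exact .refl E
  have hFF' : Isomorphic F' F := by
    rw [← hE.eulerForm_eq_neg_one_iff H hq hF.stable_top, ← neg_inj, ← hYG hF.stable_top, neg_neg,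
      hF.eulerForm_eq_one_iff H hqY hF.stable_top]
    exact .refl F'
  obtain ⟨l', M, hM, hdM⟩ := (hE.of_isomorphic_translate hFF'.symm).exists_add_nsmul_delta
    (hF.of_isomorphic_translate hEE'.symm) (by rw [hY, add_sub_cancel]) n
  exact ⟨M, hdM, hM.indecomposable⟩

end QuiverRep

/-! ### Duality and the opposite quiver -/

namespace FinQuiver

variable {Q : FinQuiver}

/-- The opposite quiver. -/
abbrev op (Q : FinQuiver) : FinQuiver where
  V := Q.V
  A := Q.A
  src := Q.tgt
  tgt := Q.src

lemma eulerForm_op (x y : Q.V → ℤ) : Q.op.eulerForm x y = Q.eulerForm y x := by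
  simp only [eulerForm, mul_comm]

lemma IsAffine.op {δ : Q.V → ℤ} (H : Q.IsAffine δ) : Q.op.IsAffine δ where
  nonempty := H.nonempty
  delta_pos := H.delta_pos
  semidefinite x := by rw [eulerForm_op]; exact H.semidefinite x
  radical_iff x := by simp only [eulerForm_op, add_comm, ← H.radical_iff x]
  exists_projective := by simpa only [eulerForm_op] using H.exists_injective
  exists_injective := by simpa only [eulerForm_op] using H.exists_projective

end FinQuiver

namespace QuiverRep

open FinQuiver

variable {Q : FinQuiver} {k : Type} [Field k] {X Y : QuiverRep Q k}

/-- The representation of the opposite quiver on the dual spaces. -/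
def dual (X : QuiverRep Q k) : QuiverRep Q.op k where
  space i := Module.Dual k (X.space i)
  addCommGroup i := inferInstanceAs (AddCommGroup (Module.Dual k (X.space i)))
  module i := inferInstanceAs (Module k (Module.Dual k (X.space i)))
  finiteDimensional i := inferInstanceAs (FiniteDimensional k (Module.Dual k (X.space i)))
  map a := (X.map a).dualMap

lemma dimVec_dual (X : QuiverRep Q k) : dimVec (dual X) = dimVec X :=
  funext fun i => congrArg Nat.cast (Subspace.dual_finrank_eq (V := X.space i))

/-- The vertexwise transpose of a family of linear maps. -/
def dualMap (f : VertexMap X Y) : VertexMap (dual Y) (dual X) := fun i => (f i).dualMap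

lemma dualMap_idMap : dualMap (idMap X) = idMap (dual X) := rfl
lemma dualMap_zero : dualMap (0 : VertexMap X Y) = 0 :=
  funext fun i => map_zero (Module.Dual.transpose (M := X.space i) (M' := Y.space i))

lemma dualMap_injective : Function.Injective (dualMap (X := X) (Y := Y)) := fun f g h => by
  ext i v
  refine Module.eval_apply_injective k (LinearMap.ext fun φ => ?_)
  exact LinearMap.congr_fun (congr_apply h i φ) v

lemma exists_linearMap_dualMap_eq {V W : Type*} [AddCommGroup V] [Module k V] [AddCommGroup W]
    [Module k W] [FiniteDimensional k W] (g : Module.Dual k W →ₗ[k] Module.Dual k V) :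
    ∃ f : V →ₗ[k] W, f.dualMap = g := by
  refine ⟨(Module.evalEquiv k W).symm ∘ₗ g.dualMap ∘ₗ Module.Dual.eval k V, ?_⟩
  ext φ v
  simp

lemma dualMap_surjective : Function.Surjective (dualMap (X := X) (Y := Y)) := fun g => by
  choose f hf using fun i : Q.V =>
    exists_linearMap_dualMap_eq (V := X.space i) (W := Y.space i) (g i)
  exact ⟨f, funext hf⟩

lemma IsHom.of_dualMap {f : VertexMap X Y} (h : IsHom (dualMap f)) : IsHom f :=
  isHom_iff.mpr fun a v =>
    Module.eval_apply_injective k <| LinearMap.ext fun φ =>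
      (LinearMap.congr_fun (isHom_iff.mp h a φ) v).symm

lemma Indecomposable.dual (h : Indecomposable X) : Indecomposable (dual X) := by
  refine ⟨fun h0 => h.1 (dualMap_injective (h0.trans dualMap_zero.symm)), fun e he hee => ?_⟩
  obtain ⟨f, rfl⟩ := dualMap_surjective e
  rcases h.2 f he.of_dualMap (dualMap_injective hee) with rfl | rfl
  · exact .inl dualMap_zero
  · exact .inr dualMap_idMap

lemma Isomorphic.of_dual (h : Isomorphic (dual X) (dual Y)) : Isomorphic X Y := by
  obtain ⟨f, g, hf, hg, hgf, hfg⟩ := h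
  obtain ⟨f, rfl⟩ := dualMap_surjective f
  obtain ⟨g, rfl⟩ := dualMap_surjective g
  exact ⟨g, f, hg.of_dualMap, hf.of_dualMap, dualMap_injective hgf, dualMap_injective hfg⟩

variable [IsAlgClosed k] {δ α : Q.V → ℤ}

lemma Indecomposable.isomorphic_of_defect_pos (H : Q.IsAffine δ) (hα : Q.eulerForm α α = 1)
    (hd : 0 < Q.eulerForm δ α) (hX : dimVec X = α) (hY : dimVec Y = α)
    (iX : Indecomposable X) (iY : Indecomposable Y) : Isomorphic X Y := by
  have hd' : Q.op.eulerForm δ α < 0 := by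
    rw [eulerForm_op, H.eulerForm_delta_right]
    exact neg_lt_zero.mpr hd
  exact .of_dual (isomorphic_of_defect_neg H.op ((eulerForm_op α α).trans hα) hd'
    ((dimVec_dual X).trans hX) ((dimVec_dual Y).trans hY) iX.dual iY.dual)

theorem Indecomposable.isomorphic_of_eulerForm_self_eq_one (H : Q.IsAffine δ)
    (hα : Q.eulerForm α α = 1) (hX : dimVec X = α) (hY : dimVec Y = α) (iX : Indecomposable X)
    (iY : Indecomposable Y) : Isomorphic X Y := by
  rcases lt_trichotomy (Q.eulerForm δ α) 0 with hd | hd | hd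
  · exact isomorphic_of_defect_neg H hα hd hX hY iX iY
  · exact isomorphic_of_defect_eq_zero H hα hd hX hY iX iY
  · exact isomorphic_of_defect_pos H hα hd hX hY iX iY

theorem exists_indecomposable_of_eulerForm_self_eq_one (H : Q.IsAffine δ) (k : Type) [Field k]
    [IsAlgClosed k] (hα : ∀ i, 0 ≤ α i) (hq : Q.eulerForm α α = 1) :
    ∃ X : QuiverRep Q k, dimVec X = α ∧ Indecomposable X := by
  by_cases hd : Q.eulerForm δ α = 0
  · exact exists_indecomposable_of_defect_eq_zero H k hα hq hd
  · exact exists_indecomposable_of_isRigidRoot H k hα ⟨hq, .inl hd⟩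

end QuiverRep

/-! ### Acyclic quivers -/

namespace FinQuiver

variable {Q : FinQuiver}

/-- There is an arrow from `i` to `j`. -/
def HasArrow (Q : FinQuiver) (i j : Q.V) : Prop := ∃ a, Q.src a = i ∧ Q.tgt a = j

lemma exists_path_of_transGen {i j : Q.V} (h : Relation.TransGen Q.HasArrow i j) :
    ∃ (n : ℕ) (g : Fin (n + 1) → Q.A), Q.src (g 0) = i ∧ Q.tgt (g (Fin.last n)) = j ∧
      ∀ l : Fin n, Q.tgt (g l.castSucc) = Q.src (g l.succ) := by
  induction h using Relation.TransGen.head_induction_on with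
  | single h =>
    obtain ⟨a, hi, hj⟩ := h
    exact ⟨0, fun _ => a, hi, hj, fun l => l.elim0⟩
  | head h _ ih =>
    obtain ⟨a, hi, hc⟩ := h
    obtain ⟨n, g, hg, hj, hstep⟩ := ih
    refine ⟨n + 1, Fin.cons a g, hi, by rwa [← Fin.succ_last, Fin.cons_succ], Fin.cases ?_ hstep⟩
    rw [Fin.castSucc_zero, Fin.cons_zero, Fin.cons_succ, hc, hg]

lemma Acyclic.wellFounded_hasArrow (h : Q.Acyclic) : WellFounded Q.HasArrow := by
  have : Std.Irrefl (Relation.TransGen Q.HasArrow) := by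
    refine ⟨fun i hi => ?_⟩
    obtain ⟨n, g, hsrc, htgt, hstep⟩ := exists_path_of_transGen hi
    refine h ⟨n, g, Fin.lastCases ?_ fun l => ?_⟩
    · rw [Fin.last_add_one, hsrc, htgt]
    · rw [Fin.coeSucc_eq_succ, hstep]
  exact Subrelation.wf Relation.TransGen.single
    (Finite.wellFounded_of_trans_of_irrefl (Relation.TransGen Q.HasArrow))

lemma Acyclic.op (h : Q.Acyclic) : Q.op.Acyclic := by
  rintro ⟨n, g, hg⟩
  refine h ⟨n, fun l => g (-l), fun l => ?_⟩
  have hl : Q.src (g (-(l + 1))) = Q.tgt (g (-(l + 1) + 1)) := hg (-(l + 1))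
  rw [hl, neg_add', sub_add_cancel]

/-- `p i` is the number of paths from `j` to `i`. -/
lemma exists_pathCount (hwf : WellFounded Q.HasArrow) (j : Q.V) :
    ∃ p : Q.V → ℕ, ∀ i,
      p i = (if i = j then 1 else 0) + ∑ a, if Q.tgt a = i then p (Q.src a) else 0 := by
  let step (i : Q.V) (rec : ∀ i', Q.HasArrow i' i → ℕ) : ℕ :=
    (if i = j then 1 else 0) + ∑ a, if h : Q.tgt a = i then rec (Q.src a) ⟨a, rfl, h⟩ else 0
  refine ⟨hwf.fix step, fun i => (hwf.fix_eq step i).trans ?_⟩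
  simp only [step, dite_eq_ite]

lemma Acyclic.exists_projective (h : Q.Acyclic) (j : Q.V) :
    ∃ p : Q.V → ℤ, (∀ i, 0 ≤ p i) ∧ ∀ y, Q.eulerForm p y = y j := by
  obtain ⟨p, hp⟩ := exists_pathCount h.wellFounded_hasArrow j
  refine ⟨fun i => p i, fun i => Int.natCast_nonneg _, fun y => ?_⟩
  have hpZ (i) : (p i : ℤ) * y i = (if i = j then y i else 0) +
      ∑ a, if Q.tgt a = i then (p (Q.src a) : ℤ) * y i else 0 := by
    conv_lhs => rw [hp]
    push_cast
    simp only [add_mul, Finset.sum_mul, ite_mul, one_mul, zero_mul]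
  simp only [eulerForm, hpZ, Finset.sum_add_distrib, Finset.sum_ite_eq', Finset.mem_univ, if_true]
  rw [Finset.sum_comm]
  simp

end FinQuiver

lemma AffineQuiver.isAffine (Q : AffineQuiver) : Q.toFinQuiver.IsAffine Q.δ where
  nonempty := Q.connected.nonempty
  delta_pos := Q.delta_pos
  semidefinite := Q.posSemidef
  radical_iff := Q.radical_iff
  exists_projective := Q.acyclic.exists_projective
  exists_injective := by
    simpa only [FinQuiver.eulerForm_op] using Q.acyclic.op.exists_projective

/-! ### Representations by matrices -/

namespace QuiverRep

variable {Q : FinQuiver} {k : Type} [Field k] {d : Q.V → ℕ}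

/-- The representation on coordinate spaces given by a family of matrices. -/
def ofMatrices (x : MRep Q k d) : QuiverRep Q k where
  space i := Fin (d i) → k
  map a := (x a).mulVecLin

lemma dimVec_ofMatrices (x : MRep Q k d) : dimVec (ofMatrices x) = fun i => (d i : ℤ) :=
  funext fun i => congrArg Nat.cast (Module.finrank_fin_fun (n := d i) k)

lemma idMap_ofMatrices_ne_zero_iff (x : MRep Q k d) : idMap (ofMatrices x) ≠ 0 ↔ ∃ i, 0 < d i := by
  rw [ne_eq, ← dimVec_eq_zero_iff, dimVec_ofMatrices, funext_iff, not_forall]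
  exact exists_congr fun i => by simp [Nat.pos_iff_ne_zero]

lemma indecomposable_ofMatrices {x : MRep Q k d} (h : MIndec x) :
    Indecomposable (ofMatrices x) := by
  refine ⟨(idMap_ofMatrices_ne_zero_iff x).mpr h.1, fun e he hee => ?_⟩
  have hfix (i) (v : (ofMatrices x).space i) : e i (e i v) = e i v := congr_apply hee i v
  have hrange : MSub x fun i => LinearMap.range (e i) := by
    rintro a _ ⟨v, rfl⟩
    exact ⟨_, (isHom_iff.mp he a v).symm⟩
  have hker : MSub x fun i => LinearMap.ker (e i) := fun a v hv =>
    (isHom_iff.mp he a v).symm.trans ((congrArg ((ofMatrices x).map a) hv).trans (map_zero _))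
  have hcompl (i) : IsCompl (LinearMap.range (e i)) (LinearMap.ker (e i)) :=
    LinearMap.IsIdempotentElem.isCompl (congrFun hee i)
  rcases h.2 _ _ hrange hker hcompl with h0 | h0
  · exact .inl (funext fun i => LinearMap.range_eq_bot.mp (h0 i))
  · exact .inr (funext fun i => LinearMap.ext fun v => LinearMap.ker_eq_bot.mp (h0 i) (hfix i v))

lemma isHom_projection {x : MRep Q k d} {U W : ∀ i, Submodule k (Fin (d i) → k)} (hU : MSub x U)
    (hW : MSub x W) (hc : ∀ i, IsCompl (U i) (W i)) :
    IsHom (X := ofMatrices x) (Y := ofMatrices x) fun i => (U i).projection (W i) (hc i) := by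
  refine isHom_iff.mpr fun a v => ?_
  obtain ⟨u, hu, w, hw, rfl⟩ := Submodule.mem_sup.mp
    ((hc (Q.src a)).sup_eq_top.ge (Submodule.mem_top (x := v)))
  have projection_add {i} {u w : Fin (d i) → k} (hu : u ∈ U i) (hw : w ∈ W i) :
      (U i).projection (W i) (hc i) (u + w) = u := by
    rw [map_add, (Submodule.projection_eq_self_iff (hc i) u).mpr hu,
      (Submodule.projection_apply_eq_zero_iff (hc i)).mpr hw, add_zero]
  change (x a).mulVec (Submodule.projection _ _ _ (u + w)) =
    Submodule.projection _ _ _ ((x a).mulVec (u + w))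
  rw [projection_add hu hw, Matrix.mulVec_add, projection_add (hU a u hu) (hW a w hw)]

lemma mIndec_of_indecomposable {x : MRep Q k d} (h : Indecomposable (ofMatrices x)) :
    MIndec x := by
  refine ⟨(idMap_ofMatrices_ne_zero_iff x).mp h.1, fun U W hU hW hc => ?_⟩
  let e : VertexMap (ofMatrices x) (ofMatrices x) := fun i => (U i).projection (W i) (hc i)
  have hee (i) (v) : e i (e i v) = e i v :=
    (Submodule.projection_eq_self_iff (hc i) _).mpr (Submodule.projection_apply_mem (hc i) v)
  rcases h.2 e (isHom_projection hU hW hc) (funext fun i => LinearMap.ext (hee i)) with h0 | h0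
  · refine .inl fun i => (Submodule.eq_bot_iff _).mpr fun v hv => ?_
    exact ((Submodule.projection_eq_self_iff (hc i) v).mpr hv).symm.trans (congr_apply h0 i v)
  · refine .inr fun i => (Submodule.eq_bot_iff _).mpr fun v hv => ?_
    exact (congr_apply h0 i v).symm.trans ((Submodule.projection_apply_eq_zero_iff (hc i)).mpr hv)

lemma exists_isomorphic_ofMatrices {X : QuiverRep Q k} (h : dimVec X = fun i => (d i : ℤ)) :
    ∃ x : MRep Q k d, Isomorphic X (ofMatrices x) := by
  have hd (i) : Module.finrank k (X.space i) = Module.finrank k (Fin (d i) → k) := by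
    rw [Module.finrank_fin_fun]
    exact Int.natCast_inj.mp (congrFun h i)
  let φ (i) : X.space i ≃ₗ[k] (Fin (d i) → k) := LinearEquiv.ofFinrankEq _ _ (hd i)
  let x : MRep Q k d := fun a => LinearMap.toMatrix' (φ (Q.tgt a) ∘ₗ X.map a ∘ₗ (φ (Q.src a)).symm)
  refine ⟨x, .of_bijective (f := fun i => (φ i).toLinearMap) (isHom_iff.mpr fun a v => ?_)
    (fun i => (φ i).injective) (fun i => (φ i).surjective)⟩
  calc (x a).mulVecLin (φ _ v) = φ _ (X.map a ((φ _).symm (φ _ v))) := by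
        rw [← Matrix.toLin'_apply', Matrix.toLin'_toMatrix']
        rfl
    _ = φ _ (X.map a v) := by rw [LinearEquiv.symm_apply_apply]

lemma mIso_of_isomorphic {x y : MRep Q k d} (h : Isomorphic (ofMatrices x) (ofMatrices y)) :
    MIso x y := by
  obtain ⟨f, g, hf, -, hgf, -⟩ := h
  let F (i) : Matrix (Fin (d i)) (Fin (d i)) k := LinearMap.toMatrix' (f i)
  let G (i) : Matrix (Fin (d i)) (Fin (d i)) k := LinearMap.toMatrix' (g i)
  have hGF (i) : G i * F i = 1 := calc
    G i * F i = LinearMap.toMatrix' ((g ⊚ f) i) := (LinearMap.toMatrix'_comp _ _).symm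
    _ = 1 := by rw [hgf]; exact LinearMap.toMatrix'_id
  have hFG (i) : F i * G i = 1 := mul_eq_one_comm.mp (hGF i)
  have hF (a) : y a * F (Q.src a) = F (Q.tgt a) * x a := by
    have hFlin (i) : Matrix.toLin' (F i) = f i := Matrix.toLin'_toMatrix' _
    apply Matrix.toLin'.injective
    rw [Matrix.toLin'_mul, Matrix.toLin'_mul, hFlin, hFlin]
    exact LinearMap.ext (isHom_iff.mp hf a)
  refine ⟨fun i => ⟨F i, G i, hFG i, hGF i⟩, fun a => ?_⟩
  calc y a = y a * F (Q.src a) * G (Q.src a) := by rw [Matrix.mul_assoc, hFG, Matrix.mul_one]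
    _ = F (Q.tgt a) * x a * G (Q.src a) := by rw [hF]

end QuiverRep

/-- For an affine quiver over an algebraically closed field and a positive real root
`α`, there is exactly one isomorphism class of indecomposable representations with
dimension vector `α`. -/
theorem unique_indecomposable_of_real_root
    (Q : AffineQuiver) (k : Type) [Field k] [IsAlgClosed k]
    (α : Q.V → ℤ) (hpos : ∀ i, 0 ≤ α i) (hreal : Q.titsForm α = 1) :
    Nat.card (Quot (fun x y : {x : MRep Q.toFinQuiver k (fun i => (α i).toNat) // MIndec x} =>
        MIso x.1 y.1)) = 1 := by
  have H := Q.isAffine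
  have hα : α = fun i => ((α i).toNat : ℤ) := funext fun i => (Int.toNat_of_nonneg (hpos i)).symm
  have hdim (x : MRep Q.toFinQuiver k fun i => (α i).toNat) :
      QuiverRep.dimVec (QuiverRep.ofMatrices x) = α :=
    (QuiverRep.dimVec_ofMatrices x).trans hα.symm
  refine Nat.card_eq_one_iff_unique.mpr ⟨⟨fun x y => ?_⟩, ?_⟩
  · induction x using Quot.ind with | _ x =>
    induction y using Quot.ind with | _ y =>
    exact Quot.sound <| QuiverRep.mIso_of_isomorphic <|
      (QuiverRep.indecomposable_ofMatrices x.2).isomorphic_of_eulerForm_self_eq_one H hreal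
        (hdim x.1) (hdim y.1) (QuiverRep.indecomposable_ofMatrices y.2)
  · obtain ⟨X, hX, hXind⟩ :=
      QuiverRep.exists_indecomposable_of_eulerForm_self_eq_one H k hpos hreal
    obtain ⟨x, hx⟩ := QuiverRep.exists_isomorphic_ofMatrices (hX.trans hα)
    exact ⟨Quot.mk _ ⟨x, QuiverRep.mIndec_of_indecomposable (hXind.of_isomorphic hx)⟩⟩
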